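/- arXiv:2405.00324 — 3 statements merged into one kernel-verified Lean document; each statement's English description precedes it below -/
import Mathlib

section
/- Let B : ℝ³ × I → ℝ³ (I an open time interval) be C¹ in time and C² in space, solving the resistivity-free electron MHD system ∂ₜB + ∇×((∇×B)×B) = 0, ∇·B(·,t) = 0, and let J = ∇×B. Suppose B(x₀,t₀) ≠ 0 at a point (x₀,t₀). Then at (x₀,t₀) the function |B| satisfies ∂ₜ|B| − (J·∇)|B| = S |B|, where S(x,t) = −((B/|B|)·∇)J · (B/|B|) = −((B·∇)J)·B / |B|². -/
noncomputable section

open MeasureTheory Real Set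
open scoped RealInnerProductSpace

abbrev R3 := EuclideanSpace ℝ (Fin 3)

def toR3 (v : Fin 3 → ℝ) : R3 := (WithLp.equiv 2 (Fin 3 → ℝ)).symm v

/-- j-th partial derivative of a scalar function. -/
def pd (j : Fin 3) (f : R3 → ℝ) (x : R3) : ℝ :=
  fderiv ℝ f x (EuclideanSpace.single j 1)

/-- curl of a vector field on ℝ³. -/
def curl (F : R3 → R3) (x : R3) : R3 :=
  toR3 ![pd 1 (fun y => F y 2) x - pd 2 (fun y => F y 1) x,
         pd 2 (fun y => F y 0) x - pd 0 (fun y => F y 2) x,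
         pd 0 (fun y => F y 1) x - pd 1 (fun y => F y 0) x]

/-- divergence of a vector field on ℝ³. -/
def divg (F : R3 → R3) (x : R3) : ℝ :=
  pd 0 (fun y => F y 0) x + pd 1 (fun y => F y 1) x + pd 2 (fun y => F y 2) x

/-- cross product on ℝ³. -/
def cross (u v : R3) : R3 :=
  toR3 ![u 1 * v 2 - u 2 * v 1, u 2 * v 0 - u 0 * v 2, u 0 * v 1 - u 1 * v 0]

/-- the advective derivative (u·∇)v. -/
def adv (u v : R3 → R3) (x : R3) : R3 :=
  toR3 (fun i => ∑ j, u x j * pd j (fun y => v y i) x)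

/-- B is a pointwise solution of resistivity-free electron MHD at time t. -/
def IsEMHDAt (B : ℝ → R3 → R3) (t : ℝ) (x : R3) : Prop :=
  deriv (fun τ => B τ x) t + curl (fun y => cross (curl (B t) y) (B t y)) x = 0
    ∧ divg (B t) x = 0

theorem norm_fderiv_aux {E : Type*} [NormedAddCommGroup E] [NormedSpace ℝ E] (F : E → R3) (x v : E)
    (hF : DifferentiableAt ℝ F x) (hne : F x ≠ 0) :
    ‖F x‖ * fderiv ℝ (fun y => ‖F y‖) x v
      = ∑ i, F x i * fderiv ℝ (fun y => F y i) x v := by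
  have hn : DifferentiableAt ℝ (fun y => ‖F y‖) x := hF.norm ℝ hne
  have hc : ∀ i, DifferentiableAt ℝ (fun y => F y i) x := fun i => by fun_prop
  have h1 := (hn.hasFDerivAt.mul hn.hasFDerivAt)
  have h2 : HasFDerivAt (fun y => ∑ i, F y i * F y i) _ x :=
    HasFDerivAt.fun_sum (u := Finset.univ) fun i _ => (hc i).hasFDerivAt.mul (hc i).hasFDerivAt
  have he : (fun y => ‖F y‖ * ‖F y‖) = (fun y => ∑ i, F y i * F y i) := by
    funext y
    rw [← pow_two, EuclideanSpace.real_norm_sq_eq]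
    simp [pow_two]
  have h3 : HasFDerivAt (fun y => ‖F y‖ * ‖F y‖) _ x := h1
  rw [he] at h3
  have h4 := congrArg (fun L => L v) (h3.unique h2)
  simp [Fin.sum_univ_three] at h4 ⊢
  linarith

theorem pd_mul_aux (j : Fin 3) (f g : R3 → ℝ) (x : R3) (hf : DifferentiableAt ℝ f x)
    (hg : DifferentiableAt ℝ g x) :
    pd j (fun y => f y * g y) x = pd j f x * g x + f x * pd j g x := by
  unfold pd
  rw [fderiv_fun_mul hf hg]
  simp
  ring

theorem pd_sub_aux (j : Fin 3) (f g : R3 → ℝ) (x : R3) (hf : DifferentiableAt ℝ f x)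
    (hg : DifferentiableAt ℝ g x) :
    pd j (fun y => f y - g y) x = pd j f x - pd j g x := by
  unfold pd
  rw [fderiv_fun_sub hf hg]
  simp

theorem pd_diff_aux (j : Fin 3) (f : R3 → ℝ) (hf : ContDiff ℝ 2 f) :
    Differentiable ℝ (pd j f) := by
  have : ContDiff ℝ 1 (fderiv ℝ f) := hf.fderiv_right (by norm_num)
  have := this.differentiable (by norm_num)
  unfold pd
  fun_prop

theorem pd_comm_aux (i j : Fin 3) (f : R3 → ℝ) (hf : ContDiff ℝ 2 f) (x : R3) :
    pd i (pd j f) x = pd j (pd i f) x := by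
  have h1 : ContDiff ℝ 1 (fderiv ℝ f) := hf.fderiv_right (by norm_num)
  have h2 : DifferentiableAt ℝ (fderiv ℝ f) x := h1.differentiable (by norm_num) x
  have hs : IsSymmSndFDerivAt ℝ f x := hf.contDiffAt.isSymmSndFDerivAt (by simp)
  have key : ∀ i j, pd i (pd j f) x =
      fderiv ℝ (fderiv ℝ f) x (EuclideanSpace.single i 1) (EuclideanSpace.single j 1) := by
    intro i j
    change fderiv ℝ (fun y => fderiv ℝ f y (EuclideanSpace.single j 1)) x _ = _
    rw [fderiv_clm_apply h2 (by fun_prop)]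
    simp
  rw [key, key]
  exact hs _ _

theorem pd_cross_aux (j : Fin 3) (a b c d : R3 → ℝ) (x : R3) (ha : DifferentiableAt ℝ a x)
    (hb : DifferentiableAt ℝ b x) (hc : DifferentiableAt ℝ c x) (hd : DifferentiableAt ℝ d x) :
    pd j (fun y => a y * b y - c y * d y) x =
      pd j a x * b x + a x * pd j b x - (pd j c x * d x + c x * pd j d x) := by
  rw [pd_sub_aux j _ _ x (ha.fun_mul hb) (hc.fun_mul hd), pd_mul_aux j _ _ x ha hb,
    pd_mul_aux j _ _ x hc hd]

/-- equation for |B| along the flow, at a point where B ≠ 0. -/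
theorem norm_B_equation (I : Set ℝ) (hI : IsOpen I) (B : ℝ → R3 → R3)
    (hBt : ∀ x, ContDiffOn ℝ 1 (fun t => B t x) I)
    (hBx : ∀ t ∈ I, ContDiff ℝ 2 (B t))
    (hB : ∀ t ∈ I, ∀ x, IsEMHDAt B t x)
    (t₀ : ℝ) (ht₀ : t₀ ∈ I) (x₀ : R3) (hne : B t₀ x₀ ≠ 0) :
    deriv (fun τ => ‖B τ x₀‖) t₀
        - ∑ j, curl (B t₀) x₀ j * pd j (fun x => ‖B t₀ x‖) x₀
      = (-(⟪adv (B t₀) (fun y => curl (B t₀) y) x₀, B t₀ x₀⟫) / ‖B t₀ x₀‖ ^ 2)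
          * ‖B t₀ x₀‖ := by
  have hopen : I ∈ nhds t₀ := hI.mem_nhds ht₀
  have hdt : DifferentiableAt ℝ (fun t => B t x₀) t₀ :=
    ((hBt x₀).differentiableOn (by norm_num)).differentiableAt hopen
  have hC := hBx t₀ ht₀
  have hdx : DifferentiableAt ℝ (B t₀) x₀ := hC.differentiable (by norm_num) x₀
  have hb2 : ∀ i, ContDiff ℝ 2 (fun y => B t₀ y i) := fun i => by fun_prop
  have hb1 : ∀ i, DifferentiableAt ℝ (fun y => B t₀ y i) x₀ := fun i => by fun_prop
  have hpd : ∀ i j, DifferentiableAt ℝ (pd j (fun y => B t₀ y i)) x₀ :=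
    fun i j => pd_diff_aux j _ (hb2 i) x₀
  obtain ⟨hE, hdiv⟩ := hB t₀ ht₀ x₀
  have hN : ‖B t₀ x₀‖ ≠ 0 := norm_ne_zero_iff.mpr hne
  have ht := norm_fderiv_aux (fun τ => B τ x₀) t₀ 1 hdt hne
  have hx := fun j => norm_fderiv_aux (B t₀) x₀ (EuclideanSpace.single j (1:ℝ)) hdx hne
  have hti : ∀ i, fderiv ℝ (fun τ => B τ x₀ i) t₀ 1 = deriv (fun τ => B τ x₀) t₀ i := by
    intro i
    rw [fderiv_apply_one_eq_deriv]
    have h := (EuclideanSpace.proj i : R3 →L[ℝ] ℝ).hasFDerivAt.comp_hasDerivAt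
      t₀ hdt.hasDerivAt
    exact h.deriv
  -- components of the current
  set J : R3 → R3 := fun y => curl (B t₀) y with hJ
  have hJd : ∀ i, DifferentiableAt ℝ (fun y => J y i) x₀ := by
    intro i
    fin_cases i
    · exact (hpd 2 1).fun_sub (hpd 1 2)
    · exact (hpd 0 2).fun_sub (hpd 2 0)
    · exact (hpd 1 0).fun_sub (hpd 0 1)
  have hdJ : pd 0 (fun y => J y 0) x₀ + pd 1 (fun y => J y 1) x₀ + pd 2 (fun y => J y 2) x₀ = 0 := by
    have e0 : pd 0 (fun y => J y 0) x₀ = _ := pd_sub_aux 0 _ _ x₀ (hpd 2 1) (hpd 1 2)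
    have e1 : pd 1 (fun y => J y 1) x₀ = _ := pd_sub_aux 1 _ _ x₀ (hpd 0 2) (hpd 2 0)
    have e2 : pd 2 (fun y => J y 2) x₀ = _ := pd_sub_aux 2 _ _ x₀ (hpd 1 0) (hpd 0 1)
    rw [e0, e1, e2, pd_comm_aux 0 1 _ (hb2 2), pd_comm_aux 0 2 _ (hb2 1),
      pd_comm_aux 1 2 _ (hb2 0)]
    ring
  have hX : ∀ (j a b c d : Fin 3), pd j (fun y => J y a * B t₀ y b - J y c * B t₀ y d) x₀ = _ :=
    fun j a b c d => pd_cross_aux j _ _ _ _ x₀ (hJd a) (hb1 b) (hJd c) (hb1 d)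
  have E0 : deriv (fun τ => B τ x₀) t₀ 0 +
      (pd 1 (fun y => J y 0 * B t₀ y 1 - J y 1 * B t₀ y 0) x₀
        - pd 2 (fun y => J y 2 * B t₀ y 0 - J y 0 * B t₀ y 2) x₀) = 0 :=
    congrArg (fun v : R3 => v 0) hE
  have E1 : deriv (fun τ => B τ x₀) t₀ 1 +
      (pd 2 (fun y => J y 1 * B t₀ y 2 - J y 2 * B t₀ y 1) x₀
        - pd 0 (fun y => J y 0 * B t₀ y 1 - J y 1 * B t₀ y 0) x₀) = 0 :=
    congrArg (fun v : R3 => v 1) hE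
  have E2 : deriv (fun τ => B τ x₀) t₀ 2 +
      (pd 0 (fun y => J y 2 * B t₀ y 0 - J y 0 * B t₀ y 2) x₀
        - pd 1 (fun y => J y 1 * B t₀ y 2 - J y 2 * B t₀ y 1) x₀) = 0 :=
    congrArg (fun v : R3 => v 2) hE
  rw [hX, hX] at E0 E1 E2
  have hin : ⟪adv (B t₀) J x₀, B t₀ x₀⟫ =
      ∑ i, (∑ j, B t₀ x₀ j * pd j (fun y => J y i) x₀) * B t₀ x₀ i := by
    rw [PiLp.inner_apply]
    refine Finset.sum_congr rfl fun i _ => ?_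
    simp [adv, toR3, mul_comm]
  have hJx : curl (B t₀) x₀ = J x₀ := rfl
  rw [hin, hJx]
  change fderiv ℝ (fun τ => ‖B τ x₀‖) t₀ 1 - _ = _
  rw [neg_div, neg_mul, eq_neg_iff_add_eq_zero]
  apply mul_left_cancel₀ hN
  simp only [hti] at ht
  have hx0 := hx 0
  have hx1 := hx 1
  have hx2 := hx 2
  clear_value J
  unfold divg at hdiv
  change ‖B t₀ x₀‖ * pd 0 (fun x => ‖B t₀ x‖) x₀ = ∑ i, B t₀ x₀ i * pd 0 (fun y => B t₀ y i) x₀ at hx0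
  change ‖B t₀ x₀‖ * pd 1 (fun x => ‖B t₀ x‖) x₀ = ∑ i, B t₀ x₀ i * pd 1 (fun y => B t₀ y i) x₀ at hx1
  change ‖B t₀ x₀‖ * pd 2 (fun x => ‖B t₀ x‖) x₀ = ∑ i, B t₀ x₀ i * pd 2 (fun y => B t₀ y i) x₀ at hx2
  have hcancel : ∀ A N : ℝ, N ≠ 0 → N * (A / N ^ 2 * N) = A := by
    intro A N h
    field_simp
  rw [mul_add, hcancel _ _ hN]
  simp only [Fin.sum_univ_three] at *
  linear_combination ht - J x₀ 0 * hx0 - J x₀ 1 * hx1 - J x₀ 2 * hx2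
    + B t₀ x₀ 0 * E0 + B t₀ x₀ 1 * E1 + B t₀ x₀ 2 * E2
    - (B t₀ x₀ 0 * J x₀ 0 + B t₀ x₀ 1 * J x₀ 1 + B t₀ x₀ 2 * J x₀ 2) * hdiv
    + (B t₀ x₀ 0 ^ 2 + B t₀ x₀ 1 ^ 2 + B t₀ x₀ 2 ^ 2) * hdJ
end
end

section
/- Let B : ℝ³ × [0,T) → ℝ³ be C¹ in time and C² in space, solving the resistivity-free electron MHD system ∂ₜB + ∇×((∇×B)×B) = 0, ∇·B(·,t) = 0, with J = ∇×B, and assume M(τ) := sup_{x∈ℝ³} ‖∇J(x,τ)‖ (operator norm of the spatial Jacobian of J) is finite for each τ and locally integrable in τ. Fix a ∈ ℝ³ and let X(a,·) : [0,T) → ℝ³ be C¹ with X(a,0) = a and ∂ₜX(a,t) = −J(X(a,t),t). If t ∈ (0,T) and B(X(a,τ),τ) ≠ 0 for all τ ∈ [0,t], then |B(a,0)| · exp(−∫₀ᵗ M(τ)dτ) ≤ |B(X(a,t),t)| ≤ |B(a,0)| · exp(∫₀ᵗ M(τ)dτ). -/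
noncomputable section

open MeasureTheory Real Set
open scoped RealInnerProductSpace

namespace EMHDAux

open Filter Topology

/-- Abstract hypotheses: `V` is the (Lipschitz in space) velocity, `Bt` the time derivative. -/
structure Flow (T : ℝ) (B V Bt : ℝ → R3 → R3) (M : ℝ → ℝ) : Prop where
  hBc : ∀ x, ContinuousOn (fun t => B t x) (Ico 0 T)
  hBd : ∀ t ∈ Ioo 0 T, ∀ x, HasDerivAt (fun τ => B τ x) (Bt t x) t
  hBtc : ∀ x, ContinuousOn (fun t => Bt t x) (Ioo 0 T)
  hBts : ∀ t ∈ Ioo 0 T, Continuous (Bt t)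
  hB2 : ∀ t ∈ Ico 0 T, ContDiff ℝ 2 (B t)
  hpde : ∀ t ∈ Ioo 0 T, ∀ x, ‖Bt t x + fderiv ℝ (B t) x (V t x)‖ ≤ M t * ‖B t x‖
  hVlip : ∀ t ∈ Ico 0 T, ∀ x y, ‖V t x - V t y‖ ≤ M t * ‖x - y‖
  hM0 : ∀ t, 0 ≤ M t
  hMint : ∀ b ∈ Ioo 0 T, IntervalIntegrable M volume 0 b
  hVint : ∀ x, ∀ b ∈ Ioo 0 T, IntervalIntegrable (fun t => V t x) volume 0 b
  hVmeas : ∀ x, Measurable (fun t => (Ico 0 T).indicator (fun t => V t x) t)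

/-- integral curves of `V` on `[p,q]`. -/
def Traj (V : ℝ → R3 → R3) (Z : ℝ → R3) (p q : ℝ) : Prop :=
  ContinuousOn Z (Icc p q) ∧
    ∀ s ∈ Icc p q, ∀ τ ∈ Icc p q, Z τ - Z s = ∫ σ in s..τ, V σ (Z σ)

/-- the basic estimate. -/
def Est (M : ℝ → ℝ) (φ : ℝ → R3) (p q : ℝ) : Prop :=
  ‖φ q - φ p‖ ≤ ‖φ p‖ * (Real.exp |∫ σ in p..q, M σ| - 1)

lemma Traj.mono {V : ℝ → R3 → R3} {Z : ℝ → R3} {p q p' q' : ℝ} (h : Traj V Z p q)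
    (hp : p ≤ p') (hq : q' ≤ q) : Traj V Z p' q' :=
  ⟨h.1.mono (Icc_subset_Icc hp hq), fun s hs τ hτ =>
    h.2 s (Icc_subset_Icc hp hq hs) τ (Icc_subset_Icc hp hq hτ)⟩

variable {T : ℝ} {B V Bt : ℝ → R3 → R3} {M : ℝ → ℝ}

lemma ii_of_ii0 {E : Type*} [NormedAddCommGroup E] {f : ℝ → E} {T p q : ℝ}
    (h : ∀ b ∈ Ioo 0 T, IntervalIntegrable f volume 0 b)
    (hp : p ∈ Ico 0 T) (hq : q ∈ Ico 0 T) : IntervalIntegrable f volume p q := by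
  have key : ∀ b ∈ Ico 0 T, IntervalIntegrable f volume 0 b := by
    intro b hb
    rcases eq_or_lt_of_le hb.1 with h0 | h0
    · rw [← h0]
    · exact h b ⟨h0, hb.2⟩
  exact (key p hp).symm.trans (key q hq)

lemma Flow.Mii (F : Flow T B V Bt M) {p q : ℝ} (hp : p ∈ Ico 0 T) (hq : q ∈ Ico 0 T) :
    IntervalIntegrable M volume p q := ii_of_ii0 F.hMint hp hq

lemma Flow.Vii (F : Flow T B V Bt M) (x : R3) {p q : ℝ} (hp : p ∈ Ico 0 T) (hq : q ∈ Ico 0 T) :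
    IntervalIntegrable (fun t => V t x) volume p q := ii_of_ii0 (F.hVint x) hp hq

lemma uIcc_sub {T p q : ℝ} (hp : p ∈ Ico 0 T) (hq : q ∈ Ico 0 T) : uIcc p q ⊆ Ico 0 T := by
  intro x hx
  rcases mem_uIcc.1 hx with h | h
  · exact ⟨hp.1.trans h.1, h.2.trans_lt hq.2⟩
  · exact ⟨hq.1.trans h.1, h.2.trans_lt hp.2⟩

lemma abs_int_le {g : ℝ → ℝ} (g0 : ∀ t, 0 ≤ g t) {α β s τ : ℝ}
    (hg : IntervalIntegrable g volume α β) (hs : s ∈ Icc α β) (hτ : τ ∈ Icc α β) :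
    |∫ σ in s..τ, g σ| ≤ ∫ σ in α..β, g σ := by
  have hab : α ≤ β := hs.1.trans hs.2
  have h := intervalIntegral.abs_integral_mono_interval (f := g) (a := s) (b := τ) (c := α) (d := β)
    (μ := volume) (by
      rw [uIoc_of_le hab]
      intro x hx
      rcases mem_uIoc.1 hx with h | h
      · exact ⟨hs.1.trans_lt h.1, h.2.trans hτ.2⟩
      · exact ⟨hτ.1.trans_lt h.1, h.2.trans hs.2⟩) (Eventually.of_forall g0) hg
  rwa [abs_of_nonneg (intervalIntegral.integral_nonneg hab (fun u _ => g0 u))] at h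

lemma norm_int_le {f : ℝ → R3} {g : ℝ → ℝ} {s τ : ℝ}
    (hg : IntervalIntegrable g volume s τ) (h : ∀ σ ∈ uIoc s τ, ‖f σ‖ ≤ g σ) :
    ‖∫ σ in s..τ, f σ‖ ≤ |∫ σ in s..τ, g σ| :=
  intervalIntegral.norm_integral_le_abs_of_norm_le
    ((ae_restrict_iff' measurableSet_uIoc).2 (Eventually.of_forall h)) hg

/-- integrability along continuous curves -/
lemma Flow.comp_ii (F : Flow T B V Bt M) {Z : ℝ → R3} {p q : ℝ} (hp : p ∈ Ico 0 T)
    (hq : q ∈ Ico 0 T) (hpq : p ≤ q) (hZ : ContinuousOn Z (Icc p q)) :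
    IntervalIntegrable (fun σ => V σ (Z σ)) volume p q := by
  have hsub : Icc p q ⊆ Ico 0 T := fun x hx => ⟨hp.1.trans hx.1, hx.2.trans_lt hq.2⟩
  obtain ⟨C, hC⟩ := isCompact_Icc.exists_bound_of_continuousOn hZ
  have hg : IntervalIntegrable (fun σ => ‖V σ 0‖ + M σ * C) volume p q :=
    (F.Vii 0 hp hq).norm.add ((F.Mii hp hq).mul_const C)
  refine hg.mono_fun' ?_ ?_
  · rw [uIoc_of_le hpq]
    set Z' : ℝ → R3 := IccExtend hpq ((Icc p q).domRestrict Z) with hZ'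
    have hZc : Continuous Z' := (continuousOn_iff_continuous_domRestrict.1 hZ).Icc_extend'
    have hm : Measurable (Function.uncurry
        (fun (x : R3) (t : ℝ) => (Ico 0 T).indicator (fun t => V t x) t)) := by
      refine measurable_uncurry_of_continuous_of_measurable ?_ F.hVmeas
      intro t
      by_cases ht : t ∈ Ico 0 T
      · simp only [indicator_of_mem ht]
        have : LipschitzWith (M t).toNNReal (V t) := LipschitzWith.of_dist_le_mul (fun x y => by
          rw [dist_eq_norm, dist_eq_norm, Real.coe_toNNReal _ (F.hM0 t)]
          exact F.hVlip t ht x y)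
        exact this.continuous
      · simp only [indicator_of_notMem ht]
        exact continuous_const
    have hm2 : Measurable (fun t : ℝ => (Ico 0 T).indicator (fun s => V s (Z' t)) t) :=
      hm.comp (hZc.measurable.prodMk measurable_id)
    refine (hm2.aestronglyMeasurable (μ := volume.restrict (Ioc p q))).congr ?_
    refine (ae_restrict_iff' measurableSet_Ioc).2 (Eventually.of_forall fun t ht => ?_)
    have ht' : t ∈ Icc p q := Ioc_subset_Icc_self ht
    simp only [indicator_of_mem (hsub ht')]
    rw [hZ', IccExtend_of_mem _ _ ht']
    rfl
  · rw [uIoc_of_le hpq]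
    refine (ae_restrict_iff' measurableSet_Ioc).2 (Eventually.of_forall fun t ht => ?_)
    have ht' : t ∈ Icc p q := Ioc_subset_Icc_self ht
    have h1 := F.hVlip t (hsub ht') (Z t) 0
    have h2 : ‖V t (Z t)‖ ≤ ‖V t 0‖ + ‖V t (Z t) - V t 0‖ := by
      have := norm_add_le (V t 0) (V t (Z t) - V t 0)
      simpa using this
    have h3 : M t * ‖Z t - 0‖ ≤ M t * C := by
      rw [sub_zero]; exact mul_le_mul_of_nonneg_left (hC t ht') (F.hM0 t)
    linarith

lemma Flow.comp_ii' (F : Flow T B V Bt M) {Z : ℝ → R3} {p q s τ : ℝ} (hp : p ∈ Ico 0 T)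
    (hq : q ∈ Ico 0 T) (hZ : ContinuousOn Z (Icc p q))
    (hs : s ∈ Icc p q) (hτ : τ ∈ Icc p q) :
    IntervalIntegrable (fun σ => V σ (Z σ)) volume s τ := by
  have hpq := hs.1.trans hs.2
  refine (F.comp_ii hp hq hpq hZ).mono_set ?_
  rw [uIcc_of_le hpq]
  exact uIcc_subset_Icc hs hτ

lemma Flow.diff_le (F : Flow T B V Bt M) {Z Z' : ℝ → R3} {p q s τ D : ℝ} (hp : p ∈ Ico 0 T)
    (hq : q ∈ Ico 0 T) (hZ : ContinuousOn Z (Icc p q)) (hZ' : ContinuousOn Z' (Icc p q))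
    (hs : s ∈ Icc p q) (hτ : τ ∈ Icc p q) (hD : ∀ σ ∈ Icc p q, ‖Z σ - Z' σ‖ ≤ D) :
    ‖(∫ σ in s..τ, V σ (Z σ)) - ∫ σ in s..τ, V σ (Z' σ)‖ ≤ D * ∫ σ in p..q, M σ := by
  have hpq := hs.1.trans hs.2
  have hsub : Icc p q ⊆ Ico 0 T := fun x hx => ⟨hp.1.trans hx.1, hx.2.trans_lt hq.2⟩
  have hD0 : 0 ≤ D := (norm_nonneg _).trans (hD s hs)
  rw [← intervalIntegral.integral_sub (F.comp_ii' hp hq hZ hs hτ) (F.comp_ii' hp hq hZ' hs hτ)]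
  have h1 : ‖∫ σ in s..τ, (V σ (Z σ) - V σ (Z' σ))‖ ≤ |∫ σ in s..τ, D * M σ| := by
    refine norm_int_le ((F.Mii (hsub hs) (hsub hτ)).const_mul D) ?_
    intro σ hσ
    have hσ' : σ ∈ Icc p q := uIcc_subset_Icc hs hτ (uIoc_subset_uIcc hσ)
    refine (F.hVlip σ (hsub hσ') _ _).trans ?_
    rw [mul_comm]
    exact mul_le_mul_of_nonneg_right (hD σ hσ') (F.hM0 σ)
  refine h1.trans ?_
  rw [intervalIntegral.integral_const_mul, abs_mul, abs_of_nonneg hD0]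
  exact mul_le_mul_of_nonneg_left (abs_int_le F.hM0 (F.Mii hp hq) hs hτ) hD0

/-- stability -/
lemma Flow.stab (F : Flow T B V Bt M) {Z Z' : ℝ → R3} {p q s τ : ℝ} (hp : p ∈ Ico 0 T)
    (hq : q ∈ Ico 0 T) (hZ : Traj V Z p q) (hZ' : Traj V Z' p q)
    (hI : ∫ σ in p..q, M σ ≤ 1 / 2)
    (hs : s ∈ Icc p q) (hτ : τ ∈ Icc p q) : ‖Z τ - Z' τ‖ ≤ 2 * ‖Z s - Z' s‖ := by
  obtain ⟨r, hr, hmax⟩ := isCompact_Icc.exists_isMaxOn ⟨s, hs⟩ ((hZ.1.sub hZ'.1).norm)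
  have hmax' : ∀ σ ∈ Icc p q, ‖Z σ - Z' σ‖ ≤ ‖Z r - Z' r‖ := fun σ hσ => hmax hσ
  have h1 := F.diff_le hp hq hZ.1 hZ'.1 hs hr hmax'
  rw [← hZ.2 s hs r hr, ← hZ'.2 s hs r hr] at h1
  have h2 : ‖Z r - Z' r‖ ≤ ‖Z s - Z' s‖ + ‖Z r - Z s - (Z' r - Z' s)‖ := by
    have := norm_add_le (Z s - Z' s) (Z r - Z s - (Z' r - Z' s))
    rwa [show Z s - Z' s + (Z r - Z s - (Z' r - Z' s)) = Z r - Z' r by abel] at this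
  have h3 : ‖Z r - Z' r‖ * ∫ σ in p..q, M σ ≤ ‖Z r - Z' r‖ * (1 / 2) :=
    mul_le_mul_of_nonneg_left hI (norm_nonneg _)
  have := hmax' τ hτ
  linarith

/-- existence -/
lemma Flow.exists_traj (F : Flow T B V Bt M) {p q s : ℝ} (hp : p ∈ Ico 0 T)
    (hq : q ∈ Ico 0 T) (hI : ∫ σ in p..q, M σ ≤ 1 / 2) (hs : s ∈ Icc p q) (z : R3) :
    ∃ Z, Traj V Z p q ∧ Z s = z := by
  have hpq := hs.1.trans hs.2
  have hcont : ∀ f : C(Icc p q, R3), ContinuousOn (IccExtend hpq f) (Icc p q) :=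
    fun f => (f.continuous.Icc_extend').continuousOn
  let Φ : C(Icc p q, R3) → C(Icc p q, R3) := fun f =>
    ⟨fun τ => z + ∫ σ in s..τ, V σ (IccExtend hpq f σ), by
      have h := intervalIntegral.continuousOn_primitive_interval' (a := s)
        (F.comp_ii hp hq hpq (hcont f)) (by rwa [uIcc_of_le hpq])
      rw [uIcc_of_le hpq] at h
      exact continuous_const.add (continuousOn_iff_continuous_domRestrict.1 h)⟩
  have hΦ : ContractingWith (1 / 2 : NNReal) Φ := by
    refine ⟨by rw [← NNReal.coe_lt_coe]; norm_num, LipschitzWith.of_dist_le_mul fun f g => ?_⟩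
    rw [ContinuousMap.dist_le (by positivity)]
    intro τ
    have h := F.diff_le hp hq (hcont f) (hcont g) hs τ.2 (D := dist f g) (by
      intro σ hσ
      rw [IccExtend_of_mem _ _ hσ, IccExtend_of_mem _ _ hσ, ← dist_eq_norm]
      exact ContinuousMap.dist_apply_le_dist _)
    have h2 : dist f g * ∫ σ in p..q, M σ ≤ dist f g * (1 / 2) :=
      mul_le_mul_of_nonneg_left hI dist_nonneg
    rw [dist_eq_norm]
    change ‖(z + ∫ σ in s..τ, V σ (IccExtend hpq f σ)) -
      (z + ∫ σ in s..τ, V σ (IccExtend hpq g σ))‖ ≤ _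
    rw [add_sub_add_left_eq_sub]
    refine (h.trans h2).trans ?_
    push_cast
    linarith
  obtain ⟨f, hf⟩ : ∃ f, Φ f = f := ⟨_, hΦ.fixedPoint_isFixedPt⟩
  have hval : ∀ τ ∈ Icc p q, IccExtend hpq f τ = z + ∫ σ in s..τ, V σ (IccExtend hpq f σ) := by
    intro τ hτ
    have := congrArg (fun g : C(Icc p q, R3) => g ⟨τ, hτ⟩) hf
    rw [IccExtend_of_mem _ _ hτ]
    exact this.symm
  refine ⟨IccExtend hpq f, ⟨hcont f, ?_⟩, ?_⟩
  · intro a ha b hb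
    rw [hval a ha, hval b hb, add_sub_add_left_eq_sub]
    exact intervalIntegral.integral_interval_sub_left (F.comp_ii' hp hq (hcont f) hs hb)
      (F.comp_ii' hp hq (hcont f) hs ha)
  · rw [hval s hs]; simp

/-- confinement -/
lemma Flow.confine (F : Flow T B V Bt M) {Z : ℝ → R3} {p q s τ δ : ℝ} {x : R3} (hp : p ∈ Ico 0 T)
    (hq : q ∈ Ico 0 T) (hZ : Traj V Z p q) (hδ : 0 < δ)
    (hI : ∫ σ in p..q, M σ ≤ 1 / 8) (hI2 : ∫ σ in p..q, ‖V σ x‖ ≤ δ / 8)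
    (hs : s ∈ Icc p q) (hτ : τ ∈ Icc p q) (hsx : ‖Z s - x‖ ≤ δ / 2) : ‖Z τ - x‖ < δ := by
  have hsub : Icc p q ⊆ Ico 0 T := fun x hx => ⟨hp.1.trans hx.1, hx.2.trans_lt hq.2⟩
  obtain ⟨r, hr, hmax⟩ := isCompact_Icc.exists_isMaxOn ⟨s, hs⟩
    ((hZ.1.sub (continuousOn_const (c := x))).norm)
  have hmax' : ∀ σ ∈ Icc p q, ‖Z σ - x‖ ≤ ‖Z r - x‖ := fun σ hσ => hmax hσ
  have h1 := F.diff_le hp hq hZ.1 (continuousOn_const (c := x)) hs hr hmax'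
  rw [← hZ.2 s hs r hr] at h1
  have h4 : ‖∫ σ in s..r, V σ x‖ ≤ δ / 8 := by
    refine (norm_int_le (g := fun σ => ‖V σ x‖) (F.Vii x (hsub hs) (hsub hr)).norm
      (fun _ _ => le_rfl)).trans ?_
    exact (abs_int_le (fun _ => norm_nonneg _) (F.Vii x hp hq).norm hs hr).trans hI2
  have h2 : ‖Z r - x‖ ≤ ‖Z s - x‖ + ‖Z r - Z s - ∫ σ in s..r, V σ x‖ + ‖∫ σ in s..r, V σ x‖ := by
    have := norm_add₃_le (a := Z s - x) (b := Z r - Z s - ∫ σ in s..r, V σ x)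
      (c := ∫ σ in s..r, V σ x)
    rwa [show Z s - x + (Z r - Z s - ∫ σ in s..r, V σ x) + ∫ σ in s..r, V σ x = Z r - x by abel]
      at this
  have h3 : ‖Z r - x‖ * ∫ σ in p..q, M σ ≤ ‖Z r - x‖ * (1 / 8) :=
    mul_le_mul_of_nonneg_left hI (norm_nonneg _)
  have := hmax' τ hτ
  linarith

/-- speed bound in a ball of radius at most one -/
lemma Flow.speed (F : Flow T B V Bt M) {Z : ℝ → R3} {p q s τ : ℝ} {x : R3} (hp : p ∈ Ico 0 T)
    (hq : q ∈ Ico 0 T) (hZ : Traj V Z p q) (hb : ∀ σ ∈ Icc p q, ‖Z σ - x‖ ≤ 1)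
    (hs : s ∈ Icc p q) (hτ : τ ∈ Icc p q) :
    ‖Z τ - Z s‖ ≤ |∫ σ in s..τ, (1 + M σ + ‖V σ x‖)| := by
  have hsub : Icc p q ⊆ Ico 0 T := fun x hx => ⟨hp.1.trans hx.1, hx.2.trans_lt hq.2⟩
  rw [hZ.2 s hs τ hτ]
  refine norm_int_le (((intervalIntegrable_const).add (F.Mii (hsub hs) (hsub hτ))).add
    (F.Vii x (hsub hs) (hsub hτ)).norm) ?_
  intro σ hσ
  have hσ' : σ ∈ Icc p q := uIcc_subset_Icc hs hτ (uIoc_subset_uIcc hσ)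
  have h1 := F.hVlip σ (hsub hσ') (Z σ) x
  have h2 : ‖V σ (Z σ)‖ ≤ ‖V σ x‖ + ‖V σ (Z σ) - V σ x‖ := by
    have := norm_add_le (V σ x) (V σ (Z σ) - V σ x)
    simpa using this
  have h3 : M σ * ‖Z σ - x‖ ≤ M σ * 1 := mul_le_mul_of_nonneg_left (hb σ hσ') (F.hM0 σ)
  linarith

end EMHDAux
namespace EMHDAux

open Filter Topology

variable {T : ℝ} {B V Bt : ℝ → R3 → R3} {M : ℝ → ℝ}

lemma Est.refl (φ : ℝ → R3) (p : ℝ) : Est M φ p p := by simp [Est]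

lemma Est.bound {φ : ℝ → R3} {p q : ℝ} (h : Est M φ p q) :
    ‖φ q‖ ≤ ‖φ p‖ * Real.exp |∫ σ in p..q, M σ| := by
  unfold Est at h
  have h2 : ‖φ q‖ ≤ ‖φ p‖ + ‖φ q - φ p‖ := by
    have := norm_add_le (φ p) (φ q - φ p)
    simpa using this
  linarith

lemma Est.trans' {φ : ℝ → R3} {p r q : ℝ} (h1 : Est M φ p r) (h2 : Est M φ r q)
    (he : |∫ σ in p..q, M σ| = |∫ σ in p..r, M σ| + |∫ σ in r..q, M σ|) : Est M φ p q := by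
  have hb := h1.bound
  unfold Est at *
  rw [he, Real.exp_add]
  have h3 : ‖φ q - φ p‖ ≤ ‖φ r - φ p‖ + ‖φ q - φ r‖ := by
    have := norm_add_le (φ r - φ p) (φ q - φ r)
    rwa [show φ r - φ p + (φ q - φ r) = φ q - φ p by abel] at this
  have h4 : 0 ≤ Real.exp |∫ σ in r..q, M σ| - 1 := by
    have := Real.one_le_exp (abs_nonneg (∫ σ in r..q, M σ)); linarith
  nlinarith [mul_le_mul_of_nonneg_right hb h4]

/-- two-sided estimate -/
def Est2 (M : ℝ → ℝ) (φ : ℝ → R3) (p q : ℝ) : Prop := Est M φ p q ∧ Est M φ q p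

lemma Flow.abs_add (F : Flow T B V Bt M) {p r q : ℝ} (hp : p ∈ Ico 0 T) (hr : r ∈ Ico 0 T)
    (hq : q ∈ Ico 0 T) (hpr : p ≤ r) (hrq : r ≤ q) :
    |∫ σ in p..q, M σ| = |∫ σ in p..r, M σ| + |∫ σ in r..q, M σ| := by
  rw [← intervalIntegral.integral_add_adjacent_intervals (F.Mii hp hr) (F.Mii hr hq)]
  rw [abs_of_nonneg (intervalIntegral.integral_nonneg hpr (fun u _ => F.hM0 u)),
    abs_of_nonneg (intervalIntegral.integral_nonneg hrq (fun u _ => F.hM0 u)), abs_of_nonneg]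
  exact add_nonneg (intervalIntegral.integral_nonneg hpr (fun u _ => F.hM0 u))
    (intervalIntegral.integral_nonneg hrq (fun u _ => F.hM0 u))

lemma abs_int_symm (p q : ℝ) : |∫ σ in p..q, M σ| = |∫ σ in q..p, M σ| := by
  rw [intervalIntegral.integral_symm, abs_neg]

lemma Flow.est2_trans (F : Flow T B V Bt M) {φ : ℝ → R3} {p r q : ℝ} (hp : p ∈ Ico 0 T)
    (hr : r ∈ Ico 0 T) (hq : q ∈ Ico 0 T) (hpr : p ≤ r) (hrq : r ≤ q)
    (h1 : Est2 M φ p r) (h2 : Est2 M φ r q) : Est2 M φ p q := by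
  refine ⟨h1.1.trans' h2.1 (F.abs_add hp hr hq hpr hrq), h2.2.trans' h1.2 ?_⟩
  rw [abs_int_symm q p, abs_int_symm q r, abs_int_symm r p, F.abs_add hp hr hq hpr hrq, add_comm]

/-- good space-time points -/
def Good (T : ℝ) (B V : ℝ → R3 → R3) (M : ℝ → ℝ) (t₀ : ℝ) (x₀ : R3) : Prop :=
  ∃ ε > 0, ∀ p ∈ Ioo (t₀ - ε) (t₀ + ε), ∀ q ∈ Ioo (t₀ - ε) (t₀ + ε), p ≤ q → 0 < p → q < T →
    ∀ Z, Traj V Z p q → (∀ τ ∈ Icc p q, ‖Z τ - x₀‖ < ε) → Est2 M (fun τ => B τ (Z τ)) p q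

lemma Flow.chain (F : Flow T B V Bt M) {p q : ℝ} (hp : 0 < p) (hpq : p ≤ q) (hq : q < T)
    {Z : ℝ → R3} (hZ : Traj V Z p q) (hg : ∀ τ ∈ Icc p q, Good T B V M τ (Z τ)) :
    Est2 M (fun τ => B τ (Z τ)) p q := by
  have hg' : ∀ i : Icc p q, Good T B V M i (Z i) := fun i => hg i i.2
  choose ε hε hE using hg'
  have hZc : Continuous (fun i : Icc p q => Z i) := continuousOn_iff_continuous_domRestrict.1 hZ.1
  let c : Icc p q → Set (Icc p q) := fun i =>
    {τ | (τ : ℝ) ∈ Ioo ((i : ℝ) - ε i) (i + ε i) ∧ ‖Z τ - Z i‖ < ε i}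
  obtain ⟨t, ht0, hmono, ⟨m, hm⟩, hc⟩ := exists_monotone_Icc_subset_open_cover_Icc hpq (c := c)
    (by
      intro i
      refine (isOpen_Ioo.preimage continuous_subtype_val).inter ?_
      exact isOpen_lt (hZc.sub continuous_const).norm continuous_const)
    (by
      intro i _
      refine mem_iUnion.2 ⟨i, ?_⟩
      have := hε i
      refine ⟨⟨by linarith, by linarith⟩, by simpa using this⟩)
  have hin : ∀ x : Icc p q, (x : ℝ) ∈ Ico 0 T := fun x => ⟨hp.le.trans x.2.1, x.2.2.trans_lt hq⟩
  have key : ∀ n, Est2 M (fun τ => B τ (Z τ)) p (t n) := by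
    intro n
    induction n with
    | zero => rw [ht0]; exact ⟨Est.refl _ _, Est.refl _ _⟩
    | succ n ih =>
      obtain ⟨i, hi⟩ := hc n
      have hle : t n ≤ t (n + 1) := hmono (Nat.le_succ n)
      refine F.est2_trans ⟨hp.le, hpq.trans_lt hq⟩ (hin _) (hin _) (t n).2.1 hle ih ?_
      have h1 := hi (left_mem_Icc.2 hle)
      have h2 := hi (right_mem_Icc.2 hle)
      refine hE i _ h1.1 _ h2.1 hle (hp.trans_le (t n).2.1) ((t (n+1)).2.2.trans_lt hq) Z
        (hZ.mono (t n).2.1 (t (n+1)).2.2) ?_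
      intro τ hτ
      have hτ' : τ ∈ Icc p q := ⟨(t n).2.1.trans hτ.1, hτ.2.trans (t (n+1)).2.2⟩
      exact (hi (show (⟨τ, hτ'⟩ : Icc p q) ∈ Icc (t n) (t (n+1)) from hτ)).2
  have := key m
  rwa [hm m le_rfl] at this

/-- smallness of integrals on short windows -/
lemma Flow.small (F : Flow T B V Bt M) {α β w : ℝ} (hα : α ∈ Ico 0 T) (hβ : β ∈ Ico 0 T)
    (hw : w ∈ Icc α β) (x : R3) {ε : ℝ} (hε : 0 < ε) :
    ∃ κ > 0, ∀ p ∈ Icc α β, ∀ q ∈ Icc α β, p ≤ q → |p - w| ≤ κ → |q - w| ≤ κ →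
      ∫ σ in p..q, M σ ≤ ε ∧ ∫ σ in p..q, ‖V σ x‖ ≤ ε := by
  have hαβ := hw.1.trans hw.2
  have hsub : Icc α β ⊆ Ico 0 T := fun x hx => ⟨hα.1.trans hx.1, hx.2.trans_lt hβ.2⟩
  have gen : ∀ g : ℝ → ℝ, IntervalIntegrable g volume α β → ∃ κ > 0, ∀ p ∈ Icc α β,
      ∀ q ∈ Icc α β, |p - w| ≤ κ → |q - w| ≤ κ → ∫ σ in p..q, g σ ≤ ε := by
    intro g hg
    have h := intervalIntegral.continuousOn_primitive_interval' (a := w) hg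
      (by rwa [uIcc_of_le hαβ])
    rw [uIcc_of_le hαβ] at h
    obtain ⟨κ, hκ, hk⟩ := Metric.continuousWithinAt_iff.1 (h w hw) (ε / 2) (by linarith)
    refine ⟨κ / 2, by linarith, fun p hp q hq hpw hqw => ?_⟩
    have h1 := hk hp (by rw [Real.dist_eq]; linarith)
    have h2 := hk hq (by rw [Real.dist_eq]; linarith)
    rw [intervalIntegral.integral_same, Real.dist_eq, sub_zero] at h1 h2
    have ii : ∀ a ∈ Icc α β, IntervalIntegrable g volume w a := fun a ha => hg.mono_set (by
      rw [uIcc_of_le hαβ]; exact uIcc_subset_Icc hw ha)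
    rw [← intervalIntegral.integral_interval_sub_left (ii q hq) (ii p hp)]
    have := abs_lt.1 h1
    have := abs_lt.1 h2
    linarith
  obtain ⟨κ₁, h1, H1⟩ := gen M (F.Mii hα hβ)
  obtain ⟨κ₂, h2, H2⟩ := gen _ (F.Vii x hα hβ).norm
  refine ⟨min κ₁ κ₂, lt_min h1 h2, fun p hp q hq _ hpw hqw =>
    ⟨H1 p hp q hq (hpw.trans (min_le_left _ _)) (hqw.trans (min_le_left _ _)),
     H2 p hp q hq (hpw.trans (min_le_right _ _)) (hqw.trans (min_le_right _ _))⟩⟩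

lemma window {α β w κ : ℝ} (hαβ : α < β) (hw : w ∈ Icc α β) (hκ : 0 < κ) :
    ∃ α' β', α ≤ α' ∧ β' ≤ β ∧ α' < β' ∧ w ∈ Icc α' β' ∧ |α' - w| ≤ κ ∧ |β' - w| ≤ κ ∧
      Ioo α' β' ∈ 𝓝[Ioo α β] w := by
  refine ⟨max α (w - κ), min β (w + κ), le_max_left _ _, min_le_left _ _, ?_, ?_, ?_, ?_, ?_⟩
  · rw [max_lt_iff, lt_min_iff, lt_min_iff]
    exact ⟨⟨hαβ, by linarith [hw.1]⟩, by linarith [hw.2], by linarith⟩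
  · exact ⟨max_le hw.1 (by linarith), le_min hw.2 (by linarith)⟩
  · rw [abs_le]
    exact ⟨by linarith [le_max_right α (w - κ)], by
      linarith [max_le hw.1 (show w - κ ≤ w by linarith)]⟩
  · rw [abs_le]
    exact ⟨by linarith [le_min hw.2 (show w ≤ w + κ by linarith)], by
      linarith [min_le_right β (w + κ)]⟩
  · have h1 : Ioo (w - κ) (w + κ) ∈ 𝓝[Ioo α β] w :=
      mem_nhdsWithin_of_mem_nhds (Ioo_mem_nhds (by linarith) (by linarith))
    filter_upwards [h1, self_mem_nhdsWithin] with x hx hx'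
    exact ⟨max_lt hx'.1 hx.1, lt_min hx'.2 hx.2⟩

lemma Flow.endpoint (F : Flow T B V Bt M) {α β w η : ℝ} (hα : α ∈ Ico 0 T) (hβ : β ∈ Ico 0 T)
    (hαβ : α < β) (hw : w ∈ Icc α β) {Z : ℝ → R3} (hZ : Traj V Z α β) (hη : 0 < η)
    (hg : ∀ τ ∈ Ioo α β, ∀ x, ‖x - Z w‖ < η → Good T B V M τ x) :
    Tendsto (fun σ => B σ (Z σ)) (𝓝[Ioo α β] w) (𝓝 (B w (Z w))) := by
  have hsub : Icc α β ⊆ Ico 0 T := fun x hx => ⟨hα.1.trans hx.1, hx.2.trans_lt hβ.2⟩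
  -- first window
  obtain ⟨κ, hκ, hk⟩ := F.small hα hβ hw (Z w) (ε := min (1/8) (η/8)) (by positivity)
  obtain ⟨α', β', a1, b1, ab, hw', wα, wβ, hnh⟩ := window hαβ hw hκ
  have hα'm : α' ∈ Icc α β := ⟨a1, ab.le.trans b1⟩
  have hβ'm : β' ∈ Icc α β := ⟨a1.trans ab.le, b1⟩
  have hα' := hsub hα'm
  have hβ' := hsub hβ'm
  obtain ⟨I1, I2⟩ := hk α' hα'm β' hβ'm ab.le wα wβ
  have I1' := I1.trans (min_le_left _ _)
  have I2' := I2.trans (min_le_right _ _)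
  have hsub' : Icc α' β' ⊆ Icc α β := Icc_subset_Icc a1 b1
  have hZ' := hZ.mono a1 b1
  -- estimate for trajectories passing through the centre
  have conf : ∀ Y, Traj V Y α' β' → ∀ r ∈ Icc α' β', Y r = Z w → ∀ σ ∈ Ioo α' β',
      ∀ τ ∈ Ioo α' β', Est M (fun τ => B τ (Y τ)) σ τ := by
    intro Y hY r hr hYr
    have hc : ∀ τ ∈ Icc α' β', ‖Y τ - Z w‖ < η := fun τ hτ =>
      F.confine hα' hβ' hY hη I1' I2' hr hτ (by rw [hYr]; simp; linarith)
    have main : ∀ σ ∈ Ioo α' β', ∀ τ ∈ Ioo α' β', σ ≤ τ →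
        Est2 M (fun τ => B τ (Y τ)) σ τ := by
      intro σ hσ τ hτ hle
      refine F.chain (hα'.1.trans_lt hσ.1) hle (hτ.2.trans hβ'.2) (hY.mono hσ.1.le hτ.2.le) ?_
      intro ρ hρ
      have hρ' : ρ ∈ Ioo α' β' := ⟨hσ.1.trans_le hρ.1, hρ.2.trans_lt hτ.2⟩
      exact hg ρ ⟨a1.trans_lt hρ'.1, hρ'.2.trans_le b1⟩ _ (hc ρ (Ioo_subset_Icc_self hρ'))
    intro σ hσ τ hτ
    rcases le_total σ τ with h | h
    · exact (main σ hσ τ hτ h).1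
    · exact (main τ hτ σ hσ h).2
  obtain ⟨τ₁, hτ₁⟩ := nonempty_Ioo.2 ab
  set Γ := ‖B τ₁ (Z τ₁)‖ * Real.exp (1 / 8) with hΓ
  have hΓ0 : 0 ≤ Γ := by positivity
  have hbd : ∀ σ ∈ Ioo α' β', ‖B σ (Z σ)‖ ≤ Γ := by
    intro σ hσ
    refine ((conf Z hZ' w hw' rfl τ₁ hτ₁ σ hσ).bound).trans ?_
    refine mul_le_mul_of_nonneg_left (Real.exp_le_exp.2 ?_) (norm_nonneg _)
    exact (abs_int_le F.hM0 (F.Mii hα' hβ') (Ioo_subset_Icc_self hτ₁)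
      (Ioo_subset_Icc_self hσ)).trans I1'
  -- main estimate
  have hev : ∀ ε > 0, ∀ᶠ σ in 𝓝[Ioo α β] w, ‖B σ (Z σ) - B σ (Z w)‖ ≤ 3 * ε := by
    intro ε hε
    obtain ⟨e, he, hee⟩ : ∃ e > 0, (Γ + ε) * (Real.exp e - 1) ≤ ε := by
      have hc : Tendsto (fun e : ℝ => (Γ + ε) * (Real.exp e - 1)) (𝓝 0) (𝓝 0) := by
        have : Continuous (fun e : ℝ => (Γ + ε) * (Real.exp e - 1)) := by fun_prop
        simpa using this.tendsto 0
      have h2 := (hc.eventually (gt_mem_nhds hε)).filter_mono (nhdsWithin_le_nhds (s := Ioi 0))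
      obtain ⟨e, h, he⟩ := (h2.and self_mem_nhdsWithin).exists
      exact ⟨e, he, h.le⟩
    obtain ⟨κ₂, hκ₂, hk₂⟩ := F.small hα' hβ' hw' (Z w) he
    obtain ⟨α'', β'', a2, b2, ab2, hw2, wα2, wβ2, hnh2⟩ := window ab hw' hκ₂
    have I3 := (hk₂ α'' ⟨a2, ab2.le.trans b2⟩ β'' ⟨a2.trans ab2.le, b2⟩ ab2.le wα2 wβ2).1
    have hM'' : IntervalIntegrable M volume α'' β'' := F.Mii
      (hsub (hsub' ⟨a2, ab2.le.trans b2⟩)) (hsub (hsub' ⟨a2.trans ab2.le, b2⟩))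
    obtain ⟨τ₂, hτ₂⟩ := nonempty_Ioo.2 ab2
    have hin : Ioo α'' β'' ⊆ Ioo α' β' := Ioo_subset_Ioo a2 b2
    have hτ₂T : τ₂ ∈ Ico 0 T := hsub (hsub' (Ioo_subset_Icc_self (hin hτ₂)))
    obtain ⟨δ, hδ, hd⟩ := Metric.continuous_iff.1 (F.hB2 τ₂ hτ₂T).continuous (Z τ₂) ε hε
    have hnear : ∀ᶠ σ in 𝓝[Ioo α β] w, ‖Z σ - Z w‖ < δ / 2 := by
      have h1 := (hZ.1 w hw).mono_left (nhdsWithin_mono w Ioo_subset_Icc_self)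
      have := Metric.tendsto_nhds.1 h1 (δ/2) (by linarith)
      simpa [dist_eq_norm] using this
    have hnh2' : Ioo α'' β'' ∈ 𝓝[Ioo α β] w := by
      have : 𝓝[Ioo α β] w ≤ 𝓝[Ioo α' β'] w := by
        rw [nhdsWithin]
        exact le_inf inf_le_left (le_principal_iff.2 hnh)
      exact this hnh2
    filter_upwards [hnear, hnh2'] with σ hσ1 hσ
    have hsmall : ∀ y : R3, ‖y‖ ≤ Γ + ε → ∀ a ∈ Ioo α'' β'', ∀ b ∈ Ioo α'' β'',
        ‖y‖ * (Real.exp |∫ s in a..b, M s| - 1) ≤ ε := by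
      intro y hy a ha b hb
      have h1 : |∫ s in a..b, M s| ≤ e := (abs_int_le F.hM0 hM'' (Ioo_subset_Icc_self ha)
        (Ioo_subset_Icc_self hb)).trans I3
      have h2 := Real.exp_le_exp.2 h1
      have h3 := Real.one_le_exp (abs_nonneg (∫ s in a..b, M s))
      refine le_trans ?_ hee
      exact mul_le_mul hy (by linarith) (by linarith) (by linarith)
    obtain ⟨Y, hY, hYσ⟩ := F.exists_traj hα' hβ' (by linarith)
      (Ioo_subset_Icc_self (hin hσ)) (Z w)
    have hst := F.stab hα' hβ' hY hZ' (by linarith) (Ioo_subset_Icc_self (hin hσ))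
      (Ioo_subset_Icc_self (hin hτ₂))
    rw [hYσ, norm_sub_rev (Z w)] at hst
    have hclose : ‖B τ₂ (Y τ₂) - B τ₂ (Z τ₂)‖ < ε := by
      rw [← dist_eq_norm]; apply hd; rw [dist_eq_norm]; linarith
    have hYb : ‖B τ₂ (Y τ₂)‖ ≤ Γ + ε := by
      have h1 := hbd τ₂ (hin hτ₂)
      have h2 : ‖B τ₂ (Y τ₂)‖ ≤ ‖B τ₂ (Z τ₂)‖ + ‖B τ₂ (Y τ₂) - B τ₂ (Z τ₂)‖ := by
        have := norm_add_le (B τ₂ (Z τ₂)) (B τ₂ (Y τ₂) - B τ₂ (Z τ₂))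
        simpa using this
      linarith
    have e1 := conf Y hY σ (Ioo_subset_Icc_self (hin hσ)) hYσ τ₂ (hin hτ₂) σ (hin hσ)
    have e2 := conf Z hZ' w hw' rfl τ₂ (hin hτ₂) σ (hin hσ)
    unfold Est at e1 e2
    simp only [hYσ] at e1
    have e1' := e1.trans (hsmall _ hYb τ₂ hτ₂ σ hσ)
    have e2' := e2.trans (hsmall _ ((hbd τ₂ (hin hτ₂)).trans (by linarith)) τ₂ hτ₂ σ hσ)
    have tri : B σ (Z σ) - B σ (Z w) = (B σ (Z σ) - B τ₂ (Z τ₂)) -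
      (B τ₂ (Y τ₂) - B τ₂ (Z τ₂)) - (B σ (Z w) - B τ₂ (Y τ₂)) := by abel
    rw [tri]
    refine (norm_sub_le _ _).trans ?_
    have := norm_sub_le (B σ (Z σ) - B τ₂ (Z τ₂)) (B τ₂ (Y τ₂) - B τ₂ (Z τ₂))
    linarith
  have h0 : Tendsto (fun σ => B σ (Z σ) - B σ (Z w)) (𝓝[Ioo α β] w) (𝓝 0) := by
    rw [Metric.tendsto_nhds]
    intro ε hε
    filter_upwards [hev (ε / 6) (by linarith)] with σ hσ
    rw [dist_zero_right]; linarith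
  have h1 : Tendsto (fun σ => B σ (Z w)) (𝓝[Ioo α β] w) (𝓝 (B w (Z w))) :=
    ((F.hBc (Z w)) w (hsub hw)).mono_left
      (nhdsWithin_mono w (Ioo_subset_Icc_self.trans hsub))
  simpa using h0.add h1

lemma Flow.gap (F : Flow T B V Bt M) {α β δ : ℝ} {x : R3} (hα : α ∈ Ico 0 T) (hβ : β ∈ Ico 0 T)
    {Z : ℝ → R3} (hZ : Traj V Z α β)
    (hg : ∀ τ ∈ Ioo α β, ∀ y, ‖y - x‖ < δ → Good T B V M τ y)
    (hZb : ∀ τ ∈ Icc α β, ‖Z τ - x‖ < δ) :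
    ∀ p ∈ Icc α β, ∀ q ∈ Icc α β, Est M (fun τ => B τ (Z τ)) p q := by
  intro p hp q hq
  have hsub : Icc α β ⊆ Ico 0 T := fun x hx => ⟨hα.1.trans hx.1, hx.2.trans_lt hβ.2⟩
  rcases eq_or_lt_of_le (hp.1.trans hp.2) with heq | hαβ
  · have : p = q := by
      have := hp.1; have := hp.2; have := hq.1; have := hq.2; linarith
    rw [this]; exact Est.refl _ _
  have main : ∀ σ ∈ Ioo α β, ∀ τ ∈ Ioo α β, σ ≤ τ → Est2 M (fun τ => B τ (Z τ)) σ τ := by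
    intro σ hσ τ hτ hle
    refine F.chain (hα.1.trans_lt hσ.1) hle (hτ.2.trans hβ.2) (hZ.mono hσ.1.le hτ.2.le) ?_
    intro ρ hρ
    have hρ' : ρ ∈ Ioo α β := ⟨hσ.1.trans_le hρ.1, hρ.2.trans_lt hτ.2⟩
    exact hg ρ hρ' _ (hZb ρ (Ioo_subset_Icc_self hρ'))
  have inner : ∀ σ ∈ Ioo α β, ∀ τ ∈ Ioo α β, Est M (fun τ => B τ (Z τ)) σ τ := by
    intro σ hσ τ hτ
    rcases le_total σ τ with h | h
    · exact (main σ hσ τ hτ h).1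
    · exact (main τ hτ σ hσ h).2
  have lim : ∀ w ∈ Icc α β, Tendsto (fun σ => B σ (Z σ)) (𝓝[Ioo α β] w) (𝓝 (B w (Z w))) := by
    intro w hw
    refine F.endpoint hα hβ hαβ hw hZ (η := δ - ‖Z w - x‖) (by linarith [hZb w hw]) ?_
    intro τ hτ y hy
    refine hg τ hτ y ?_
    have := norm_add_le (y - Z w) (Z w - x)
    rw [sub_add_sub_cancel] at this
    linarith
  have nb : ∀ w ∈ Icc α β, (𝓝[Ioo α β] w).NeBot := by
    intro w hw
    rw [← mem_closure_iff_nhdsWithin_neBot, closure_Ioo hαβ.ne]; exact hw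
  have Elim : ∀ a ∈ Icc α β, ∀ w ∈ Icc α β,
      Tendsto (fun b => ∫ σ in a..b, M σ) (𝓝[Ioo α β] w) (𝓝 (∫ σ in a..w, M σ)) := by
    intro a ha w hw
    have h := intervalIntegral.continuousOn_primitive_interval' (a := a) (F.Mii hα hβ)
      (by rwa [uIcc_of_le hαβ.le])
    rw [uIcc_of_le hαβ.le] at h
    exact (h w hw).mono_left (nhdsWithin_mono w Ioo_subset_Icc_self)
  have step1 : ∀ σ ∈ Ioo α β, Est M (fun τ => B τ (Z τ)) p σ := by
    intro σ hσ
    have := nb p hp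
    have hev : ∀ᶠ r in 𝓝[Ioo α β] p, Est M (fun τ => B τ (Z τ)) r σ := by
      filter_upwards [self_mem_nhdsWithin] with r hr using inner r hr σ hσ
    refine le_of_tendsto_of_tendsto (tendsto_const_nhds.sub (lim p hp)).norm
      ((lim p hp).norm.mul (((Real.continuous_exp.tendsto _).comp
        (Elim σ (Ioo_subset_Icc_self hσ) p hp).abs).sub_const 1)) ?_ |>.trans ?_
    · filter_upwards [hev] with r hr
      unfold Est at hr
      rw [abs_int_symm] at hr
      exact hr
    · rw [abs_int_symm]
  have := nb q hq
  have hev : ∀ᶠ r in 𝓝[Ioo α β] q, Est M (fun τ => B τ (Z τ)) p r := by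
    filter_upwards [self_mem_nhdsWithin] with r hr using step1 r hr
  exact le_of_tendsto_of_tendsto ((lim q hq).sub_const _).norm
      (tendsto_const_nhds.mul (((Real.continuous_exp.tendsto _).comp
        (Elim p hp q hq).abs).sub_const 1)) hev

end EMHDAux
namespace EMHDAux

open Filter Topology

lemma ac_of_bound {E : Type*} [NormedAddCommGroup E] {f : ℝ → E} {g : ℝ → ℝ} {a b : ℝ}
    (hab : a ≤ b) (hg : IntervalIntegrable g volume a b)
    (h : ∀ s ∈ Icc a b, ∀ τ ∈ Icc a b, s ≤ τ → ‖f τ - f s‖ ≤ ∫ σ in s..τ, g σ) :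
    AbsolutelyContinuousOnInterval f a b := by
  have hG := hg.absolutelyContinuousOnInterval_intervalIntegral (c := a) (by simp)
  have key0 : ∀ s ∈ Icc a b, ∀ τ ∈ Icc a b, s ≤ τ →
      dist (f s) (f τ) ≤ dist (∫ σ in a..s, g σ) (∫ σ in a..τ, g σ) := by
    intro s hs τ hτ hst
    rw [dist_comm (f s), dist_comm (∫ σ in a..s, g σ), dist_eq_norm, dist_eq_norm]
    have hu : uIcc a b = Icc a b := uIcc_of_le hab
    rw [intervalIntegral.integral_interval_sub_left
      (hg.mono_set (uIcc_subset_uIcc_left (by rwa [hu])))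
      (hg.mono_set (uIcc_subset_uIcc_left (by rwa [hu])))]
    exact (h s hs τ hτ hst).trans (le_abs_self _)
  have key : ∀ s ∈ Icc a b, ∀ τ ∈ Icc a b,
      dist (f s) (f τ) ≤ dist (∫ σ in a..s, g σ) (∫ σ in a..τ, g σ) := by
    intro s hs τ hτ
    rcases le_total s τ with hst | hst
    · exact key0 s hs τ hτ hst
    · rw [dist_comm (f s), dist_comm (∫ σ in a..s, g σ)]
      exact key0 τ hτ s hs hst
  rw [absolutelyContinuousOnInterval_iff] at hG ⊢
  intro ε hε
  obtain ⟨δ, hδ, hd⟩ := hG ε hε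
  refine ⟨δ, hδ, fun E hE hs => lt_of_le_of_lt (Finset.sum_le_sum fun i hi => ?_) (hd E hE hs)⟩
  have := hE.1 i hi
  rw [uIcc_of_le hab] at this
  exact key _ this.1 _ this.2

lemma int_bound {φ : ℝ → R3} {g m : ℝ → ℝ} {a b : ℝ}
    (hab : a ≤ b) (hg : IntervalIntegrable g volume a b) (hm : IntervalIntegrable m volume a b)
    (h : ∀ s ∈ Icc a b, ∀ τ ∈ Icc a b, s ≤ τ → ‖φ τ - φ s‖ ≤ ∫ σ in s..τ, g σ)
    (hd : ∀ᵐ t, t ∈ Ioo a b → ∀ d, HasDerivAt φ d t → ‖d‖ ≤ m t) :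
    ‖φ b - φ a‖ ≤ ∫ σ in a..b, m σ := by
  have hdiff : ∀ᵐ t, t ∈ Ioo a b → DifferentiableAt ℝ φ t := by
    have hc : ∀ i : Fin 3, ∀ᵐ t, t ∈ Ioo a b → DifferentiableAt ℝ (fun τ => φ τ i) t := by
      intro i
      have hac : AbsolutelyContinuousOnInterval (fun τ => φ τ i) a b := by
        apply ac_of_bound hab hg
        intro s hs τ hτ hst
        refine le_trans ?_ (h s hs τ hτ hst)
        have := EuclideanSpace.norm_eq (φ τ - φ s)
        exact PiLp.norm_apply_le (φ τ - φ s) i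
      filter_upwards [hac.ae_differentiableAt] with t ht hm
      exact ht (by rw [uIcc_of_le hab]; exact Ioo_subset_Icc_self hm)
    filter_upwards [ae_all_iff.2 hc] with t ht hm
    rw [differentiableAt_euclidean]
    exact fun i => ht i hm
  set v := φ b - φ a with hv
  by_cases hv0 : v = 0
  · rw [hv0, norm_zero]
    have h0 : 0 ≤ᵐ[volume.restrict (Ioo a b)] m := by
      rw [EventuallyLE, ae_restrict_iff' measurableSet_Ioo]
      filter_upwards [hdiff, hd] with t h1 h2 hm
      exact (norm_nonneg _).trans (h2 hm _ (h1 hm).hasDerivAt)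
    rw [intervalIntegral.integral_of_le hab, integral_Ioc_eq_integral_Ioo]
    exact integral_nonneg_of_ae h0
  have hvn : 0 < ‖v‖ := norm_pos_iff.2 hv0
  have hac : AbsolutelyContinuousOnInterval (fun τ => inner ℝ v (φ τ)) a b := by
    apply ac_of_bound hab (hg.const_mul ‖v‖)
    intro s hs τ hτ hst
    rw [← inner_sub_right, intervalIntegral.integral_const_mul]
    exact (norm_inner_le_norm _ _).trans
      (mul_le_mul_of_nonneg_left (h s hs τ hτ hst) (norm_nonneg _))
  have h1 := hac.integral_deriv_eq_sub
  rw [← inner_sub_right, ← hv, real_inner_self_eq_norm_sq] at h1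
  have h2 : ∫ t in a..b, deriv (fun τ => inner ℝ v (φ τ)) t ≤ ∫ t in a..b, ‖v‖ * m t := by
    rw [intervalIntegral.integral_of_le hab, integral_Ioc_eq_integral_Ioo,
      intervalIntegral.integral_of_le hab, integral_Ioc_eq_integral_Ioo]
    have i1 := hac.intervalIntegrable_deriv
    have i2 := hm.const_mul ‖v‖
    rw [intervalIntegrable_iff_integrableOn_Ioo_of_le hab] at i1 i2
    refine setIntegral_mono_on_ae i1 i2 measurableSet_Ioo ?_
    filter_upwards [hdiff, hd] with t h1 h2 hm
    have h3 := (h1 hm).hasDerivAt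
    have h4 : HasDerivAt (fun τ => inner ℝ v (φ τ)) (inner ℝ v (deriv φ t)) t := by
      have := (hasDerivAt_const t v).inner ℝ h3
      simpa using this
    rw [h4.deriv]
    exact (real_inner_le_norm _ _).trans
      (mul_le_mul_of_nonneg_left (h2 hm _ h3) (norm_nonneg _))
  rw [h1, intervalIntegral.integral_const_mul, sq] at h2
  exact le_of_mul_le_mul_left h2 hvn

/-- Gronwall with an integrable coefficient. -/
lemma gron {M u : ℝ → ℝ} {a b : ℝ} {c : ℝ} (hab : a ≤ b) (hM0 : ∀ t, 0 ≤ M t)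
    (hM : IntervalIntegrable M volume a b) (hu : ContinuousOn u (Icc a b))
    (h : ∀ τ ∈ Icc a b, u τ ≤ c + ∫ σ in a..τ, M σ * u σ) :
    c + ∫ σ in a..b, M σ * u σ ≤ c * Real.exp (∫ σ in a..b, M σ) := by
  have hu' : ContinuousOn u (uIcc a b) := by rwa [uIcc_of_le hab]
  have hMu : IntervalIntegrable (fun σ => M σ * u σ) volume a b := hM.mul_continuousOn hu'
  have a1 := hM.absolutelyContinuousOnInterval_intervalIntegral (c := a) (by simp)
  have a2 := hMu.absolutelyContinuousOnInterval_intervalIntegral (c := a) (by simp)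
  have a3 : AbsolutelyContinuousOnInterval (fun τ => Real.exp (- ∫ σ in a..τ, M σ)) a b := by
    apply ac_of_bound hab hM
    intro s hs τ hτ hst
    have iis : IntervalIntegrable M volume a s := hM.mono_set
      (uIcc_subset_uIcc_left (by rwa [uIcc_of_le hab]))
    have iiτ : IntervalIntegrable M volume a τ := hM.mono_set
      (uIcc_subset_uIcc_left (by rwa [uIcc_of_le hab]))
    have hd := intervalIntegral.integral_interval_sub_left iiτ iis
    have hpos : 0 ≤ ∫ σ in a..s, M σ := intervalIntegral.integral_nonneg hs.1 (fun _ _ => hM0 _)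
    have hpos2 : 0 ≤ ∫ σ in s..τ, M σ := intervalIntegral.integral_nonneg hst (fun _ _ => hM0 _)
    have e1 : (∫ σ in a..τ, M σ) = (∫ σ in a..s, M σ) + ∫ σ in s..τ, M σ := by linarith
    rw [e1, neg_add, Real.exp_add]
    have f1 := Real.exp_le_one_iff.2 (neg_nonpos.2 hpos)
    have f2 := Real.exp_le_one_iff.2 (neg_nonpos.2 hpos2)
    have f3 := Real.add_one_le_exp (-∫ σ in s..τ, M σ)
    have f4 := Real.exp_pos (-∫ σ in a..s, M σ)
    rw [Real.norm_eq_abs, abs_le]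
    constructor <;> nlinarith
  have a4 : AbsolutelyContinuousOnInterval (fun τ => c + ∫ σ in a..τ, M σ * u σ) a b := by
    have : AbsolutelyContinuousOnInterval (fun _ : ℝ => c) a b := by
      apply ac_of_bound hab hM
      intro s hs τ hτ hst
      simpa using intervalIntegral.integral_nonneg hst (fun _ _ => hM0 _)
    exact this.add a2
  have a5 := a4.fun_mul a3
  have h1 := a5.integral_deriv_eq_sub
  have h2 : ∫ t in a..b, deriv (fun τ => (c + ∫ σ in a..τ, M σ * u σ) *
      Real.exp (- ∫ σ in a..τ, M σ)) t ≤ 0 := by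
    rw [intervalIntegral.integral_of_le hab, integral_Ioc_eq_integral_Ioo]
    apply integral_nonpos_of_ae
    rw [EventuallyLE, ae_restrict_iff' measurableSet_Ioo]
    filter_upwards [hM.ae_hasDerivAt_integral, hMu.ae_hasDerivAt_integral] with t g1 g2 htm
    have hm : t ∈ uIcc a b := by rw [uIcc_of_le hab]; exact Ioo_subset_Icc_self htm
    have g1 := g1 hm a (by simp)
    have g2 := g2 hm a (by simp)
    have g3 := (g2.const_add c).mul g1.neg.exp
    have : deriv (fun τ => (c + ∫ σ in a..τ, M σ * u σ) *
      Real.exp (- ∫ σ in a..τ, M σ)) t = _ := g3.deriv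
    rw [this]
    have hh := h t (Ioo_subset_Icc_self htm)
    have ep := Real.exp_pos (- ∫ σ in a..t, M σ)
    have := mul_nonneg (hM0 t) (mul_nonneg ep.le (sub_nonneg.2 hh))
    simp only [Pi.zero_apply]
    simp only [Pi.neg_apply]
    nlinarith
  rw [h1] at h2
  simp only [intervalIntegral.integral_same, neg_zero, Real.exp_zero, add_zero, mul_one] at h2
  have h3 : (c + ∫ σ in a..b, M σ * u σ) * Real.exp (- ∫ σ in a..b, M σ) ≤ c := by linarith
  rw [Real.exp_neg, ← div_eq_mul_inv, div_le_iff₀ (Real.exp_pos _)] at h3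
  exact h3

lemma est_of_int {M : ℝ → ℝ} {φ : ℝ → R3} {a b : ℝ} (hab : a ≤ b) (hM0 : ∀ t, 0 ≤ M t)
    (hM : IntervalIntegrable M volume a b) (hφ : ContinuousOn φ (Icc a b))
    (h : ∀ s ∈ Icc a b, ∀ τ ∈ Icc a b, s ≤ τ → ‖φ τ - φ s‖ ≤ ∫ σ in s..τ, M σ * ‖φ σ‖) :
    Est M φ a b := by
  have h1 := gron (c := ‖φ a‖) hab hM0 hM hφ.norm (by
    intro τ hτ
    have h2 := h a ⟨le_rfl, hab⟩ τ hτ hτ.1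
    have h3 : ‖φ τ‖ ≤ ‖φ a‖ + ‖φ τ - φ a‖ := by
      have := norm_add_le (φ a) (φ τ - φ a)
      simpa using this
    linarith)
  have h2 := h a ⟨le_rfl, hab⟩ b ⟨hab, le_rfl⟩ hab
  unfold Est
  rw [abs_of_nonneg (intervalIntegral.integral_nonneg hab (fun _ _ => hM0 _))]
  linarith

lemma est2_of_int {M : ℝ → ℝ} {φ : ℝ → R3} {a b : ℝ} (hab : a ≤ b) (hM0 : ∀ t, 0 ≤ M t)
    (hM : IntervalIntegrable M volume a b) (hφ : ContinuousOn φ (Icc a b))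
    (h : ∀ s ∈ Icc a b, ∀ τ ∈ Icc a b, s ≤ τ → ‖φ τ - φ s‖ ≤ ∫ σ in s..τ, M σ * ‖φ σ‖) :
    Est2 M φ a b := by
  refine ⟨est_of_int hab hM0 hM hφ h, ?_⟩
  have hneg : ∀ x ∈ Icc (-b) (-a), -x ∈ Icc a b := fun x hx => ⟨by linarith [hx.2], by linarith [hx.1]⟩
  have h1 := est_of_int (M := fun t => M (-t)) (φ := fun t => φ (-t)) (a := -b) (b := -a)
    (by linarith) (fun t => hM0 _) (by
      have := (IntervalIntegrable.iff_comp_neg (f := M)).1 hM.symm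
      exact this)
    (hφ.comp continuousOn_neg hneg) (by
      intro s hs τ hτ hst
      have := h (-τ) (hneg τ hτ) (-s) (hneg s hs) (by linarith)
      rw [norm_sub_rev]
      rw [intervalIntegral.integral_comp_neg (fun σ => M σ * ‖φ σ‖)]
      exact this)
  unfold Est at h1 ⊢
  rw [intervalIntegral.integral_comp_neg (fun σ => M σ)] at h1
  simp only [neg_neg] at h1
  rw [abs_int_symm]
  exact h1

lemma est2_of_ac {M g : ℝ → ℝ} {φ : ℝ → R3} {a b : ℝ} (hab : a ≤ b) (hM0 : ∀ t, 0 ≤ M t)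
    (hM : IntervalIntegrable M volume a b) (hg : IntervalIntegrable g volume a b)
    (h : ∀ s ∈ Icc a b, ∀ τ ∈ Icc a b, s ≤ τ → ‖φ τ - φ s‖ ≤ ∫ σ in s..τ, g σ)
    (hd : ∀ᵐ t, t ∈ Ioo a b → ∀ d, HasDerivAt φ d t → ‖d‖ ≤ M t * ‖φ t‖) :
    Est2 M φ a b := by
  have hc : ContinuousOn φ (Icc a b) := by
    have := (ac_of_bound hab hg h).continuousOn
    rwa [uIcc_of_le hab] at this
  have hmi : IntervalIntegrable (fun σ => M σ * ‖φ σ‖) volume a b :=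
    hM.mul_continuousOn (by rw [uIcc_of_le hab]; exact hc.norm)
  refine est2_of_int hab hM0 hM hc fun s hs τ hτ hst => ?_
  have hsub : Icc s τ ⊆ Icc a b := Icc_subset_Icc hs.1 hτ.2
  have hsub' : uIcc s τ ⊆ uIcc a b := by rwa [uIcc_of_le hst, uIcc_of_le hab]
  refine int_bound hst (hg.mono_set hsub') (hmi.mono_set hsub')
    (fun p hp q hq => h p (hsub hp) q (hsub hq)) ?_
  filter_upwards [hd] with t ht htm
  exact ht ⟨hs.1.trans_lt htm.1, htm.2.trans_le hτ.2⟩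

end EMHDAux
namespace EMHDAux

open Filter Topology

variable {T : ℝ} {B V Bt : ℝ → R3 → R3} {M : ℝ → ℝ}

/-- weight controlling speeds -/
def wt (V : ℝ → R3 → R3) (M : ℝ → ℝ) (x : R3) (σ : ℝ) : ℝ := 1 + M σ + ‖V σ x‖

/-- a Baire portion of the bad set, projected to the time axis. -/
structure Portion (T : ℝ) (B V Bt : ℝ → R3 → R3) (M : ℝ → ℝ) (x : R3) (N δ a b : ℝ)
    (K : Set ℝ) : Prop where
  ha : 0 < a
  hab : a < b
  hb : b < T
  hδ : 0 < δ
  hδ1 : δ ≤ 1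
  hN : 1 ≤ N
  hK : IsClosed K
  hKs : K ⊆ Icc a b
  good : ∀ τ ∈ Icc a b, τ ∉ K → ∀ y, ‖y - x‖ < δ → Good T B V M τ y
  nB : ∀ t ∈ K, ∀ y, ‖y - x‖ < δ → ‖B t y‖ ≤ N
  nL : ∀ t ∈ K, ∀ y, ‖y - x‖ < δ → ∀ z, ‖z - x‖ < δ → ‖B t y - B t z‖ ≤ N * ‖y - z‖
  nD : ∀ t ∈ K, ∀ y, ‖y - x‖ < δ → ‖Bt t y‖ ≤ N
  nl : ∀ t ∈ K, ∀ y, ‖y - x‖ < δ → ∀ z, ‖z - x‖ < δ → ∀ l ∈ Ioc (0:ℝ) 1,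
    ‖l • (B t z - B t y) - (B t (y + l • (z - y)) - B t y)‖ ≤ N * l * ‖z - y‖ ^ 2
  iM : ∫ σ in a..b, M σ ≤ 1 / 8
  iV : ∫ σ in a..b, ‖V σ x‖ ≤ δ / 8

variable {x : R3} {N δ a b : ℝ} {K : Set ℝ}

lemma Portion.sub (P : Portion T B V Bt M x N δ a b K) : Icc a b ⊆ Ioo 0 T :=
  fun _ ht => ⟨P.ha.trans_le ht.1, ht.2.trans_lt P.hb⟩

lemma Portion.sub' (P : Portion T B V Bt M x N δ a b K) : Icc a b ⊆ Ico 0 T :=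
  fun _ ht => Ioo_subset_Ico_self (P.sub ht)

lemma Flow.wt_ii (F : Flow T B V Bt M) (x : R3) {s τ : ℝ} (hs : s ∈ Ico 0 T) (hτ : τ ∈ Ico 0 T) :
    IntervalIntegrable (wt V M x) volume s τ :=
  ((intervalIntegrable_const).add (F.Mii hs hτ)).add (F.Vii x hs hτ).norm

lemma Flow.M_le_wt (F : Flow T B V Bt M) (x : R3) {s τ : ℝ} (hs : s ∈ Ico 0 T)
    (hτ : τ ∈ Ico 0 T) (hst : s ≤ τ) : ∫ σ in s..τ, M σ ≤ ∫ σ in s..τ, wt V M x σ := by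
  refine intervalIntegral.integral_mono_on hst (F.Mii hs hτ) (F.wt_ii x hs hτ) fun σ _ => ?_
  have := norm_nonneg (V σ x)
  unfold wt; linarith

lemma Flow.one_le_wt (F : Flow T B V Bt M) (x : R3) {s τ : ℝ} (hs : s ∈ Ico 0 T)
    (hτ : τ ∈ Ico 0 T) (hst : s ≤ τ) : τ - s ≤ ∫ σ in s..τ, wt V M x σ := by
  have h : ∫ σ in s..τ, (1:ℝ) ≤ ∫ σ in s..τ, wt V M x σ := by
    refine intervalIntegral.integral_mono_on hst intervalIntegrable_const (F.wt_ii x hs hτ)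
      fun σ _ => ?_
    have := norm_nonneg (V σ x)
    have := F.hM0 σ
    unfold wt; linarith
  simpa using h

lemma Flow.wt_nonneg (F : Flow T B V Bt M) (x : R3) (σ : ℝ) : 0 ≤ wt V M x σ := by
  have := norm_nonneg (V σ x)
  have := F.hM0 σ
  unfold wt; linarith

lemma Flow.wt_add (F : Flow T B V Bt M) (x : R3) {s r τ : ℝ} (hs : s ∈ Ico 0 T)
    (hr : r ∈ Ico 0 T) (hτ : τ ∈ Ico 0 T) :
    ∫ σ in s..τ, wt V M x σ = (∫ σ in s..r, wt V M x σ) + ∫ σ in r..τ, wt V M x σ :=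
  (intervalIntegral.integral_add_adjacent_intervals (F.wt_ii x hs hr) (F.wt_ii x hr hτ)).symm

lemma exp_sub_one_le {e : ℝ} (h0 : 0 ≤ e) (h1 : e ≤ 1 / 8) : Real.exp e - 1 ≤ 2 * e := by
  have h2 := Real.exp_bound_div_one_sub_of_interval h0 (by linarith : e < 1)
  have h3 : 1 / (1 - e) ≤ 1 + 2 * e := by
    rw [div_le_iff₀ (by linarith)]
    nlinarith
  linarith

/-- jump estimates -/
lemma Portion.est_le (P : Portion T B V Bt M x N δ a b K) (F : Flow T B V Bt M) {φ : ℝ → R3}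
    {p q D : ℝ} (hp : p ∈ Icc a b) (hq : q ∈ Icc a b) (h : Est M φ p q) (hD : ‖φ p‖ ≤ D) :
    ‖φ q - φ p‖ ≤ 2 * D * |∫ σ in p..q, M σ| ∧ ‖φ q‖ ≤ 2 * D := by
  have hD0 : 0 ≤ D := (norm_nonneg _).trans hD
  have ha : a ∈ Icc a b := ⟨le_rfl, P.hab.le⟩
  have hb : b ∈ Icc a b := ⟨P.hab.le, le_rfl⟩
  have h1 : |∫ σ in p..q, M σ| ≤ 1 / 8 :=
    (abs_int_le F.hM0 (F.Mii (P.sub' ha) (P.sub' hb)) hp hq).trans P.iM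
  have h2 := exp_sub_one_le (abs_nonneg _) h1
  have h0 := abs_nonneg (∫ σ in p..q, M σ)
  have h3 : ‖φ q - φ p‖ ≤ 2 * D * |∫ σ in p..q, M σ| := by
    refine h.trans ?_
    calc _ ≤ ‖φ p‖ * (2 * |∫ σ in p..q, M σ|) := mul_le_mul_of_nonneg_left h2 (norm_nonneg _)
      _ ≤ D * (2 * |∫ σ in p..q, M σ|) := mul_le_mul_of_nonneg_right hD (by positivity)
      _ = _ := by ring
  refine ⟨h3, ?_⟩
  have h4 : ‖φ q‖ ≤ ‖φ p‖ + ‖φ q - φ p‖ := by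
    have := norm_add_le (φ p) (φ q - φ p)
    simpa using this
  nlinarith

lemma Portion.gap (P : Portion T B V Bt M x N δ a b K) (F : Flow T B V Bt M) {Z : ℝ → R3}
    {s e : ℝ} (hs : s ∈ Icc a b) (he : e ∈ Icc a b) (hZ : Traj V Z s e)
    (hK : ∀ k ∈ K, k ∉ Ioo s e) (hZb : ∀ τ ∈ Icc s e, ‖Z τ - x‖ < δ) :
    ∀ p ∈ Icc s e, ∀ q ∈ Icc s e, Est M (fun τ => B τ (Z τ)) p q :=
  F.gap (P.sub' hs) (P.sub' he) hZ
    (fun τ hτ y hy => P.good τ ⟨hs.1.trans hτ.1.le, hτ.2.le.trans he.2⟩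
      (fun hk => hK τ hk hτ) y hy) hZb

lemma Portion.conf (P : Portion T B V Bt M x N δ a b K) (F : Flow T B V Bt M) {Z : ℝ → R3}
    {p q s : ℝ} (hp : p ∈ Icc a b) (hq : q ∈ Icc a b) (hZ : Traj V Z p q)
    (hs : s ∈ Icc p q) (hZs : ‖Z s - x‖ ≤ δ / 2) : ∀ τ ∈ Icc p q, ‖Z τ - x‖ < δ := by
  intro τ hτ
  have ha : a ∈ Icc a b := ⟨le_rfl, P.hab.le⟩
  have hb : b ∈ Icc a b := ⟨P.hab.le, le_rfl⟩
  have h1 : ∫ σ in p..q, M σ ≤ 1 / 8 := (le_abs_self _).trans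
    ((abs_int_le F.hM0 (F.Mii (P.sub' ha) (P.sub' hb)) hp hq).trans P.iM)
  have h2 : ∫ σ in p..q, ‖V σ x‖ ≤ δ / 8 := (le_abs_self _).trans
    ((abs_int_le (fun σ => norm_nonneg (V σ x))
      (F.Vii x (P.sub' ha) (P.sub' hb)).norm hp hq).trans P.iV)
  exact F.confine (P.sub' hp) (P.sub' hq) hZ P.hδ h1 h2 hs hτ hZs

lemma Portion.lemG (P : Portion T B V Bt M x N δ a b K) (F : Flow T B V Bt M) {y : R3}
    (hy : ‖y - x‖ ≤ δ / 2) {u v : ℝ} (hu : u ∈ K) (hv : v ∈ K) (huv : u ≤ v) :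
    ‖B v y - B u y‖ ≤ (3 * N + 1) * ∫ σ in u..v, wt V M x σ := by
  have hδ := P.hδ
  have hN := P.hN
  have hyδ : ‖y - x‖ < δ := by linarith
  have hua := P.hKs hu
  have hva := P.hKs hv
  have huT := P.sub' hua
  have hvT := P.sub' hva
  have hsub : Icc u v ⊆ Ico 0 T := fun t ht => P.sub' ⟨hua.1.trans ht.1, ht.2.trans hva.2⟩
  have hsub2 : Icc u v ⊆ Icc a b := fun t ht => ⟨hua.1.trans ht.1, ht.2.trans hva.2⟩
  set A : Set ℝ := {w | w ∈ Icc u v ∩ K ∧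
    ‖B w y - B u y‖ ≤ (3 * N + 1) * ∫ σ in u..w, wt V M x σ} with hA
  have hAc : IsCompact A := by
    have hK2 : IsCompact (Icc u v ∩ K) := isCompact_Icc.inter_right P.hK
    have hc1 : ContinuousOn (fun w => ‖B w y - B u y‖) (Icc u v ∩ K) :=
      (((F.hBc y).mono (inter_subset_left.trans hsub)).sub continuousOn_const).norm
    have hc2 : ContinuousOn (fun w => (3 * N + 1) * ∫ σ in u..w, wt V M x σ) (Icc u v ∩ K) := by
      have := ((F.wt_ii x huT hvT).absolutelyContinuousOnInterval_intervalIntegral (c := u)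
        (by simp)).continuousOn
      rw [uIcc_of_le huv] at this
      exact continuousOn_const.mul (this.mono inter_subset_left)
    have : IsClosed A := hK2.isClosed.isClosed_le hc1 hc2
    exact hK2.of_isClosed_subset this (fun w hw => hw.1)
  have hAu : u ∈ A := ⟨⟨⟨le_rfl, huv⟩, hu⟩, by simp⟩
  obtain ⟨w, hw, hwmax⟩ := hAc.exists_isGreatest ⟨u, hAu⟩
  obtain ⟨⟨hwm, hwK⟩, hwb⟩ := hw
  have hwT := hsub hwm
  -- it suffices to advance
  have adv : ∀ w' ∈ Icc u v, w' ∈ K → w < w' →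
      ¬ ‖B w' y - B w y‖ ≤ (3 * N + 1) * ∫ σ in w..w', wt V M x σ := by
    intro w' hw' hK' hlt hle
    refine absurd (hwmax (a := w') ⟨⟨hw', hK'⟩, ?_⟩) (not_le.2 hlt)
    rw [F.wt_add x huT hwT (hsub hw'), mul_add]
    calc _ = ‖(B w y - B u y) + (B w' y - B w y)‖ := by congr 1; abel
      _ ≤ _ := (norm_add_le _ _).trans (add_le_add hwb hle)
  rcases eq_or_lt_of_le hwm.2 with hwv | hwv
  · rw [← hwv]; exact hwb
  exfalso
  -- derivative step
  have hder := F.hBd w (P.sub (hsub2 hwm)) y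
  have hnD := P.nD w hwK y hyδ
  have hev : ∀ᶠ r in 𝓝[>] w, ‖B r y - B w y‖ ≤ (N + 1) * (r - w) := by
    have h1 := hder.hasFDerivAt.isLittleO.def (c := 1) one_pos
    have h2 := nhdsWithin_le_nhds (s := Ioi w) h1
    filter_upwards [h2, self_mem_nhdsWithin] with r hr hr0
    have hr0' : 0 < r - w := sub_pos.2 hr0
    rw [one_mul, Real.norm_of_nonneg hr0'.le] at hr
    have h3 : ‖B r y - B w y‖ ≤ ‖B r y - B w y - (r - w) • Bt w y‖ + ‖(r - w) • Bt w y‖ := by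
      have := norm_add_le (B r y - B w y - (r - w) • Bt w y) ((r - w) • Bt w y)
      simpa using this
    rw [norm_smul, Real.norm_of_nonneg hr0'.le] at h3
    have hr' : ‖B r y - B w y - (r - w) • Bt w y‖ ≤ r - w := by simpa using hr
    nlinarith
  obtain ⟨e, he, hev⟩ := mem_nhdsGT_iff_exists_Ioc_subset.1 hev
  -- e > w
  by_cases hcase : ∃ r ∈ K, r ∈ Ioc w (min e v)
  · obtain ⟨r, hrK, hr⟩ := hcase
    have hre : r ∈ Ioc w e := ⟨hr.1, hr.2.trans (min_le_left _ _)⟩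
    have hrm : r ∈ Icc u v := ⟨hwm.1.trans hr.1.le, hr.2.trans (min_le_right _ _)⟩
    refine adv r hrm hrK hr.1 ((hev hre).trans ?_)
    have h1 := F.one_le_wt x hwT (hsub hrm) hr.1.le
    have h2 : 0 ≤ r - w := by linarith [hr.1]
    nlinarith
  · push Not at hcase
    have hnon : (K ∩ Icc (min e v) v).Nonempty := ⟨v, hv, min_le_right _ _, le_rfl⟩
    obtain ⟨w', ⟨hw'K, hw'm⟩, hw'min⟩ :=
      (isCompact_Icc.inter_left P.hK).exists_isLeast hnon
    have hww' : w < w' := lt_of_lt_of_le (lt_min he hwv) hw'm.1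
    have hw'uv : w' ∈ Icc u v := ⟨hwm.1.trans hww'.le, hw'm.2⟩
    have hno : ∀ k ∈ K, k ∉ Ioo w w' := by
      intro k hk hk2
      rcases le_total k (min e v) with h | h
      · exact hcase k hk ⟨hk2.1, h⟩
      · exact absurd (hw'min ⟨hk, h, hk2.2.le.trans hw'm.2⟩) (not_le.2 hk2.2)
    have ha : a ∈ Icc a b := ⟨le_rfl, P.hab.le⟩
    have hb : b ∈ Icc a b := ⟨P.hab.le, le_rfl⟩
    have hiM : ∫ σ in w..w', M σ ≤ 1 / 8 := (le_abs_self _).trans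
      ((abs_int_le F.hM0 (F.Mii (P.sub' ha) (P.sub' hb)) (hsub2 hwm) (hsub2 hw'uv)).trans P.iM)
    obtain ⟨Z, hZ, hZw⟩ := F.exists_traj hwT (hsub hw'uv) (by linarith)
      (s := w) ⟨le_rfl, hww'.le⟩ y
    have hc := P.conf F (hsub2 hwm) (hsub2 hw'uv) hZ (s := w) ⟨le_rfl, hww'.le⟩ (by rw [hZw]; exact hy)
    have hE := P.gap F (hsub2 hwm) (hsub2 hw'uv) hZ hno hc w ⟨le_rfl, hww'.le⟩ w' ⟨hww'.le, le_rfl⟩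
    have h1 := (P.est_le F (hsub2 hwm) (hsub2 hw'uv) hE (D := N)
      (P.nB w hwK _ (hc w ⟨le_rfl, hww'.le⟩))).1
    have h2 := P.nL w' hw'K y hyδ (Z w') (hc w' ⟨hww'.le, le_rfl⟩)
    have h3 := F.speed hwT (hsub hw'uv) hZ (fun σ hσ => (hc σ hσ).le.trans P.hδ1)
      (s := w) ⟨le_rfl, hww'.le⟩ (τ := w') ⟨hww'.le, le_rfl⟩
    change _ ≤ |∫ σ in w..w', wt V M x σ| at h3
    have h4 := F.M_le_wt x hwT (hsub hw'uv) hww'.le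
    have h5 : 0 ≤ ∫ σ in w..w', wt V M x σ :=
      intervalIntegral.integral_nonneg hww'.le (fun _ _ => F.wt_nonneg x _)
    rw [abs_of_nonneg h5, hZw, norm_sub_rev] at h3
    rw [abs_of_nonneg (intervalIntegral.integral_nonneg hww'.le (fun _ _ => F.hM0 _))] at h1
    simp only [hZw] at h1
    refine adv w' hw'uv hw'K hww' ?_
    calc _ = ‖(B w' y - B w' (Z w')) + (B w' (Z w') - B w y)‖ := by congr 1; abel
      _ ≤ _ := norm_add_le _ _
      _ ≤ N * (∫ σ in w..w', wt V M x σ) + 2 * N * ∫ σ in w..w', wt V M x σ := by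
        gcongr
        · exact h2.trans (mul_le_mul_of_nonneg_left h3 (by linarith))
        · exact h1.trans (mul_le_mul_of_nonneg_left h4 (by linarith))
      _ ≤ _ := by nlinarith

lemma Portion.phi_le (P : Portion T B V Bt M x N δ a b K) (F : Flow T B V Bt M) {Z : ℝ → R3}
    {p q : ℝ} (hp : p ∈ Icc a b) (hq : q ∈ K) (hZ : Traj V Z p q)
    (hZb : ∀ τ ∈ Icc p q, ‖Z τ - x‖ < δ) : ∀ τ ∈ Icc p q, ‖B τ (Z τ)‖ ≤ 2 * N := by
  intro τ hτ
  obtain ⟨k, ⟨hkK, hk⟩, hmin⟩ := (isCompact_Icc.inter_left P.hK).exists_isLeast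
    (⟨q, hq, hτ.2, le_rfl⟩ : (K ∩ Icc τ q).Nonempty)
  have hτa : τ ∈ Icc a b := ⟨hp.1.trans hτ.1, hτ.2.trans (P.hKs hq).2⟩
  have hE := P.gap F hτa (P.hKs hkK) (hZ.mono hτ.1 hk.2)
    (fun k' hk' hm => absurd (hmin ⟨hk', hm.1.le, hm.2.le.trans hk.2⟩) (not_le.2 hm.2))
    (fun σ hσ => hZb σ ⟨hτ.1.trans hσ.1, hσ.2.trans hk.2⟩)
    k ⟨hk.1, le_rfl⟩ τ ⟨le_rfl, hk.1⟩
  exact (P.est_le F (P.hKs hkK) hτa hE (P.nB k hkK _ (hZb k ⟨hτ.1.trans hk.1, hk.2⟩))).2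

lemma Portion.lemH (P : Portion T B V Bt M x N δ a b K) (F : Flow T B V Bt M) {Z : ℝ → R3}
    {p q : ℝ} (hp : p ∈ Icc a b) (hq : q ∈ K) (hZ : Traj V Z p q)
    (hZb : ∀ τ ∈ Icc p q, ‖Z τ - x‖ ≤ δ / 2) :
    ∀ s ∈ Icc p q, ∀ τ ∈ Icc p q, s ≤ τ →
      ‖B τ (Z τ) - B s (Z s)‖ ≤ (4 * N + 1) * ∫ σ in s..τ, wt V M x σ := by
  have hδ := P.hδ
  have hN := P.hN
  have hZb' : ∀ τ ∈ Icc p q, ‖Z τ - x‖ < δ := fun τ hτ => by have := hZb τ hτ; linarith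
  have hb := P.phi_le F hp hq hZ hZb'
  have hqa := P.hKs hq
  have hsub2 : Icc p q ⊆ Icc a b := fun t ht => ⟨hp.1.trans ht.1, ht.2.trans hqa.2⟩
  -- a gap piece
  have piece : ∀ s ∈ Icc p q, ∀ τ ∈ Icc p q, s ≤ τ → (∀ k ∈ K, k ∉ Ioo s τ) →
      ‖B τ (Z τ) - B s (Z s)‖ ≤ (4 * N + 1) * ∫ σ in s..τ, wt V M x σ := by
    intro s hs τ hτ hst hno
    have hE := P.gap F (hsub2 hs) (hsub2 hτ) (hZ.mono hs.1 hτ.2) hno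
      (fun σ hσ => hZb' σ ⟨hs.1.trans hσ.1, hσ.2.trans hτ.2⟩) s ⟨le_rfl, hst⟩ τ ⟨hst, le_rfl⟩
    have h1 := (P.est_le F (hsub2 hs) (hsub2 hτ) hE (hb s hs)).1
    rw [abs_of_nonneg (intervalIntegral.integral_nonneg hst (fun _ _ => F.hM0 _))] at h1
    have h4 := F.M_le_wt x (P.sub' (hsub2 hs)) (P.sub' (hsub2 hτ)) hst
    have h5 : 0 ≤ ∫ σ in s..τ, wt V M x σ :=
      intervalIntegral.integral_nonneg hst (fun _ _ => F.wt_nonneg x _)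
    refine h1.trans ?_
    nlinarith
  intro s hs τ hτ hst
  by_cases hne : (K ∩ Icc s τ).Nonempty
  · have hcomp : IsCompact (K ∩ Icc s τ) := isCompact_Icc.inter_left P.hK
    obtain ⟨l, ⟨hlK, hl⟩, hlmin⟩ := hcomp.exists_isLeast hne
    obtain ⟨m, ⟨hmK, hm⟩, hmmax⟩ := hcomp.exists_isGreatest hne
    have hlm : l ≤ m := hlmin ⟨hmK, hm⟩
    have hlpq : l ∈ Icc p q := ⟨hs.1.trans hl.1, hl.2.trans hτ.2⟩
    have hmpq : m ∈ Icc p q := ⟨hs.1.trans hm.1, hm.2.trans hτ.2⟩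
    have g1 := piece s hs l hlpq hl.1
      (fun k hk hkm => absurd (hlmin ⟨hk, hkm.1.le, hkm.2.le.trans hl.2⟩) (not_le.2 hkm.2))
    have g3 := piece m hmpq τ hτ hm.2
      (fun k hk hkm => absurd (hmmax ⟨hk, hm.1.trans hkm.1.le, hkm.2.le⟩) (not_le.2 hkm.1))
    have lT := P.sub' (hsub2 hlpq)
    have mT := P.sub' (hsub2 hmpq)
    have sT := P.sub' (hsub2 hs)
    have τT := P.sub' (hsub2 hτ)
    have h5 : 0 ≤ ∫ σ in l..m, wt V M x σ :=
      intervalIntegral.integral_nonneg hlm (fun _ _ => F.wt_nonneg x _)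
    have sp := F.speed (P.sub' hp) (P.sub' hqa) hZ (fun σ hσ => (hZb' σ hσ).le.trans P.hδ1) hlpq hmpq
    change _ ≤ |∫ σ in l..m, wt V M x σ| at sp
    rw [abs_of_nonneg h5] at sp
    have g2a := P.nL m hmK (Z m) (hZb' m hmpq) (Z l) (hZb' l hlpq)
    have g2b := P.lemG F (hZb l hlpq) hlK hmK hlm
    have g2 : ‖B m (Z m) - B l (Z l)‖ ≤ (4 * N + 1) * ∫ σ in l..m, wt V M x σ := by
      calc _ = ‖(B m (Z m) - B m (Z l)) + (B m (Z l) - B l (Z l))‖ := by congr 1; abel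
        _ ≤ _ := norm_add_le _ _
        _ ≤ N * (∫ σ in l..m, wt V M x σ) + (3 * N + 1) * ∫ σ in l..m, wt V M x σ := by
          gcongr
          exact g2a.trans (mul_le_mul_of_nonneg_left sp (by linarith))
        _ = _ := by ring
    rw [F.wt_add x sT lT τT, F.wt_add x lT mT τT, mul_add, mul_add]
    calc _ = ‖(B l (Z l) - B s (Z s)) + ((B m (Z m) - B l (Z l)) + (B τ (Z τ) - B m (Z m)))‖ := by
          congr 1; abel
      _ ≤ _ := (norm_add_le _ _).trans (add_le_add g1
        ((norm_add_le _ _).trans (add_le_add g2 g3)))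
  · refine piece s hs τ hτ hst fun k hk hkm => hne ⟨k, hk, Ioo_subset_Icc_self hkm⟩

end EMHDAux
namespace EMHDAux

open Filter Topology

variable {T : ℝ} {B V Bt : ℝ → R3 → R3} {M : ℝ → ℝ}
variable {x : R3} {N δ a b : ℝ} {K : Set ℝ}

lemma slope_lim {E : Type*} [NormedAddCommGroup E] [NormedSpace ℝ E] {f : ℝ → E} {d : E} {t : ℝ}
    (h : HasDerivAt f d t) {l : Filter ℝ} (hl : l ≤ 𝓝[≠] t) :
    Tendsto (fun s => (s - t)⁻¹ • (f s - f t)) l (𝓝 d) :=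
  (hasDerivAt_iff_tendsto_slope.1 h).mono_left hl

/-- chain rule along an accumulation point of `K`. -/
lemma Portion.chainK (P : Portion T B V Bt M x N δ a b K) {Z : ℝ → R3} {t : ℝ} (htK : t ∈ K)
    {β ζ d : R3} {L : R3 →L[ℝ] R3} (hacc : (𝓝[K ∩ Ioi t] t).NeBot)
    (hZt : ‖Z t - x‖ < δ) (hZ : HasDerivAt Z ζ t) (hφ : HasDerivAt (fun τ => B τ (Z τ)) d t)
    (hBc : ∀ y, ContinuousAt (fun τ => B τ y) t) (hβ : HasDerivAt (fun τ => B τ (Z t)) β t)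
    (hL : HasFDerivAt (B t) L (Z t)) : d = β + L ζ := by
  set l := 𝓝[K ∩ Ioi t] t with hl
  set p := Z t with hp
  have hN : 0 ≤ N := zero_le_one.trans P.hN
  have hlne : l ≤ 𝓝[≠] t := nhdsWithin_mono t (fun s hs => ne_of_gt hs.2)
  have hlt : l ≤ 𝓝 t := nhdsWithin_le_nhds
  have hmem : ∀ᶠ s in l, s ∈ K ∩ Ioi t := self_mem_nhdsWithin
  have s1 := slope_lim hφ hlne
  have s2 := slope_lim hβ hlne
  have s3 := slope_lim hZ hlne
  have hZc : ∀ᶠ s in l, ‖Z s - x‖ < δ := by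
    have : ContinuousAt (fun s => ‖Z s - x‖) t := (hZ.continuousAt.sub continuousAt_const).norm
    exact hlt (this.eventually_lt continuousAt_const hZt)
  have hpc : ∀ᶠ s in l, ‖p + (s - t) • ζ - x‖ < δ := by
    have : ContinuousAt (fun s : ℝ => ‖p + (s - t) • ζ - x‖) t := by fun_prop
    exact hlt (this.eventually_lt continuousAt_const (by simpa using hZt))
  have r1 : Tendsto (fun s => (s - t)⁻¹ • (B s (Z s) - B s (p + (s - t) • ζ))) l (𝓝 0) := by
    have h0 : Tendsto (fun s => N * ‖(s - t)⁻¹ • (Z s - Z t) - ζ‖) l (𝓝 0) := by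
      have := ((s3.sub_const ζ).norm).const_mul N
      simpa using this
    refine squeeze_zero_norm' ?_ h0
    filter_upwards [hmem, hZc, hpc] with s hs h1 h2
    have hpos : 0 < s - t := sub_pos.2 hs.2
    have h3 := P.nL s hs.1 _ h1 _ h2
    rw [norm_smul, Real.norm_of_nonneg (inv_nonneg.2 hpos.le)]
    have h4 : (s - t)⁻¹ • (Z s - Z t) - ζ = (s - t)⁻¹ • (Z s - (p + (s - t) • ζ)) := by
      rw [← sub_sub, smul_sub _ (Z s - p), smul_smul, inv_mul_cancel₀ hpos.ne', one_smul]
    rw [h4, norm_smul, Real.norm_of_nonneg (inv_nonneg.2 hpos.le)]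
    calc _ ≤ (s - t)⁻¹ * (N * ‖Z s - (p + (s - t) • ζ)‖) :=
          mul_le_mul_of_nonneg_left h3 (inv_nonneg.2 hpos.le)
      _ = _ := by ring
  -- the bound for fixed r
  have key : ∀ᶠ r : ℝ in 𝓝[>] 0,
      ‖d - 0 - β - r⁻¹ • (B t (p + r • ζ) - B t p)‖ ≤ N * r * ‖ζ‖ ^ 2 := by
    have hc : ContinuousAt (fun r : ℝ => ‖p + r • ζ - x‖) 0 := by fun_prop
    have he : ∀ᶠ r : ℝ in 𝓝[>] 0, ‖p + r • ζ - x‖ < δ :=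
      nhdsWithin_le_nhds (hc.eventually_lt continuousAt_const (by simpa using hZt))
    filter_upwards [he, self_mem_nhdsWithin] with r hr hr0
    have hr0 : 0 < r := hr0
    have lim : Tendsto (fun s => (s - t)⁻¹ • (B s (Z s) - B t (Z t)) -
        (s - t)⁻¹ • (B s (Z s) - B s (p + (s - t) • ζ)) - (s - t)⁻¹ • (B s p - B t p) -
        r⁻¹ • (B s (p + r • ζ) - B s p)) l (𝓝 (d - 0 - β - r⁻¹ • (B t (p + r • ζ) - B t p))) := by
      refine ((s1.sub r1).sub s2).sub (Tendsto.const_smul ?_ r⁻¹)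
      exact ((hBc _).tendsto.mono_left hlt).sub ((hBc _).tendsto.mono_left hlt)
    refine le_of_tendsto lim.norm ?_
    have hsr : ∀ᶠ s in l, s < t + r := hlt (eventually_lt_nhds (by linarith))
    filter_upwards [hmem, hsr] with s hs hsr
    have hpos : 0 < s - t := sub_pos.2 hs.2
    have hb := P.nl s hs.1 p hZt (p + r • ζ) hr ((s - t) / r)
      ⟨by positivity, by rw [div_le_one hr0]; linarith⟩
    have e1 : p + ((s - t) / r) • (p + r • ζ - p) = p + (s - t) • ζ := by
      rw [add_sub_cancel_left, smul_smul, div_mul_cancel₀ _ hr0.ne']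
    rw [e1, add_sub_cancel_left, norm_smul, Real.norm_of_nonneg hr0.le] at hb
    have e2 : (s - t)⁻¹ • (B s (Z s) - B t (Z t)) -
        (s - t)⁻¹ • (B s (Z s) - B s (p + (s - t) • ζ)) - (s - t)⁻¹ • (B s p - B t p) -
        r⁻¹ • (B s (p + r • ζ) - B s p) = -((s - t)⁻¹ • (((s - t) / r) • (B s (p + r • ζ) - B s p)
          - (B s (p + (s - t) • ζ) - B s p))) := by
      have e3 : r⁻¹ • (B s (p + r • ζ) - B s p) =
          (s - t)⁻¹ • ((s - t) / r) • (B s (p + r • ζ) - B s p) := by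
        rw [smul_smul]; congr 1; field_simp
      rw [e3, ← smul_sub, ← smul_sub, ← smul_sub, ← smul_neg]
      congr 1
      rw [← hp]; abel
    rw [e2, norm_neg, norm_smul, Real.norm_of_nonneg (inv_nonneg.2 hpos.le)]
    calc _ ≤ (s - t)⁻¹ * (N * ((s - t) / r) * (r * ‖ζ‖) ^ 2) :=
          mul_le_mul_of_nonneg_left hb (inv_nonneg.2 hpos.le)
      _ = _ := by field_simp
  have lim2 : Tendsto (fun r : ℝ => r⁻¹ • (B t (p + r • ζ) - B t p)) (𝓝[>] 0) (𝓝 (L ζ)) := by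
    have h1 : HasDerivAt (fun r : ℝ => B t (p + r • ζ)) (L ζ) 0 := by
      have h2 : HasDerivAt (fun r : ℝ => p + r • ζ) ζ 0 := by
        simpa using ((hasDerivAt_id (0:ℝ)).smul_const ζ).const_add p
      have h3 : HasFDerivAt (B t) L ((fun r : ℝ => p + r • ζ) 0) := by simpa using hL
      exact h3.comp_hasDerivAt (0:ℝ) h2
    have := slope_lim h1 (l := 𝓝[>] 0) (nhdsWithin_mono _ (fun s hs => ne_of_gt hs))
    simpa using this
  have lim3 : Tendsto (fun r : ℝ => N * r * ‖ζ‖ ^ 2) (𝓝[>] 0) (𝓝 0) := by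
    have : ContinuousAt (fun r : ℝ => N * r * ‖ζ‖ ^ 2) 0 := by fun_prop
    have h := this.tendsto
    simp only [mul_zero, zero_mul] at h
    exact h.mono_left nhdsWithin_le_nhds
  have fin := le_of_tendsto_of_tendsto (tendsto_const_nhds.sub lim2).norm lim3 key
  have := norm_le_zero_iff.1 fin
  rw [sub_zero, sub_sub, sub_eq_zero] at this
  exact this

lemma Portion.lemI (P : Portion T B V Bt M x N δ a b K) (F : Flow T B V Bt M) {Z : ℝ → R3}
    {p q : ℝ} (hp : p ∈ Icc a b) (hq : q ∈ Icc a b) (hpq : p ≤ q) (hZ : Traj V Z p q)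
    (hZb : ∀ τ ∈ Icc p q, ‖Z τ - x‖ < δ) :
    ∀ᵐ t, t ∈ Ioo p q → ∀ d, HasDerivAt (fun τ => B τ (Z τ)) d t → ‖d‖ ≤ M t * ‖B t (Z t)‖ := by
  have hsub2 : Icc p q ⊆ Icc a b := fun t ht => ⟨hp.1.trans ht.1, ht.2.trans hq.2⟩
  have hcount : ∀ᵐ t, ¬ (t ∈ K ∧ 𝓝[K ∩ Ioi t] t = ⊥) := by
    have := (countable_setOfPred_isolated_right_within (s := K)).measure_zero (volume : Measure ℝ)
    exact measure_eq_zero_iff_ae_notMem.1 this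
  have hMd := (F.Mii (P.sub' hp) (P.sub' hq)).ae_hasDerivAt_integral
  have hVi := F.comp_ii (P.sub' hp) (P.sub' hq) hpq hZ.1
  have hVd := hVi.ae_hasDerivAt_integral
  filter_upwards [hcount, hMd, hVd] with t h1 h2 h3 ht d hd
  have htI : t ∈ Icc p q := Ioo_subset_Icc_self ht
  have htu : t ∈ uIcc p q := by rwa [uIcc_of_le hpq]
  have htab := hsub2 htI
  have htT := P.sub htab
  by_cases hK : t ∈ K
  · have hacc : (𝓝[K ∩ Ioi t] t).NeBot := ⟨fun h => h1 ⟨hK, h⟩⟩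
    have hZd : HasDerivAt Z (V t (Z t)) t := by
      have h4 := (h3 htu p (by simp)).const_add (Z p)
      refine h4.congr_of_eventuallyEq ?_
      filter_upwards [Ioo_mem_nhds ht.1 ht.2] with s hs
      rw [← hZ.2 p ⟨le_rfl, hpq⟩ s (Ioo_subset_Icc_self hs)]; abel
    have hL : HasFDerivAt (B t) (fderiv ℝ (B t) (Z t)) (Z t) :=
      ((F.hB2 t (Ioo_subset_Ico_self htT)).differentiable (by norm_num) _).hasFDerivAt
    have := P.chainK hK hacc (hZb t htI) hZd hd
      (fun y => (F.hBd t htT y).continuousAt) (F.hBd t htT (Z t)) hL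
    rw [this]
    exact F.hpde t htT (Z t)
  · -- gap point
    have hopen : Kᶜ ∈ 𝓝 t := P.hK.isOpen_compl.mem_nhds hK
    obtain ⟨e, he, hsube⟩ := mem_nhdsGT_iff_exists_Ioc_subset.1
      (nhdsWithin_le_nhds (s := Ioi t) (inter_mem hopen (Ioo_mem_nhds ht.1 ht.2)))
    have heI : e ∈ Icc p q := Ioo_subset_Icc_self (hsube ⟨he, le_rfl⟩).2
    have hE := P.gap F htab (hsub2 heI) (hZ.mono htI.1 heI.2)
      (fun k hk hkm => (hsube ⟨hkm.1, hkm.2.le⟩).1 hk)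
      (fun σ hσ => hZb σ ⟨htI.1.trans hσ.1, hσ.2.trans heI.2⟩)
    have hl : 𝓝[>] t ≤ 𝓝[≠] t := nhdsWithin_mono _ (fun s hs => ne_of_gt hs)
    have s1 := (slope_lim hd hl).norm
    have s2 := h2 htu t htu
    have s3 := (slope_lim s2.exp hl).const_mul ‖B t (Z t)‖
    simp only [intervalIntegral.integral_same, Real.exp_zero, one_mul] at s3
    rw [mul_comm (M t)]
    refine le_of_tendsto_of_tendsto s1 s3 ?_
    filter_upwards [Ioc_mem_nhdsGT he] with s hs
    have hest := hE t ⟨le_rfl, le_of_lt he⟩ s ⟨hs.1.le, hs.2⟩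
    unfold Est at hest
    have hpos : 0 < s - t := sub_pos.2 hs.1
    rw [abs_of_nonneg (intervalIntegral.integral_nonneg hs.1.le (fun _ _ => F.hM0 _))] at hest
    rw [norm_smul, Real.norm_of_nonneg (inv_nonneg.2 hpos.le), smul_eq_mul]
    calc _ ≤ (s - t)⁻¹ * _ := mul_le_mul_of_nonneg_left hest (inv_nonneg.2 hpos.le)
      _ = _ := by ring

/-- estimates for trajectories in the half ball -/
lemma Portion.est2 (P : Portion T B V Bt M x N δ a b K) (F : Flow T B V Bt M) {Z : ℝ → R3}
    {p q : ℝ} (hp : p ∈ Icc a b) (hq : q ∈ Icc a b) (hpq : p ≤ q) (hZ : Traj V Z p q)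
    (hZb : ∀ τ ∈ Icc p q, ‖Z τ - x‖ ≤ δ / 2) :
    Est2 M (fun τ => B τ (Z τ)) p q := by
  have hδ := P.hδ
  have hZb' : ∀ τ ∈ Icc p q, ‖Z τ - x‖ < δ := fun τ hτ => by have := hZb τ hτ; linarith
  by_cases hne : (K ∩ Icc p q).Nonempty
  · have hcomp : IsCompact (K ∩ Icc p q) := isCompact_Icc.inter_left P.hK
    obtain ⟨m, ⟨hmK, hm⟩, hmmax⟩ := hcomp.exists_isGreatest hne
    have hma := P.hKs hmK
    have hZ1 := hZ.mono (le_refl p) hm.2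
    have hZ2 := hZ.mono hm.1 (le_refl q)
    have hs1 : Icc p m ⊆ Icc p q := Icc_subset_Icc le_rfl hm.2
    have hs2 : Icc m q ⊆ Icc p q := Icc_subset_Icc hm.1 le_rfl
    have g := P.gap F hma hq hZ2
      (fun k hk hkm => absurd (hmmax ⟨hk, hm.1.trans hkm.1.le, hkm.2.le⟩) (not_le.2 hkm.1))
      (fun σ hσ => hZb' σ (hs2 hσ))
    have h2 : Est2 M (fun τ => B τ (Z τ)) m q :=
      ⟨g m ⟨le_rfl, hm.2⟩ q ⟨hm.2, le_rfl⟩, g q ⟨hm.2, le_rfl⟩ m ⟨le_rfl, hm.2⟩⟩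
    refine F.est2_trans (P.sub' hp) (P.sub' hma) (P.sub' hq) hm.1 hm.2 ?_ h2
    refine est2_of_ac hm.1 F.hM0 (F.Mii (P.sub' hp) (P.sub' hma))
      ((F.wt_ii x (P.sub' hp) (P.sub' hma)).const_mul (4 * N + 1)) ?_
      (P.lemI F hp hma hm.1 hZ1 (fun σ hσ => hZb' σ (hs1 hσ)))
    intro s hs τ hτ hst
    rw [intervalIntegral.integral_const_mul]
    exact P.lemH F hp hmK hZ1 (fun σ hσ => hZb σ (hs1 hσ)) s hs τ hτ hst
  · have g := P.gap F hp hq hZ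
      (fun k hk hkm => hne ⟨k, hk, Ioo_subset_Icc_self hkm⟩) hZb'
    exact ⟨g p ⟨le_rfl, hpq⟩ q ⟨hpq, le_rfl⟩, g q ⟨hpq, le_rfl⟩ p ⟨le_rfl, hpq⟩⟩

end EMHDAux
namespace EMHDAux

open Filter Topology

variable {T : ℝ} {B V Bt : ℝ → R3 → R3} {M : ℝ → ℝ}

lemma isOpen_good : IsOpen {z : ℝ × R3 | Good T B V M z.1 z.2} := by
  rw [Metric.isOpen_iff]
  rintro ⟨t₀, x₀⟩ ⟨ε, hε, h⟩
  refine ⟨ε / 2, by positivity, ?_⟩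
  rintro ⟨t₁, x₁⟩ hz
  rw [Metric.mem_ball, Prod.dist_eq, max_lt_iff, Real.dist_eq, dist_eq_norm, abs_lt] at hz
  obtain ⟨⟨h1, h2⟩, h3⟩ := hz
  simp only at h1 h2 h3
  refine ⟨ε / 2, by positivity, fun p hp q hq hpq hp0 hqT Z hZ hZb => ?_⟩
  simp only at hp hq hZb
  refine h p ⟨by linarith [hp.1], by linarith [hp.2]⟩ q ⟨by linarith [hq.1], by linarith [hq.2]⟩
    hpq hp0 hqT Z hZ fun τ hτ => ?_
  calc ‖Z τ - x₀‖ = ‖(Z τ - x₁) + (x₁ - x₀)‖ := by congr 1; abel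
    _ ≤ _ := norm_add_le _ _
    _ < ε := by linarith [hZb τ hτ]

/-- uniform niceness at scale `1/(n+1)`. -/
def Nice (B Bt : ℝ → R3 → R3) (n : ℕ) (t : ℝ) (x : R3) : Prop :=
  ∀ y z : R3, ∀ l : ℝ, ‖y - x‖ < 1 / ((n:ℝ) + 1) → ‖z - x‖ < 1 / ((n:ℝ) + 1) → l ∈ Ioc (0:ℝ) 1 →
    ‖B t y‖ ≤ n ∧ ‖B t y - B t z‖ ≤ n * ‖y - z‖ ∧ ‖Bt t y‖ ≤ n ∧
    ‖l • (B t z - B t y) - (B t (y + l • (z - y)) - B t y)‖ ≤ n * l * ‖z - y‖ ^ 2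

lemma taylor_ball {f : R3 → R3} (hf : Differentiable ℝ f) {x : R3} {r C : ℝ} (hC : 0 ≤ C)
    (hL : ∀ y ∈ Metric.ball x r, ∀ z ∈ Metric.ball x r,
      ‖fderiv ℝ f y - fderiv ℝ f z‖ ≤ C * ‖y - z‖)
    {y z : R3} (hy : y ∈ Metric.ball x r) (hz : z ∈ Metric.ball x r) :
    ‖f z - f y - fderiv ℝ f y (z - y)‖ ≤ C * ‖z - y‖ ^ 2 := by
  have hconv : Convex ℝ (Metric.ball x r ∩ Metric.closedBall y ‖z - y‖) :=
    (convex_ball _ _).inter (convex_closedBall _ _)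
  have := hconv.norm_image_sub_le_of_norm_fderiv_le' (𝕜 := ℝ) (f := f) (φ := fderiv ℝ f y)
    (C := C * ‖z - y‖) (x := y) (y := z) (fun w _ => hf w) (fun w hw => by
      refine (hL w hw.1 y hy).trans ?_
      have := hw.2
      rw [Metric.mem_closedBall, dist_eq_norm] at this
      gcongr) ⟨hy, by simp⟩ ⟨hz, by simp [dist_eq_norm]⟩
  calc _ ≤ _ := this
    _ = _ := by ring

lemma Flow.exists_nice (F : Flow T B V Bt M) {t : ℝ} (ht : t ∈ Ioo 0 T) (x : R3) :
    ∃ n, Nice B Bt n t x := by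
  have hB2 := F.hB2 t (Ioo_subset_Ico_self ht)
  obtain ⟨C1, s1, hs1, hl1⟩ := ((hB2.of_le (m := 1) (by norm_num)).contDiffAt
    (x := x)).exists_lipschitzOnWith
  have hfd : ContDiff ℝ 1 (fderiv ℝ (B t)) := hB2.fderiv_right (by norm_num)
  obtain ⟨C2, s2, hs2, hl2⟩ := (hfd.contDiffAt (x := x)).exists_lipschitzOnWith
  have h3 : ∀ᶠ y in 𝓝 x, ‖B t y‖ < ‖B t x‖ + 1 :=
    (hB2.continuous.norm.continuousAt).eventually_lt continuousAt_const (by simp)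
  have h4 : ∀ᶠ y in 𝓝 x, ‖Bt t y‖ < ‖Bt t x‖ + 1 :=
    ((F.hBts t ht).norm.continuousAt).eventually_lt continuousAt_const (by simp)
  obtain ⟨r, hr, hball⟩ := Metric.mem_nhds_iff.1
    (inter_mem (inter_mem hs1 hs2) (inter_mem h3 h4))
  obtain ⟨n, hn⟩ := exists_nat_gt (1 / r + C1 + 2 * C2 + (‖B t x‖ + 1) + (‖Bt t x‖ + 1))
  have p1 : 0 < 1 / r := by positivity
  have p2 : (0:ℝ) ≤ C1 := C1.2
  have p3 : (0:ℝ) ≤ C2 := C2.2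
  have p4 := norm_nonneg (B t x)
  have p5 := norm_nonneg (Bt t x)
  have hrn : 1 / ((n:ℝ) + 1) ≤ r := by
    rw [div_le_iff₀ (by positivity)]
    have : 1 / r < n + 1 := by linarith
    rw [div_lt_iff₀ hr] at this
    linarith
  refine ⟨n, fun y z l hy hz hl => ?_⟩
  have hy' : y ∈ Metric.ball x r := by
    rw [Metric.mem_ball, dist_eq_norm]; linarith
  have hz' : z ∈ Metric.ball x r := by
    rw [Metric.mem_ball, dist_eq_norm]; linarith
  have by1 := hball hy'
  have bz1 := hball hz'
  refine ⟨?_, ?_, ?_, ?_⟩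
  · have : ‖B t y‖ < ‖B t x‖ + 1 := by1.2.1
    linarith
  · have := hl1.dist_le_mul y by1.1.1 z bz1.1.1
    rw [dist_eq_norm, dist_eq_norm] at this
    refine this.trans ?_
    gcongr
    linarith
  · have : ‖Bt t y‖ < ‖Bt t x‖ + 1 := by1.2.2
    linarith
  · have hL : ∀ y ∈ Metric.ball x r, ∀ z ∈ Metric.ball x r,
        ‖fderiv ℝ (B t) y - fderiv ℝ (B t) z‖ ≤ C2 * ‖y - z‖ := by
      intro y hy z hz
      have := hl2.dist_le_mul y (hball hy).1.2 z (hball hz).1.2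
      rwa [dist_eq_norm, dist_eq_norm] at this
    have hd : Differentiable ℝ (B t) := hB2.differentiable (by norm_num)
    have hw : y + l • (z - y) ∈ Metric.ball x r :=
      (convex_ball x r).add_smul_sub_mem hy' hz' ⟨hl.1.le, hl.2⟩
    have e1 := taylor_ball hd p3 hL hy' hz'
    have e2 := taylor_ball hd p3 hL hy' hw
    rw [add_sub_cancel_left, map_smul, norm_smul, Real.norm_of_nonneg hl.1.le] at e2
    set D := fderiv ℝ (B t) y (z - y)
    calc _ = ‖l • (B t z - B t y - D) - (B t (y + l • (z - y)) - B t y - l • D)‖ := by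
          congr 1; rw [smul_sub l (B t z - B t y)]; abel
      _ ≤ ‖l • (B t z - B t y - D)‖ + ‖B t (y + l • (z - y)) - B t y - l • D‖ := norm_sub_le _ _
      _ ≤ l * (C2 * ‖z - y‖ ^ 2) + C2 * (l * ‖z - y‖) ^ 2 := by
          rw [norm_smul, Real.norm_of_nonneg hl.1.le]
          gcongr
          exact hl.1.le
      _ ≤ (2 * C2) * l * ‖z - y‖ ^ 2 := by
          have h6 : l ^ 2 ≤ l := by nlinarith [hl.1, hl.2]
          have h7 : 0 ≤ C2 * ‖z - y‖ ^ 2 := by positivity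
          nlinarith
      _ ≤ _ := by
          have := hl.1.le
          gcongr
          linarith

lemma Flow.closed_nice (F : Flow T B V Bt M) {S : Set (ℝ × R3)} (hS : ∀ z ∈ S, z.1 ∈ Ioo 0 T)
    (n : ℕ) : IsClosed {s : S | Nice B Bt n s.1.1 s.1.2} := by
  have cB : ∀ y, Continuous (fun s : S => B s.1.1 y) := fun y =>
    (F.hBc y).comp_continuous (continuous_fst.comp continuous_subtype_val)
      (fun s => Ioo_subset_Ico_self (hS _ s.2))
  have cBt : ∀ y, Continuous (fun s : S => Bt s.1.1 y) := fun y =>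
    (F.hBtc y).comp_continuous (continuous_fst.comp continuous_subtype_val)
      (fun s => hS _ s.2)
  have cx : Continuous (fun s : S => s.1.2) := continuous_snd.comp continuous_subtype_val
  have op : ∀ y : R3, IsOpen {s : S | ‖y - s.1.2‖ < 1 / ((n:ℝ) + 1)} := fun y =>
    isOpen_lt (continuous_const.sub cx).norm continuous_const
  simp only [Nice, ofPred_forall]
  refine isClosed_iInter fun y => isClosed_iInter fun z => isClosed_iInter fun l => ?_
  have : IsClosed {s : S | ‖y - s.1.2‖ < 1 / ((n:ℝ) + 1) → ‖z - s.1.2‖ < 1 / ((n:ℝ) + 1) →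
      l ∈ Ioc (0:ℝ) 1 →
      ‖B s.1.1 y‖ ≤ n ∧ ‖B s.1.1 y - B s.1.1 z‖ ≤ n * ‖y - z‖ ∧ ‖Bt s.1.1 y‖ ≤ n ∧
      ‖l • (B s.1.1 z - B s.1.1 y) - (B s.1.1 (y + l • (z - y)) - B s.1.1 y)‖
        ≤ n * l * ‖z - y‖ ^ 2} := by
    refine isClosed_imp (op y) (isClosed_imp (op z) (isClosed_imp isOpen_const ?_))
    have c4 : IsClosed {s : S | ‖l • (B s.1.1 z - B s.1.1 y) -
        (B s.1.1 (y + l • (z - y)) - B s.1.1 y)‖ ≤ n * l * ‖z - y‖ ^ 2} :=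
      isClosed_le ((((cB z).sub (cB y)).const_smul l).sub ((cB _).sub (cB y))).norm
        continuous_const
    exact (isClosed_le (cB y).norm continuous_const).inter
      ((isClosed_le ((cB y).sub (cB z)).norm continuous_const).inter
      ((isClosed_le (cBt y).norm continuous_const).inter c4))
  simpa only [ofPred_forall] using this

theorem Flow.all_good (F : Flow T B V Bt M) : ∀ t ∈ Ioo 0 T, ∀ x, Good T B V M t x := by
  by_contra hcon
  push Not at hcon
  obtain ⟨t₀, ht₀, x₀, hx₀⟩ := hcon
  set S : Set (ℝ × R3) := {z | z.1 ∈ Ioo 0 T ∧ ¬ Good T B V M z.1 z.2} with hS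
  have hne : Nonempty S := ⟨⟨(t₀, x₀), ht₀, hx₀⟩⟩
  have hlc : IsLocallyClosed S := by
    have : S = (Prod.fst ⁻¹' Ioo 0 T) ∩ {z : ℝ × R3 | Good T B V M z.1 z.2}ᶜ := rfl
    rw [this]
    exact (isOpen_Ioo.preimage continuous_fst).isLocallyClosed.inter
      isOpen_good.isClosed_compl.isLocallyClosed
  have : LocallyCompactSpace S := hlc.locallyCompactSpace
  obtain ⟨n, ⟨⟨⟨ts, xs⟩, hzS⟩, hIntr⟩⟩ := nonempty_interior_of_iUnion_of_closed
    (fun n => F.closed_nice (S := S) (fun z hz => hz.1) n) (by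
      rw [eq_univ_iff_forall]
      intro s
      exact mem_iUnion.2 (F.exists_nice s.2.1 s.1.2))
  rw [mem_interior_iff_mem_nhds, Metric.mem_nhds_iff] at hIntr
  obtain ⟨ρ, hρ, hsubρ⟩ := hIntr
  have hnice : ∀ t x, (t, x) ∈ S → |t - ts| < ρ → ‖x - xs‖ < ρ → Nice B Bt n t x := by
    intro t x hS' h1 h2
    have := @hsubρ ⟨(t, x), hS'⟩ (by
      rw [Metric.mem_ball, Subtype.dist_eq, Prod.dist_eq, max_lt_iff, Real.dist_eq, dist_eq_norm]
      exact ⟨h1, h2⟩)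
    exact this
  obtain ⟨hts, hbad⟩ := hzS
  simp only at hts hbad
  have n0 : (0:ℝ) ≤ n := Nat.cast_nonneg n
  have hc0 : 0 < 1 / ((n:ℝ) + 1) := by positivity
  obtain ⟨δ, hδ, hδ1, hδρ, hδn⟩ : ∃ δ > 0, δ ≤ 1 ∧ δ < ρ ∧ 2 * δ ≤ 1 / ((n:ℝ) + 1) := by
    refine ⟨min 1 (min (ρ / 2) (1 / ((n:ℝ) + 1) / 2)), by positivity, min_le_left _ _, ?_, ?_⟩
    · have := (min_le_right 1 (min (ρ / 2) (1 / ((n:ℝ) + 1) / 2))).trans (min_le_left _ _)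
      linarith
    · have := (min_le_right 1 (min (ρ / 2) (1 / ((n:ℝ) + 1) / 2))).trans (min_le_right _ _)
      linarith
  obtain ⟨κ₀, hκ₀, hsm⟩ := F.small (α := ts / 2) (β := (ts + T) / 2) (w := ts)
    ⟨by linarith [hts.1], by linarith [hts.1, hts.2]⟩
    ⟨by linarith [hts.1, hts.2], by linarith [hts.2]⟩
    ⟨by linarith [hts.1], by linarith [hts.2]⟩ xs (ε := δ / 8) (by positivity)
  obtain ⟨κ, hκ, k1, k2, k3, k4⟩ : ∃ κ > 0, κ ≤ κ₀ ∧ κ < ρ ∧ κ ≤ ts / 2 ∧ κ ≤ (T - ts) / 2 := by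
    have q1 : 0 < ts / 2 := by linarith [hts.1]
    have q2 : 0 < (T - ts) / 2 := by linarith [hts.2]
    refine ⟨min (min κ₀ (ρ / 2)) (min (ts / 2) ((T - ts) / 2)), by positivity,
      (min_le_left _ _).trans (min_le_left _ _), ?_,
      (min_le_right _ _).trans (min_le_left _ _), (min_le_right _ _).trans (min_le_right _ _)⟩
    have := (min_le_left (min κ₀ (ρ / 2)) (min (ts / 2) ((T - ts) / 2))).trans (min_le_right _ _)
    linarith
  set a := ts - κ with ha
  set b := ts + κ with hb
  have hts1 := hts.1
  have hts2 := hts.2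
  have hIntr := hsm a ⟨by linarith, by linarith⟩ b ⟨by linarith, by linarith⟩ (by linarith)
    (by rw [ha, abs_le]; constructor <;> linarith) (by rw [hb, abs_le]; constructor <;> linarith)
  set Q : Set (ℝ × R3) := (Icc a b ×ˢ Metric.closedBall xs δ) ∩
    {z : ℝ × R3 | Good T B V M z.1 z.2}ᶜ with hQ
  have hQc : IsCompact Q :=
    (isCompact_Icc.prod (isCompact_closedBall xs δ)).inter_right isOpen_good.isClosed_compl
  have hKt : ∀ t ∈ Prod.fst '' Q, ∀ y z : R3, ∀ l : ℝ, ‖y - xs‖ < δ → ‖z - xs‖ < δ →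
      l ∈ Ioc (0:ℝ) 1 →
      ‖B t y‖ ≤ n ∧ ‖B t y - B t z‖ ≤ n * ‖y - z‖ ∧ ‖Bt t y‖ ≤ n ∧
      ‖l • (B t z - B t y) - (B t (y + l • (z - y)) - B t y)‖ ≤ n * l * ‖z - y‖ ^ 2 := by
    rintro _ ⟨⟨t, x'⟩, ⟨⟨hta, hx'⟩, hng⟩, rfl⟩ y z l hy hz hl
    simp only at hta hx' ⊢
    rw [Metric.mem_closedBall, dist_eq_norm] at hx'
    have hN := hnice t x' ⟨⟨by linarith [hta.1], by linarith [hta.2]⟩, hng⟩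
      (by rw [abs_lt]; constructor <;> linarith [hta.1, hta.2]) (by linarith)
    have tri : ∀ w : R3, ‖w - xs‖ < δ → ‖w - x'‖ < 1 / ((n:ℝ) + 1) := by
      intro w hw
      have : ‖w - x'‖ ≤ ‖w - xs‖ + ‖x' - xs‖ := by
        have := norm_sub_le (w - xs) (x' - xs)
        simpa using this
      linarith
    exact hN y z l (tri y hy) (tri z hz) hl
  have one_mem : (1:ℝ) ∈ Ioc (0:ℝ) 1 := ⟨one_pos, le_rfl⟩
  have P : Portion T B V Bt M xs (n + 1) δ a b (Prod.fst '' Q) :=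
    { ha := by linarith
      hab := by linarith
      hb := by linarith
      hδ := hδ
      hδ1 := hδ1
      hN := by linarith
      hK := (hQc.image continuous_fst).isClosed
      hKs := by rintro _ ⟨z, hz, rfl⟩; exact hz.1.1
      good := by
        intro τ hτ hnK y hy
        by_contra hg
        refine hnK ⟨(τ, y), ⟨⟨hτ, ?_⟩, hg⟩, rfl⟩
        rw [Metric.mem_closedBall, dist_eq_norm]; exact hy.le
      nB := fun t ht y hy => by
        have := (hKt t ht y y 1 hy hy one_mem).1
        linarith
      nL := fun t ht y hy z hz => by
        have := (hKt t ht y z 1 hy hz one_mem).2.1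
        have h2 := norm_nonneg (y - z)
        linarith
      nD := fun t ht y hy => by
        have := (hKt t ht y y 1 hy hy one_mem).2.2.1
        linarith
      nl := fun t ht y hy z hz l hl => by
        have := (hKt t ht y z l hy hz hl).2.2.2
        have h2 : 0 ≤ l * ‖z - y‖ ^ 2 := mul_nonneg hl.1.le (sq_nonneg _)
        nlinarith
      iM := hIntr.1.trans (by linarith)
      iV := hIntr.2 }
  refine hbad ⟨min κ (δ / 2), by positivity, fun p hp q hq hpq hp0 hqT Z hZ hZb => ?_⟩
  have m1 := min_le_left κ (δ / 2)
  have m2 := min_le_right κ (δ / 2)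
  exact P.est2 F ⟨by linarith [hp.1], by linarith [hp.2]⟩ ⟨by linarith [hq.1], by linarith [hq.2]⟩
    hpq hZ (fun τ hτ => (hZb τ hτ).le.trans m2)

theorem Flow.final (F : Flow T B V Bt M) {X : ℝ → R3} {t : ℝ} (ht : t ∈ Ioo 0 T)
    (hX : Traj V X 0 t) :
    ‖B 0 (X 0)‖ * Real.exp (-∫ τ in (0:ℝ)..t, M τ) ≤ ‖B t (X t)‖ ∧
      ‖B t (X t)‖ ≤ ‖B 0 (X 0)‖ * Real.exp (∫ τ in (0:ℝ)..t, M τ) := by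
  obtain ⟨C, hC⟩ := isCompact_Icc.exists_bound_of_continuousOn hX.1
  have h0T : (0:ℝ) ∈ Ico 0 T := ⟨le_rfl, ht.1.trans ht.2⟩
  have hE := F.gap (x := 0) (δ := C + 1) h0T (Ioo_subset_Ico_self ht) hX
    (fun τ hτ y _ => F.all_good τ ⟨hτ.1, hτ.2.trans ht.2⟩ y)
    (fun τ hτ => by have := hC τ hτ; rw [sub_zero]; linarith)
  have m0 : (0:ℝ) ∈ Icc 0 t := ⟨le_rfl, ht.1.le⟩
  have mt : t ∈ Icc 0 t := ⟨ht.1.le, le_rfl⟩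
  have e1 := (hE 0 m0 t mt).bound
  have e2 := (hE t mt 0 m0).bound
  rw [abs_int_symm] at e2
  rw [abs_of_nonneg (intervalIntegral.integral_nonneg ht.1.le (fun _ _ => F.hM0 _))] at e1 e2
  refine ⟨?_, e1⟩
  rw [Real.exp_neg, ← div_eq_mul_inv, div_le_iff₀ (Real.exp_pos _)]
  exact e2

end EMHDAux
namespace EMHDAux

open Filter Topology

/-- basis vectors -/
def eb (j : Fin 3) : R3 := EuclideanSpace.single j 1

/-- antisymmetric part of a matrix given by its columns -/
def c3 (u0 u1 u2 : R3) : R3 := toR3 ![u1 2 - u2 1, u2 0 - u0 2, u0 1 - u1 0]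

lemma toR3_apply (v : Fin 3 → ℝ) (i : Fin 3) : toR3 v i = v i := rfl

lemma c3_zero : c3 0 0 0 = 0 := by
  ext i; fin_cases i <;> simp [c3, toR3_apply]

lemma continuous_c3 : Continuous (fun u : R3 × R3 × R3 => c3 u.1 u.2.1 u.2.2) := by
  unfold c3 toR3
  refine (PiLp.continuous_toLp 2 _).comp ?_
  refine continuous_pi fun i => ?_
  fin_cases i <;> simp <;> fun_prop

/-- curl as a linear map of the derivative -/
def curlL : (R3 →L[ℝ] R3) →L[ℝ] R3 :=
  LinearMap.toContinuousLinearMap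
    { toFun := fun D => c3 (D (eb 0)) (D (eb 1)) (D (eb 2))
      map_add' := by
        intro D E; ext i; fin_cases i <;> simp [c3, toR3_apply] <;> ring
      map_smul' := by
        intro r D; ext i; fin_cases i <;> simp [c3, toR3_apply] <;> ring }

lemma curlL_apply (D : R3 →L[ℝ] R3) : curlL D = c3 (D (eb 0)) (D (eb 1)) (D (eb 2)) := rfl

lemma pd_comp {F : R3 → R3} {x : R3} (hF : DifferentiableAt ℝ F x) (i j : Fin 3) :
    pd j (fun y => F y i) x = fderiv ℝ F x (eb j) i := by
  unfold pd
  have h := ((EuclideanSpace.proj i : R3 →L[ℝ] ℝ).hasFDerivAt (x := F x)).comp x hF.hasFDerivAt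
  have h' : HasFDerivAt (fun y => F y i) ((EuclideanSpace.proj i : R3 →L[ℝ] ℝ).comp (fderiv ℝ F x)) x := h
  rw [h'.fderiv]
  rfl

lemma curl_eq {F : R3 → R3} {x : R3} (hF : DifferentiableAt ℝ F x) :
    curl F x = curlL (fderiv ℝ F x) := by
  unfold curl
  simp only [pd_comp hF]
  rfl

lemma curl_contDiff {F : R3 → R3} (hF : ContDiff ℝ 2 F) : ContDiff ℝ 1 (curl F) := by
  have : curl F = fun x => curlL (fderiv ℝ F x) := by
    funext x; exact curl_eq (hF.differentiable (by norm_num) x)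
  rw [this]
  exact curlL.contDiff.comp (hF.fderiv_right (by norm_num))

lemma fderiv_curl {F : R3 → R3} (hF : ContDiff ℝ 2 F) (x v : R3) :
    fderiv ℝ (curl F) x v = curlL (fderiv ℝ (fderiv ℝ F) x v) := by
  have h1 : curl F = fun x => curlL (fderiv ℝ F x) := by
    funext x; exact curl_eq (hF.differentiable (by norm_num) x)
  rw [h1]
  have hd : DifferentiableAt ℝ (fderiv ℝ F) x :=
    (hF.fderiv_right (m := 1) (by norm_num)).differentiable (by norm_num) x
  have := (curlL.hasFDerivAt (x := fderiv ℝ F x)).comp x hd.hasFDerivAt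
  have h2 : HasFDerivAt (fun x => curlL (fderiv ℝ F x)) (curlL.comp (fderiv ℝ (fderiv ℝ F) x)) x := this
  rw [h2.fderiv]; rfl

lemma div_curl {F : R3 → R3} (hF : ContDiff ℝ 2 F) (x : R3) :
    fderiv ℝ (curl F) x (eb 0) 0 + fderiv ℝ (curl F) x (eb 1) 1 + fderiv ℝ (curl F) x (eb 2) 2 = 0 := by
  have hs : IsSymmSndFDerivAt ℝ F x := hF.contDiffAt.isSymmSndFDerivAt (by simp)
  simp only [fderiv_curl hF, curlL_apply, c3, toR3_apply]
  have h01 := congrArg (fun v : R3 => v 2) (hs (eb 0) (eb 1))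
  have h02 := congrArg (fun v : R3 => v 1) (hs (eb 0) (eb 2))
  have h12 := congrArg (fun v : R3 => v 0) (hs (eb 1) (eb 2))
  simp only at h01 h02 h12
  simp [h01, h02, h12]

lemma clm_expand (D : R3 →L[ℝ] R3) (v : R3) (i : Fin 3) :
    D v i = v 0 * D (eb 0) i + v 1 * D (eb 1) i + v 2 * D (eb 2) i := by
  have hv : v = v 0 • eb 0 + v 1 • eb 1 + v 2 • eb 2 := by
    ext i; fin_cases i <;> simp [eb]
  conv_lhs => rw [hv]
  simp

lemma pd_prod {f g h k : R3 → ℝ} {x : R3} (hf : DifferentiableAt ℝ f x) (hg : DifferentiableAt ℝ g x)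
    (hh : DifferentiableAt ℝ h x) (hk : DifferentiableAt ℝ k x) (j : Fin 3) :
    pd j (fun y => f y * g y - h y * k y) x =
      pd j f x * g x + f x * pd j g x - pd j h x * k x - h x * pd j k x := by
  unfold pd
  have := ((hf.hasFDerivAt.mul hg.hasFDerivAt).sub (hh.hasFDerivAt.mul hk.hasFDerivAt)).fderiv
  have h2 : fderiv ℝ (fun y => f y * g y - h y * k y) x = _ := this
  rw [h2]
  simp
  ring

lemma curl_cross {F : R3 → R3} (hF : ContDiff ℝ 2 F) (x : R3) (hdiv : divg F x = 0) :
    curl (fun y => cross (curl F y) (F y)) x =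
      fderiv ℝ (curl F) x (F x) - fderiv ℝ F x (curl F x) := by
  have dF : DifferentiableAt ℝ F x := hF.differentiable (by norm_num) x
  have dJ : DifferentiableAt ℝ (curl F) x := (curl_contDiff hF).differentiable (by norm_num) x
  have cF : ∀ i, DifferentiableAt ℝ (fun y => F y i) x := fun i => differentiableAt_euclidean.1 dF i
  have cJ : ∀ i, DifferentiableAt ℝ (fun y => curl F y i) x :=
    fun i => differentiableAt_euclidean.1 dJ i
  have h1 := div_curl hF x
  unfold divg at hdiv
  simp only [pd_comp dF] at hdiv
  set J := curl F with hJ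
  ext i
  fin_cases i
  · change pd 1 (fun y => J y 0 * F y 1 - J y 1 * F y 0) x
      - pd 2 (fun y => J y 2 * F y 0 - J y 0 * F y 2) x
      = fderiv ℝ J x (F x) 0 - fderiv ℝ F x (J x) 0
    rw [pd_prod (cJ 0) (cF 1) (cJ 1) (cF 0), pd_prod (cJ 2) (cF 0) (cJ 0) (cF 2), clm_expand (fderiv ℝ J x) (F x),
      clm_expand (fderiv ℝ F x) (J x)]
    simp only [pd_comp dF, pd_comp dJ]
    linear_combination J x 0 * hdiv - F x 0 * h1
  · change pd 2 (fun y => J y 1 * F y 2 - J y 2 * F y 1) x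
      - pd 0 (fun y => J y 0 * F y 1 - J y 1 * F y 0) x
      = fderiv ℝ J x (F x) 1 - fderiv ℝ F x (J x) 1
    rw [pd_prod (cJ 1) (cF 2) (cJ 2) (cF 1), pd_prod (cJ 0) (cF 1) (cJ 1) (cF 0), clm_expand (fderiv ℝ J x) (F x),
      clm_expand (fderiv ℝ F x) (J x)]
    simp only [pd_comp dF, pd_comp dJ]
    linear_combination J x 1 * hdiv - F x 1 * h1
  · change pd 0 (fun y => J y 2 * F y 0 - J y 0 * F y 2) x
      - pd 1 (fun y => J y 1 * F y 2 - J y 2 * F y 1) x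
      = fderiv ℝ J x (F x) 2 - fderiv ℝ F x (J x) 2
    rw [pd_prod (cJ 2) (cF 0) (cJ 0) (cF 2), pd_prod (cJ 1) (cF 2) (cJ 2) (cF 1), clm_expand (fderiv ℝ J x) (F x),
      clm_expand (fderiv ℝ F x) (J x)]
    simp only [pd_comp dF, pd_comp dJ]
    linear_combination J x 2 * hdiv - F x 2 * h1

lemma meas_indicator_of_cont {f : ℝ → R3} {s : Set ℝ} (hs : MeasurableSet s)
    (hf : ContinuousOn f s) : Measurable (s.indicator f) := by
  classical
  rw [← piecewise_eq_indicator]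
  exact hf.measurable_piecewise continuousOn_const hs

lemma meas_fderiv {T : ℝ} {B : ℝ → R3 → R3} (hBc : ∀ x, ContinuousOn (fun t => B t x) (Ico 0 T))
    (hBx : ∀ t ∈ Ico 0 T, ContDiff ℝ 2 (B t)) (x v : R3) :
    Measurable ((Ico 0 T).indicator (fun t => fderiv ℝ (B t) x v)) := by
  refine measurable_of_tendsto_metrizable (f := fun n : ℕ => (Ico 0 T).indicator
    (fun t => ((n:ℝ) + 1) • (B t (x + (1 / ((n:ℝ) + 1)) • v) - B t x)))
    (fun n => meas_indicator_of_cont measurableSet_Ico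
      (((hBc _).sub (hBc _)).const_smul ((n:ℝ) + 1))) ?_
  rw [tendsto_pi_nhds]
  intro t
  by_cases ht : t ∈ Ico 0 T
  · simp only [indicator_of_mem ht]
    have hL : HasFDerivAt (B t) (fderiv ℝ (B t) x) x :=
      ((hBx t ht).differentiable (by norm_num) x).hasFDerivAt
    have h1 : HasDerivAt (fun r : ℝ => B t (x + r • v)) (fderiv ℝ (B t) x v) 0 := by
      have h2 : HasDerivAt (fun r : ℝ => x + r • v) v 0 := by
        simpa using ((hasDerivAt_id (0:ℝ)).smul_const v).const_add x
      have h3 : HasFDerivAt (B t) (fderiv ℝ (B t) x) ((fun r : ℝ => x + r • v) 0) := by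
        simpa using hL
      exact h3.comp_hasDerivAt (0:ℝ) h2
    have h4 := slope_lim h1 (l := 𝓝[≠] 0) le_rfl
    have h5 : Tendsto (fun n : ℕ => 1 / ((n:ℝ) + 1)) atTop (𝓝[≠] 0) := by
      rw [tendsto_nhdsWithin_iff]
      refine ⟨tendsto_one_div_add_atTop_nhds_zero_nat, Eventually.of_forall fun n => ?_⟩
      have : (0:ℝ) < 1 / ((n:ℝ) + 1) := by positivity
      exact this.ne'
    have h6 := h4.comp h5
    simpa [Function.comp_def] using h6
  · simp [indicator_of_notMem ht]

end EMHDAux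
namespace EMHDAux

open Filter Topology

lemma emhd_flow (T : ℝ) (B : ℝ → R3 → R3)
    (hBt : ∀ x, ContDiffOn ℝ 1 (fun t => B t x) (Set.Ico 0 T))
    (hBx : ∀ t ∈ Set.Ico 0 T, ContDiff ℝ 2 (B t))
    (hB : ∀ t ∈ Set.Ico 0 T, ∀ x, IsEMHDAt B t x)
    (M : ℝ → ℝ)
    (hMdef : ∀ τ, M τ = ⨆ x : R3, ‖fderiv ℝ (fun y => curl (B τ) y) x‖)
    (hMbdd : ∀ τ ∈ Set.Ico 0 T,
      BddAbove (Set.range fun x : R3 => ‖fderiv ℝ (fun y => curl (B τ) y) x‖))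
    (hMint : ∀ t ∈ Set.Ioo 0 T, IntervalIntegrable M volume 0 t)
    (X : ℝ → R3) (hXc : ContinuousOn X (Set.Ico 0 T))
    (hXV : ContinuousOn (fun t => -(curl (B t) (X t))) (Set.Ico 0 T)) :
    Flow T B (fun t x => -(curl (B t) x)) (fun t x => deriv (fun τ => B τ x) t) M := by
  have hio : Ioo 0 T ⊆ Ico 0 T := Ioo_subset_Ico_self
  have hM0 : ∀ t, 0 ≤ M t := fun t => by
    rw [hMdef]; exact Real.iSup_nonneg fun x => norm_nonneg _
  have hDJ : ∀ t ∈ Ico 0 T, ∀ x, ‖fderiv ℝ (curl (B t)) x‖ ≤ M t := fun t ht x => by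
    rw [hMdef]; exact le_ciSup (hMbdd t ht) x
  have hBteq : ∀ t ∈ Ico 0 T, ∀ x, deriv (fun τ => B τ x) t =
      fderiv ℝ (B t) x (curl (B t) x) - fderiv ℝ (curl (B t)) x (B t x) := fun t ht x => by
    have h1 := (hB t ht x).1
    rw [curl_cross (hBx t ht) x (hB t ht x).2] at h1
    rw [eq_neg_of_add_eq_zero_left h1]; abel
  have hVlip : ∀ t ∈ Ico 0 T, ∀ x y, ‖-(curl (B t) x) - -(curl (B t) y)‖ ≤ M t * ‖x - y‖ := by
    intro t ht x y
    have h1 := convex_univ.norm_image_sub_le_of_norm_fderiv_le (𝕜 := ℝ) (f := curl (B t)) (C := M t)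
      (fun z _ => (curl_contDiff (hBx t ht)).differentiable (by norm_num) z)
      (fun z _ => hDJ t ht z) (mem_univ x) (mem_univ y)
    rw [norm_sub_rev x y]
    rwa [show -(curl (B t) x) - -(curl (B t) y) = curl (B t) y - curl (B t) x by abel]
  have hVmeas : ∀ x, Measurable (fun t => (Ico 0 T).indicator (fun t => -(curl (B t) x)) t) := by
    intro x
    have h0 := fun j => meas_fderiv (fun x => (hBt x).continuousOn) hBx x (eb j)
    have h1 := (continuous_c3.measurable.comp ((h0 0).prodMk ((h0 1).prodMk (h0 2)))).neg
    convert h1 using 1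
    funext t
    by_cases ht : t ∈ Ico 0 T
    · simp [indicator_of_mem ht, Function.comp_def,
        curl_eq ((hBx t ht).differentiable (by norm_num) x), curlL_apply]
    · simp [indicator_of_notMem ht, Function.comp_def, c3_zero]
  refine ⟨fun x => (hBt x).continuousOn, ?_, ?_, ?_, hBx, ?_, hVlip, hM0, hMint, ?_, hVmeas⟩
  · intro t ht x
    exact ((((hBt x).differentiableOn (by norm_num)) t (hio ht)).differentiableAt
      (Ico_mem_nhds ht.1 ht.2)).hasDerivAt
  · intro x
    exact ((hBt x).mono hio).continuousOn_deriv_of_isOpen isOpen_Ioo (by norm_num)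
  · intro t ht
    have e : (fun x => deriv (fun τ => B τ x) t) = fun x =>
      fderiv ℝ (B t) x (curl (B t) x) - fderiv ℝ (curl (B t)) x (B t x) := by
      funext x; exact hBteq t (hio ht) x
    have hb := hBx t (hio ht)
    have hj := curl_contDiff hb
    show Continuous (fun x => deriv (fun τ => B τ x) t)
    rw [e]
    exact ((hb.continuous_fderiv (by norm_num)).clm_apply hj.continuous).sub
      ((hj.continuous_fderiv (by norm_num)).clm_apply hb.continuous)
  · intro t ht x
    have e : deriv (fun τ => B τ x) t + fderiv ℝ (B t) x (-(curl (B t) x))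
        = -(fderiv ℝ (curl (B t)) x (B t x)) := by
      rw [hBteq t (hio ht) x, map_neg]; abel
    show ‖deriv (fun τ => B τ x) t + fderiv ℝ (B t) x (-(curl (B t) x))‖ ≤ _
    rw [e, norm_neg]
    exact ((fderiv ℝ (curl (B t)) x).le_opNorm _).trans
      (mul_le_mul_of_nonneg_right (hDJ t (hio ht) x) (norm_nonneg _))
  · intro x b hb
    have hsub : Icc 0 b ⊆ Ico 0 T := fun s hs => ⟨hs.1, hs.2.trans_lt hb.2⟩
    have hu : uIcc 0 b = Icc 0 b := uIcc_of_le hb.1.le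
    have g1 : IntervalIntegrable (fun t => ‖-(curl (B t) (X t))‖) volume 0 b := by
      refine ContinuousOn.intervalIntegrable ?_
      rw [hu]; exact (hXV.mono hsub).norm
    have g2 : IntervalIntegrable (fun t => M t * ‖x - X t‖) volume 0 b := by
      refine (hMint b hb).mul_continuousOn ?_
      rw [hu]; exact (continuousOn_const.sub (hXc.mono hsub)).norm
    refine (g1.add g2).mono_fun' ?_ ?_
    · refine ((hVmeas x).aestronglyMeasurable).congr ?_
      filter_upwards [ae_restrict_mem measurableSet_uIoc] with s hs
      rw [uIoc_of_le hb.1.le] at hs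
      exact indicator_of_mem (hsub ⟨hs.1.le, hs.2⟩) _
    · filter_upwards [ae_restrict_mem measurableSet_uIoc] with s hs
      rw [uIoc_of_le hb.1.le] at hs
      have h1 := hVlip s (hsub ⟨hs.1.le, hs.2⟩) x (X s)
      have h2 := norm_add_le (-(curl (B s) (X s))) (-(curl (B s) x) - -(curl (B s) (X s)))
      rw [add_sub_cancel] at h2
      show _ ≤ ‖-(curl (B s) (X s))‖ + M s * ‖x - X s‖
      linarith

end EMHDAux

/-- two-sided exponential bounds for |B| along a trajectory of -J. -/
theorem norm_B_along_trajectory_bounds (T : ℝ) (hT : 0 < T) (B : ℝ → R3 → R3)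
    (hBt : ∀ x, ContDiffOn ℝ 1 (fun t => B t x) (Set.Ico 0 T))
    (hBx : ∀ t ∈ Set.Ico 0 T, ContDiff ℝ 2 (B t))
    (hB : ∀ t ∈ Set.Ico 0 T, ∀ x, IsEMHDAt B t x)
    (M : ℝ → ℝ)
    (hMdef : ∀ τ, M τ = ⨆ x : R3, ‖fderiv ℝ (fun y => curl (B τ) y) x‖)
    (hMbdd : ∀ τ ∈ Set.Ico 0 T,
      BddAbove (Set.range fun x : R3 => ‖fderiv ℝ (fun y => curl (B τ) y) x‖))
    (hMint : ∀ t ∈ Set.Ioo 0 T, IntervalIntegrable M volume 0 t)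
    (a : R3) (X : ℝ → R3) (hX0 : X 0 = a)
    (hXC1 : ContDiffOn ℝ 1 X (Set.Ico 0 T))
    (hX : ∀ t ∈ Set.Ico 0 T,
      HasDerivWithinAt X (-(curl (B t) (X t))) (Set.Ico 0 T) t)
    (t : ℝ) (ht : t ∈ Set.Ioo 0 T)
    (hne : ∀ τ ∈ Set.Icc 0 t, B τ (X τ) ≠ 0) :
    ‖B 0 a‖ * Real.exp (-∫ τ in (0:ℝ)..t, M τ) ≤ ‖B t (X t)‖ ∧
      ‖B t (X t)‖ ≤ ‖B 0 a‖ * Real.exp (∫ τ in (0:ℝ)..t, M τ) := by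
  have hder : ∀ s ∈ Set.Ico 0 T, derivWithin X (Set.Ico 0 T) s = -(curl (B s) (X s)) :=
    fun s hs => (hX s hs).derivWithin (uniqueDiffOn_Ico 0 T s hs)
  have hXV : ContinuousOn (fun s => -(curl (B s) (X s))) (Set.Ico 0 T) :=
    (hXC1.continuousOn_derivWithin (uniqueDiffOn_Ico 0 T) (by norm_num)).congr
      (fun s hs => (hder s hs).symm)
  have F := EMHDAux.emhd_flow T B hBt hBx hB M hMdef hMbdd hMint X hXC1.continuousOn hXV
  have hsub : Set.Icc 0 t ⊆ Set.Ico 0 T := fun s hs => ⟨hs.1, hs.2.trans_lt ht.2⟩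
  have key : ∀ p ∈ Set.Icc 0 t, ∀ q ∈ Set.Icc 0 t, p ≤ q →
      ∫ σ in p..q, -(curl (B σ) (X σ)) = X q - X p := by
    intro p hp q hq hpq
    have hpq' : Set.Icc p q ⊆ Set.Ico 0 T :=
      fun s hs => hsub ⟨hp.1.trans hs.1, hs.2.trans hq.2⟩
    refine intervalIntegral.integral_eq_sub_of_hasDeriv_right ?_ ?_ ?_
    · rw [Set.uIcc_of_le hpq]; exact hXC1.continuousOn.mono hpq'
    · intro s hs
      rw [min_eq_left hpq, max_eq_right hpq] at hs
      have h0 : 0 < s := lt_of_le_of_lt hp.1 hs.1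
      have h1 : s < T := (hpq' ⟨hs.1.le, hs.2.le⟩).2
      exact ((hX s ⟨h0.le, h1⟩).hasDerivAt (Ico_mem_nhds h0 h1)).hasDerivWithinAt
    · refine ContinuousOn.intervalIntegrable ?_
      rw [Set.uIcc_of_le hpq]; exact hXV.mono hpq'
  have hTr : EMHDAux.Traj (fun s x => -(curl (B s) x)) X 0 t := by
    refine ⟨hXC1.continuousOn.mono hsub, fun p hp q hq => ?_⟩
    rcases le_total p q with h | h
    · exact (key p hp q hq h).symm
    · rw [intervalIntegral.integral_symm]
      show _ = -∫ σ in q..p, -(curl (B σ) (X σ))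
      rw [key q hq p hp h]; abel
  have := F.final ht hTr
  rwa [hX0] at this
end
end

section
/- (Theorem 1.4) Let T > 0 and let λ, μ : (−∞,T) → ℝ be C¹ with λ(t) ≠ 0 and μ(t) ≠ 0 for all t, and suppose it is NOT the case that there exist a₁, a₂ ∈ ℝ with λ(t) = a₁(T−t)^{−2/7} and μ(t) = a₂(T−t)^{−3/7} for all t. Let H : ℝ³ → ℝ³ be C² and suppose B(x,t) := μ(t) H(λ(t)x) is a classical solution of the resistivity-free electron MHD system ∂ₜB + ∇×((∇×B)×B) = 0, ∇·B(·,t) = 0 on ℝ³ × [0,T). Then it is impossible that both (a) esssup_{0<t<T} ‖B(·,t)‖_{L²(ℝ³)} < ∞ and (b) ∫₀ᵗ ‖∇²B(·,τ)‖_{L^∞(ℝ³)} dτ → ∞ as t → T⁻ hold. -/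
noncomputable section

open MeasureTheory Real Set
open scoped RealInnerProductSpace

lemma pd_comp (F : R3 → R3) (x : R3) (h : DifferentiableAt ℝ F x) (i j : Fin 3) :
    pd j (fun y => F y i) x = (fderiv ℝ F x (EuclideanSpace.single j 1)) i := by
  have h1 : HasFDerivAt (fun y => F y i)
      ((EuclideanSpace.proj i : R3 →L[ℝ] ℝ).comp (fderiv ℝ F x)) x :=
    (EuclideanSpace.proj i : R3 →L[ℝ] ℝ).hasFDerivAt.comp x h.hasFDerivAt
  unfold pd
  rw [h1.fderiv]
  rfl

lemma pd_mul (f g : R3 → ℝ) (x : R3) (hf : DifferentiableAt ℝ f x) (hg : DifferentiableAt ℝ g x)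
    (j : Fin 3) : pd j (fun y => f y * g y) x = f x * pd j g x + pd j f x * g x := by
  unfold pd
  rw [fderiv_fun_mul hf hg]
  simp
  ring

lemma pd_sub (f g : R3 → ℝ) (x : R3) (hf : DifferentiableAt ℝ f x) (hg : DifferentiableAt ℝ g x)
    (j : Fin 3) : pd j (fun y => f y - g y) x = pd j f x - pd j g x := by
  unfold pd
  rw [fderiv_fun_sub hf hg]
  simp

lemma contDiff_pd (f : R3 → ℝ) (hf : ContDiff ℝ 2 f) (j : Fin 3) :
    ContDiff ℝ 1 (fun x => pd j f x) := by
  unfold pd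
  exact (hf.fderiv_right (m := 1) (by norm_num)).clm_apply contDiff_const

lemma toR3_0 (v : Fin 3 → ℝ) (i : Fin 3) : toR3 v i = v i := rfl

lemma contDiff_comp (n : WithTop ℕ∞) (F : R3 → R3) (hF : ContDiff ℝ n F) (i : Fin 3) :
    ContDiff ℝ n (fun y => F y i) :=
  (EuclideanSpace.proj i : R3 →L[ℝ] ℝ).contDiff.comp hF

lemma contDiff_of_comp (n : WithTop ℕ∞) (F : R3 → R3)
    (hF : ∀ i, ContDiff ℝ n (fun y => F y i)) :
    ContDiff ℝ n F := contDiff_euclidean.2 hF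

lemma contDiff_curl (F : R3 → R3) (hF : ContDiff ℝ 2 F) : ContDiff ℝ 1 (curl F) := by
  have h := fun i j => contDiff_pd _ (contDiff_comp 2 F hF i) j
  apply contDiff_of_comp
  intro i
  fin_cases i
  · exact (h 2 1).sub (h 1 2)
  · exact (h 0 2).sub (h 2 0)
  · exact (h 1 0).sub (h 0 1)

lemma contDiff_cross (n : WithTop ℕ∞) (F G : R3 → R3) (hF : ContDiff ℝ n F)
    (hG : ContDiff ℝ n G) : ContDiff ℝ n (fun y => cross (F y) (G y)) := by
  have h := contDiff_comp n F hF
  have h' := contDiff_comp n G hG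
  apply contDiff_of_comp
  intro i
  fin_cases i
  · exact ((h 1).mul (h' 2)).sub ((h 2).mul (h' 1))
  · exact ((h 2).mul (h' 0)).sub ((h 0).mul (h' 2))
  · exact ((h 0).mul (h' 1)).sub ((h 1).mul (h' 0))

lemma div_cross (A H : R3 → R3) (x : R3) (hA : ContDiff ℝ 1 A) (hH : ContDiff ℝ 1 H) :
    divg (fun y => cross (A y) (H y)) x
      = ∑ i, H x i * curl A x i - ∑ i, A x i * curl H x i := by
  have h := fun i => ((contDiff_comp 1 A hA i).differentiable (by norm_num)) x
  have h' := fun i => ((contDiff_comp 1 H hH i).differentiable (by norm_num)) x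
  have e : ∀ i j k : Fin 3, pd k (fun y => A y i * H y j - A y j * H y i) x
     = A x i * pd k (fun y => H y j) x + pd k (fun y => A y i) x * H x j
       - (A x j * pd k (fun y => H y i) x + pd k (fun y => A y j) x * H x i) := by
    intro i j k
    rw [pd_sub _ _ _ ((h i).fun_mul (h' j)) ((h j).fun_mul (h' i)), pd_mul _ _ _ (h i) (h' j),
      pd_mul _ _ _ (h j) (h' i)]
  have e1 : divg (fun y => cross (A y) (H y)) x =
     pd 0 (fun y => A y 1 * H y 2 - A y 2 * H y 1) x
     + pd 1 (fun y => A y 2 * H y 0 - A y 0 * H y 2) x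
     + pd 2 (fun y => A y 0 * H y 1 - A y 1 * H y 0) x := rfl
  rw [e1, e, e, e]
  simp only [Fin.sum_univ_three, curl, toR3_0, Matrix.cons_val]
  ring

lemma energy_pt (H : R3 → R3) (hH : ContDiff ℝ 2 H) (x : R3) :
    divg (fun y => cross (cross (curl H y) (H y)) (H y)) x
      = ∑ i, H x i * curl (fun y => cross (curl H y) (H y)) x i := by
  have h1 : ContDiff ℝ 1 H := hH.of_le (by norm_num)
  rw [div_cross _ _ _ (contDiff_cross 1 _ _ (contDiff_curl H hH) h1) h1]
  simp only [Fin.sum_univ_three, cross, toR3_0, Matrix.cons_val]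
  ring

lemma norm_cross_le (u v : R3) : ‖cross u v‖ ≤ ‖u‖ * ‖v‖ := by
  apply le_of_sq_le_sq _ (by positivity)
  rw [mul_pow, EuclideanSpace.norm_sq_eq, EuclideanSpace.norm_sq_eq, EuclideanSpace.norm_sq_eq]
  simp only [Fin.sum_univ_three, cross, toR3_0, Matrix.cons_val, Real.norm_eq_abs, sq_abs]
  nlinarith [sq_nonneg (u 0 * v 0 + u 1 * v 1 + u 2 * v 2)]

lemma ibp (V : R3 → R3) (hV : ContDiff ℝ 1 V) (φ ψ : ℝ → ℝ) (b : ℝ)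
    (hφ : ∀ s, HasDerivAt φ (-ψ s) s) (hψ : Continuous ψ) (h0 : ∀ s, b ≤ s → φ s = 0)
    (h0' : ∀ s, b ≤ s → ψ s = 0) :
    ∫ y, φ (‖y‖ ^ 2) * divg V y = ∫ y, ψ (‖y‖ ^ 2) * (2 * inner ℝ y (V y)) := by
  have hφc : Continuous φ := continuous_iff_continuousAt.2 fun s => (hφ s).continuousAt
  have hχ : ∀ y : R3, HasFDerivAt (fun y : R3 => φ (‖y‖ ^ 2))
      ((-ψ (‖y‖ ^ 2)) • (2 • (innerSL ℝ y))) y := by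
    intro y
    exact (hφ (‖y‖ ^ 2)).comp_hasFDerivAt y (hasStrictFDerivAt_norm_sq y).hasFDerivAt
  have cs : ∀ (θ : ℝ → ℝ), (∀ s, b ≤ s → θ s = 0) → Continuous θ → ∀ g : R3 → ℝ, Continuous g →
      Integrable (fun y : R3 => θ (‖y‖ ^ 2) * g y) := by
    intro θ hθ hc g hg
    apply Continuous.integrable_of_hasCompactSupport (by fun_prop)
    apply HasCompactSupport.intro (isCompact_closedBall (0 : R3) (|b| + 1))
    intro x hx
    rw [hθ, zero_mul]
    simp at hx
    nlinarith [abs_nonneg b, le_abs_self b]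
  have hVc := fun i => contDiff_comp 1 V hV i
  have hpd : ∀ i, Continuous (fun y => pd i (fun y => V y i) y) := by
    intro i
    unfold pd
    exact ((hVc i).continuous_fderiv (by norm_num)).clm_apply continuous_const
  have key : ∀ i : Fin 3, ∫ y, φ (‖y‖ ^ 2) * pd i (fun y => V y i) y
      = ∫ y : R3, ψ (‖y‖ ^ 2) * (2 * (y i * V y i)) := by
    intro i
    have e : ∀ y : R3, fderiv ℝ (fun y : R3 => φ (‖y‖ ^ 2)) y (EuclideanSpace.single i 1)
        = - (ψ (‖y‖ ^ 2) * (2 * y i)) := by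
      intro y
      rw [(hχ y).fderiv]
      simp [EuclideanSpace.inner_single_right]
    have := integral_mul_fderiv_eq_neg_fderiv_mul_of_integrable (μ := (volume : Measure R3))
      (f := fun y : R3 => φ (‖y‖ ^ 2))
      (g := fun y => V y i) (v := EuclideanSpace.single i 1) ?_ ?_ ?_
      (fun y _ => (hχ y).differentiableAt)
      (fun y _ => (hVc i).differentiable (by norm_num) y)
    · unfold pd
      rw [this, ← integral_neg]
      congr 1
      ext y
      rw [e]; ring
    · simp only [e]
      refine (cs ψ h0' hψ (fun y => -(2 * y i * V y i)) ?_).congr ?_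
      · have := (hVc i).continuous
        fun_prop
      · filter_upwards with y
        ring
    · exact cs φ h0 hφc _ (hpd i)
    · exact cs φ h0 hφc _ (hVc i).continuous
  have I1 := fun i => cs φ h0 hφc _ (hpd i)
  have I2 : ∀ i, Integrable (fun y : R3 => ψ (‖y‖ ^ 2) * (2 * (y i * V y i))) := fun i =>
    cs ψ h0' hψ (fun y => 2 * (y i * V y i)) (by have := (hVc i).continuous; fun_prop)
  have E1 : (fun y => φ (‖y‖ ^ 2) * divg V y)
      = fun y => ∑ i, φ (‖y‖ ^ 2) * pd i (fun y => V y i) y := by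
    ext y
    simp only [divg, Fin.sum_univ_three]; ring
  have E2 : (fun y => ψ (‖y‖ ^ 2) * (2 * inner ℝ y (V y)))
      = fun y => ∑ i, ψ (‖y‖ ^ 2) * (2 * (y i * V y i)) := by
    ext y
    simp only [PiLp.inner_apply, Fin.sum_univ_three, RCLike.inner_apply, conj_trivial]; ring
  rw [E1, E2, integral_finsetSum _ (fun i _ => I1 i), integral_finsetSum _ (fun i _ => I2 i)]
  exact Finset.sum_congr rfl fun i _ => key i

lemma pd_add (f g : R3 → ℝ) (x : R3) (hf : DifferentiableAt ℝ f x) (hg : DifferentiableAt ℝ g x)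
    (j : Fin 3) : pd j (fun y => f y + g y) x = pd j f x + pd j g x := by
  unfold pd
  rw [fderiv_fun_add hf hg]
  simp

lemma pd_coord (x : R3) (j : Fin 3) : pd j (fun y => y j) x = 1 := by
  have := pd_comp (fun y => y) x differentiableAt_id j j
  rw [this]
  simp

lemma sum_pd (f : R3 → ℝ) (y : R3) :
    y 0 * pd 0 f y + y 1 * pd 1 f y + y 2 * pd 2 f y = fderiv ℝ f y y := by
  have e : y = y 0 • EuclideanSpace.single 0 1 + y 1 • EuclideanSpace.single 1 1
      + y 2 • EuclideanSpace.single 2 (1 : ℝ) := by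
    ext i
    fin_cases i <;> simp
  unfold pd
  generalize fderiv ℝ f y = D
  conv_rhs => rw [e]
  simp only [map_add, map_smul, smul_eq_mul]

lemma divg_flux (H Φ : R3 → R3) (hH : ContDiff ℝ 1 H) (hΦ : ContDiff ℝ 1 Φ) (c : ℝ) (y : R3) :
    divg (fun y => (c * ‖H y‖ ^ 2) • y + Φ y) y
      = c * (3 * ‖H y‖ ^ 2 + 2 * inner ℝ (H y) (fderiv ℝ H y y)) + divg Φ y := by
  have hf : ContDiff ℝ 1 (fun y => c * ‖H y‖ ^ 2) := contDiff_const.mul (hH.norm_sq ℝ)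
  have hfd := hf.differentiable (by norm_num) y
  have hfv : fderiv ℝ (fun y => c * ‖H y‖ ^ 2) y y
      = c * (2 * inner ℝ (H y) (fderiv ℝ H y y)) := by
    have := ((hH.differentiable (by norm_num) y).hasFDerivAt.norm_sq).const_mul c
    rw [this.fderiv]
    simp
  have hc : ∀ i : Fin 3, DifferentiableAt ℝ (fun y : R3 => y i) y := fun i =>
    ((contDiff_comp 1 (fun y => y) contDiff_id i).differentiable (by norm_num)) y
  have hΦd := fun i => ((contDiff_comp 1 Φ hΦ i).differentiable (by norm_num)) y
  have e : ∀ i : Fin 3, pd i (fun y => ((c * ‖H y‖ ^ 2) • y + Φ y) i) y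
      = c * ‖H y‖ ^ 2 + y i * pd i (fun y => c * ‖H y‖ ^ 2) y + pd i (fun y => Φ y i) y := by
    intro i
    have e1 : (fun y => ((c * ‖H y‖ ^ 2) • y + Φ y) i)
        = fun y => (c * ‖H y‖ ^ 2) * y i + Φ y i := by
      ext y; simp
    rw [e1, pd_add _ _ _ (hfd.fun_mul (hc i)) (hΦd i), pd_mul _ _ _ hfd (hc i), pd_coord]
    ring
  have := sum_pd (fun y => c * ‖H y‖ ^ 2) y
  rw [hfv] at this
  unfold divg
  rw [e, e, e]
  linarith

lemma inner_eq_sum (u v : R3) : inner ℝ u v = ∑ i, u i * v i := by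
  simp only [PiLp.inner_apply, Fin.sum_univ_three, RCLike.inner_apply, conj_trivial]; ring

lemma energy_int (H : R3 → R3) (hH : ContDiff ℝ 2 H) (p q : ℝ)
    (heq : ∀ y, p • H y + q • (fderiv ℝ H y y)
      + curl (fun y => cross (curl H y) (H y)) y = 0)
    (φ ψ : ℝ → ℝ) (b : ℝ)
    (hφ : ∀ s, HasDerivAt φ (-ψ s) s) (hψ : Continuous ψ) (h0 : ∀ s, b ≤ s → φ s = 0)
    (h0' : ∀ s, b ≤ s → ψ s = 0) :
    ∫ y, φ (‖y‖ ^ 2) * (-(p - 3 * q / 2) * ‖H y‖ ^ 2)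
      = ∫ y, ψ (‖y‖ ^ 2) * (q * ‖H y‖ ^ 2 * ‖y‖ ^ 2
          + 2 * inner ℝ y (cross (cross (curl H y) (H y)) (H y))) := by
  have h1 : ContDiff ℝ 1 H := hH.of_le (by norm_num)
  have hΦ : ContDiff ℝ 1 (fun y => cross (cross (curl H y) (H y)) (H y)) :=
    contDiff_cross 1 _ _ (contDiff_cross 1 _ _ (contDiff_curl H hH) h1) h1
  have hV : ContDiff ℝ 1 (fun y => (q / 2 * ‖H y‖ ^ 2) • y
      + cross (cross (curl H y) (H y)) (H y)) :=
    ((contDiff_const.mul (h1.norm_sq ℝ)).smul contDiff_id).add hΦ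
  have := ibp _ hV φ ψ b hφ hψ h0 h0'
  have e : ∀ y, divg (fun y => (q / 2 * ‖H y‖ ^ 2) • y
      + cross (cross (curl H y) (H y)) (H y)) y = -(p - 3 * q / 2) * ‖H y‖ ^ 2 := by
    intro y
    rw [divg_flux H _ h1 hΦ, energy_pt H hH, ← inner_eq_sum]
    have h2 := congrArg (fun v => inner ℝ (H y) v) (heq y)
    simp only [inner_add_right, inner_smul_right, real_inner_self_eq_norm_sq,
      inner_zero_right] at h2
    linarith
  simp only [e] at this
  rw [this]
  congr 1
  ext y
  rw [inner_add_right, inner_smul_right, real_inner_self_eq_norm_sq]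
  ring

lemma flux_bound (H : R3 → R3) (y : R3) :
    |inner ℝ y (cross (cross (curl H y) (H y)) (H y))| ≤ ‖y‖ * ‖curl H y‖ * ‖H y‖ ^ 2 := by
  calc _ ≤ ‖y‖ * ‖cross (cross (curl H y) (H y)) (H y)‖ := abs_real_inner_le_norm _ _
    _ ≤ ‖y‖ * ((‖curl H y‖ * ‖H y‖) * ‖H y‖) := by
        gcongr
        refine (norm_cross_le _ _).trans ?_
        gcongr
        exact norm_cross_le _ _
    _ = _ := by ring

/-- Step 1: either the profile vanishes or the exponents are energy critical. -/
lemma step1 (H : R3 → R3) (hH : ContDiff ℝ 2 H) (p q : ℝ)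
    (heq : ∀ y, p • H y + q • (fderiv ℝ H y y)
      + curl (fun y => cross (curl H y) (H y)) y = 0)
    (hL2 : Integrable (fun y => ‖H y‖ ^ 2)) (K : ℝ) (hJ : ∀ y, ‖curl H y‖ ≤ K) :
    (p - 3 * q / 2) * ∫ y, ‖H y‖ ^ 2 = 0 := by
  have h1 : ContDiff ℝ 1 H := hH.of_le (by norm_num)
  have hΦ : ContDiff ℝ 1 (fun y => cross (cross (curl H y) (H y)) (H y)) :=
    contDiff_cross 1 _ _ (contDiff_cross 1 _ _ (contDiff_curl H hH) h1) h1
  have hK : 0 ≤ K := (norm_nonneg _).trans (hJ 0)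
  have hHc := h1.continuous
  have hΦc := hΦ.continuous
  set ψ : ℕ → ℝ → ℝ := fun n s => ((n : ℝ) + 1)⁻¹ ^ 2 * max 0 (1 - s * ((n : ℝ) + 1)⁻¹ ^ 2) with hψd
  set φ : ℕ → ℝ → ℝ := fun n s => (max 0 (1 - s * ((n : ℝ) + 1)⁻¹ ^ 2)) ^ 2 / 2 with hφd
  have hm : ∀ s : ℝ, HasDerivAt (fun s : ℝ => (max 0 s) ^ 2) (2 * max 0 s) s := by
    intro s
    rcases lt_trichotomy s 0 with h | h | h
    · have : (fun s : ℝ => (max 0 s) ^ 2) =ᶠ[nhds s] fun _ => 0 := by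
        filter_upwards [gt_mem_nhds h] with x hx
        rw [max_eq_left hx.le]; norm_num
      rw [max_eq_left h.le, mul_zero]
      exact (hasDerivAt_const s (0 : ℝ)).congr_of_eventuallyEq this
    · subst h
      have h2 : HasDerivAt (fun s : ℝ => s ^ 2) 0 0 := by
        simpa using hasDerivAt_pow 2 (0 : ℝ)
      rw [max_self, mul_zero]
      rw [hasDerivAt_iff_isLittleO] at h2 ⊢
      refine Asymptotics.IsBigO.trans_isLittleO ?_ h2
      apply Asymptotics.IsBigO.of_bound 1
      filter_upwards with x
      simp
      rcases le_total 0 x with h | h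
      · rw [max_eq_right h]
      · rw [max_eq_left h]; nlinarith [sq_nonneg x]
    · have : (fun s : ℝ => (max 0 s) ^ 2) =ᶠ[nhds s] fun s => s ^ 2 := by
        filter_upwards [lt_mem_nhds h] with x hx
        rw [max_eq_right hx.le]
      rw [max_eq_right h.le]
      have h3 : HasDerivAt (fun s : ℝ => s ^ 2) (2 * s) s := by
        simpa using hasDerivAt_pow 2 s
      exact h3.congr_of_eventuallyEq this
  have hφ : ∀ n s, HasDerivAt (φ n) (-ψ n s) s := by
    intro n s
    have h3 : HasDerivAt (fun s : ℝ => 1 - s * ((n : ℝ) + 1)⁻¹ ^ 2) (-((n : ℝ) + 1)⁻¹ ^ 2) s := by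
      have := ((hasDerivAt_id s).mul_const (((n : ℝ) + 1)⁻¹ ^ 2)).const_sub 1
      rw [one_mul] at this
      exact this
    have h4 := ((hm (1 - s * ((n : ℝ) + 1)⁻¹ ^ 2)).comp s h3).div_const 2
    refine h4.congr_deriv ?_
    simp only [hψd]; ring
  have hψc : ∀ n, Continuous (ψ n) := by intro n; simp only [hψd]; fun_prop
  have hφc : ∀ n, Continuous (φ n) := by intro n; simp only [hφd]; fun_prop
  have hn : ∀ n : ℕ, (0 : ℝ) < (n : ℝ) + 1 := fun n => by positivity
  have hz : ∀ (n : ℕ) s, ((n : ℝ) + 1) ^ 2 ≤ s → max 0 (1 - s * ((n : ℝ) + 1)⁻¹ ^ 2) = 0 := by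
    intro n s hs
    apply max_eq_left
    rw [inv_pow, ← div_eq_mul_inv, sub_nonpos, one_le_div (by have := hn n; positivity)]
    exact hs
  have hid := fun n => energy_int H hH p q heq (φ n) (ψ n) (((n : ℝ) + 1) ^ 2) (hφ n) (hψc n)
    (fun s hs => by simp only [hφd]; rw [hz n s hs]; norm_num)
    (fun s hs => by simp only [hψd]; rw [hz n s hs]; norm_num)
  have hinv : Filter.Tendsto (fun n : ℕ => ((n : ℝ) + 1)⁻¹ ^ 2) Filter.atTop (nhds 0) := by
    have := (tendsto_one_div_add_atTop_nhds_zero_nat (𝕜 := ℝ)).pow 2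
    simpa using this
  have hmt : ∀ s : ℝ, Filter.Tendsto (fun n : ℕ => max 0 (1 - s * ((n : ℝ) + 1)⁻¹ ^ 2))
      Filter.atTop (nhds 1) := by
    intro s
    have := (tendsto_const_nhds (x := (0 : ℝ))).max ((hinv.const_mul s).const_sub 1)
    simpa using this
  have hm1 : ∀ (n : ℕ) (y : R3), max 0 (1 - ‖y‖ ^ 2 * ((n : ℝ) + 1)⁻¹ ^ 2) ≤ 1 := by
    intro n y
    apply max_le zero_le_one
    have : 0 ≤ ‖y‖ ^ 2 * ((n : ℝ) + 1)⁻¹ ^ 2 := by have := hn n; positivity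
    linarith
  have hm0 : ∀ (n : ℕ) (y : R3), 0 ≤ max 0 (1 - ‖y‖ ^ 2 * ((n : ℝ) + 1)⁻¹ ^ 2) :=
    fun n y => le_max_left _ _
  have L1 : Filter.Tendsto (fun n => ∫ y, φ n (‖y‖ ^ 2) * (-(p - 3 * q / 2) * ‖H y‖ ^ 2))
      Filter.atTop (nhds (∫ y, (1 / 2) * (-(p - 3 * q / 2) * ‖H y‖ ^ 2))) := by
    apply tendsto_integral_of_dominated_convergence
      (fun y => |p - 3 * q / 2| * ‖H y‖ ^ 2)
    · intro n
      have := hφc n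
      exact Continuous.aestronglyMeasurable (by fun_prop)
    · exact hL2.const_mul _
    · intro n
      filter_upwards with y
      rw [norm_mul, norm_mul, norm_neg, Real.norm_eq_abs, Real.norm_eq_abs, Real.norm_eq_abs,
        abs_of_nonneg (sq_nonneg ‖H y‖)]
      have : |φ n (‖y‖ ^ 2)| ≤ 1 := by
        simp only [hφd]
        rw [abs_of_nonneg (by positivity)]
        nlinarith [hm1 n y, hm0 n y]
      calc _ ≤ 1 * (|p - 3 * q / 2| * ‖H y‖ ^ 2) := by gcongr
        _ = _ := one_mul _
    · filter_upwards with y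
      apply Filter.Tendsto.mul_const
      have := ((hmt (‖y‖ ^ 2)).pow 2).div_const 2
      rw [one_pow] at this
      exact this
  have L2 : Filter.Tendsto (fun n => ∫ y, ψ n (‖y‖ ^ 2) * (q * ‖H y‖ ^ 2 * ‖y‖ ^ 2
          + 2 * inner ℝ y (cross (cross (curl H y) (H y)) (H y))))
      Filter.atTop (nhds (∫ y : R3, (0 : ℝ))) := by
    apply tendsto_integral_of_dominated_convergence
      (fun y => (|q| + 2 * K) * ‖H y‖ ^ 2)
    · intro n
      have := hψc n
      exact Continuous.aestronglyMeasurable (by fun_prop)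
    · exact hL2.const_mul _
    · intro n
      filter_upwards with y
      rw [norm_mul, Real.norm_eq_abs, Real.norm_eq_abs]
      by_cases hy : ((n : ℝ) + 1) ≤ ‖y‖
      · have : ψ n (‖y‖ ^ 2) = 0 := by
          simp only [hψd]
          rw [hz n _ (by have := hn n; gcongr), mul_zero]
        rw [this, abs_zero, zero_mul]; positivity
      · push Not at hy
        have a1 : |ψ n (‖y‖ ^ 2)| ≤ ((n : ℝ) + 1)⁻¹ ^ 2 := by
          simp only [hψd]
          rw [abs_of_nonneg (mul_nonneg (by positivity) (hm0 n y))]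
          exact mul_le_of_le_one_right (by positivity) (hm1 n y)
        have a2 : |q * ‖H y‖ ^ 2 * ‖y‖ ^ 2
          + 2 * inner ℝ y (cross (cross (curl H y) (H y)) (H y))|
            ≤ (|q| + 2 * K) * ‖H y‖ ^ 2 * ((n : ℝ) + 1) ^ 2 := by
          have b1 := flux_bound H y
          calc _ ≤ |q * ‖H y‖ ^ 2 * ‖y‖ ^ 2|
                + |2 * inner ℝ y (cross (cross (curl H y) (H y)) (H y))| := abs_add_le _ _
            _ = |q| * ‖H y‖ ^ 2 * ‖y‖ ^ 2
                + 2 * |inner ℝ y (cross (cross (curl H y) (H y)) (H y))| := by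
                  rw [abs_mul, abs_mul, abs_mul, abs_of_nonneg (sq_nonneg ‖H y‖),
                    abs_of_nonneg (sq_nonneg ‖y‖), abs_of_pos (two_pos : (0 : ℝ) < 2)]
            _ ≤ |q| * ‖H y‖ ^ 2 * ((n : ℝ) + 1) ^ 2
                + 2 * (((n : ℝ) + 1) ^ 2 * K * ‖H y‖ ^ 2) := by
                  have hnn : ‖y‖ ≤ ((n : ℝ) + 1) ^ 2 := by
                    have : (0 : ℝ) ≤ n := by positivity
                    nlinarith
                  gcongr
                  refine b1.trans ?_
                  gcongr
                  exact hJ y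
            _ = _ := by ring
        calc _ ≤ ((n : ℝ) + 1)⁻¹ ^ 2 * ((|q| + 2 * K) * ‖H y‖ ^ 2 * ((n : ℝ) + 1) ^ 2) := by gcongr
          _ = _ := by have := hn n; field_simp
    · filter_upwards with y
      have := (hinv.mul (hmt (‖y‖ ^ 2))).mul_const (q * ‖H y‖ ^ 2 * ‖y‖ ^ 2
          + 2 * inner ℝ y (cross (cross (curl H y) (H y)) (H y)))
      rw [zero_mul, zero_mul] at this
      exact this
  simp only [hid] at L1
  have := tendsto_nhds_unique L1 L2
  rw [integral_const_mul, integral_const_mul, integral_zero] at this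
  linarith

lemma step2 (H : R3 → R3) (hH : ContDiff ℝ 2 H) (p q : ℝ) (hq : q ≠ 0) (hk : p - 3 * q / 2 = 0)
    (heq : ∀ y, p • H y + q • (fderiv ℝ H y y)
      + curl (fun y => cross (curl H y) (H y)) y = 0) (r : ℝ) (hr : 0 ≤ r)
    (hJ : ∀ y, r < ‖y‖ → 2 * ‖curl H y‖ < |q| * ‖y‖) : ∀ y, r < ‖y‖ → H y = 0 := by
  intro y₁ hy₁
  have h1 : ContDiff ℝ 1 H := hH.of_le (by norm_num)
  have hΦ : ContDiff ℝ 1 (fun y => cross (cross (curl H y) (H y)) (H y)) :=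
    contDiff_cross 1 _ _ (contDiff_cross 1 _ _ (contDiff_curl H hH) h1) h1
  have hHc := h1.continuous
  have hΦc := hΦ.continuous
  set b := ‖y₁‖ ^ 2 + 1 with hb
  set ψ : ℝ → ℝ := fun s => max 0 (s - r ^ 2) * max 0 (b - s) with hψd
  have hψc : Continuous ψ := by simp only [hψd]; fun_prop
  have hψ0 : ∀ s, 0 ≤ ψ s := fun s => mul_nonneg (le_max_left _ _) (le_max_left _ _)
  have hψb : ∀ s, b ≤ s → ψ s = 0 := by
    intro s hs
    simp only [hψd]
    rw [max_eq_left (by linarith : b - s ≤ 0), mul_zero]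
  have hid := energy_int H hH p q heq (fun s => ∫ u in s..b, ψ u) ψ b
    (fun s => intervalIntegral.integral_hasDerivAt_left (hψc.intervalIntegrable _ _)
      (hψc.stronglyMeasurableAtFilter _ _) hψc.continuousAt) hψc
    (fun s hs => by
      rw [intervalIntegral.integral_symm, intervalIntegral.integral_congr (g := fun _ => 0)]
      · simp
      · intro u hu
        rw [uIcc_of_le hs] at hu
        exact hψb u hu.1)
    hψb
  rw [hk] at hid
  simp only [neg_zero, zero_mul, mul_zero, integral_zero] at hid
  set W : R3 → ℝ := fun y => q * (q * ‖H y‖ ^ 2 * ‖y‖ ^ 2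
          + 2 * inner ℝ y (cross (cross (curl H y) (H y)) (H y))) with hW
  have hWlow : ∀ y, |q| * ‖y‖ * ‖H y‖ ^ 2 * (|q| * ‖y‖ - 2 * ‖curl H y‖) ≤ W y := by
    intro y
    have b1 := flux_bound H y
    have b2 : |q * (2 * inner ℝ y (cross (cross (curl H y) (H y)) (H y)))|
        ≤ |q| * (2 * (‖y‖ * ‖curl H y‖ * ‖H y‖ ^ 2)) := by
      rw [abs_mul, abs_mul, abs_of_pos (two_pos : (0 : ℝ) < 2)]
      gcongr
    have b3 := neg_le_of_abs_le b2
    have b4 : |q| * |q| = q * q := abs_mul_abs_self q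
    simp only [hW]
    calc _ = (|q| * |q|) * (‖H y‖ ^ 2 * ‖y‖ ^ 2)
          - |q| * (2 * (‖y‖ * ‖curl H y‖ * ‖H y‖ ^ 2)) := by ring
      _ ≤ (q * q) * (‖H y‖ ^ 2 * ‖y‖ ^ 2)
          + q * (2 * inner ℝ y (cross (cross (curl H y) (H y)) (H y))) := by
            rw [b4]; linarith
      _ = _ := by ring
  have hWc : Continuous W := by simp only [hW]; fun_prop
  have hnn : ∀ y : R3, 0 ≤ ψ (‖y‖ ^ 2) * W y := by
    intro y
    by_cases hy : r < ‖y‖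
    · refine mul_nonneg (hψ0 _) (le_trans ?_ (hWlow y))
      have := hJ y hy
      exact mul_nonneg (by positivity) (by linarith)
    · have : ψ (‖y‖ ^ 2) = 0 := by
        simp only [hψd]
        push Not at hy
        rw [max_eq_left, zero_mul]
        have : ‖y‖ ^ 2 ≤ r ^ 2 := by gcongr
        linarith
      rw [this, zero_mul]
  have hcont : Continuous (fun y : R3 => ψ (‖y‖ ^ 2) * W y) := by fun_prop
  have hint : Integrable (fun y : R3 => ψ (‖y‖ ^ 2) * W y) := by
    apply hcont.integrable_of_hasCompactSupport
    apply HasCompactSupport.intro (isCompact_closedBall (0 : R3) (|b| + 1))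
    intro x hx
    rw [hψb, zero_mul]
    simp at hx
    nlinarith [abs_nonneg b, le_abs_self b]
  have hzero : ∫ y : R3, ψ (‖y‖ ^ 2) * W y = 0 := by
    have : (fun y : R3 => ψ (‖y‖ ^ 2) * W y) = fun y => q * (ψ (‖y‖ ^ 2) * (q * ‖H y‖ ^ 2 * ‖y‖ ^ 2
          + 2 * inner ℝ y (cross (cross (curl H y) (H y)) (H y)))) := by
      ext y; simp only [hW]; ring
    rw [this, integral_const_mul, ← hid, mul_zero]
  rw [integral_eq_zero_iff_of_nonneg hnn hint] at hzero
  have h0 := congrFun ((hcont.ae_eq_iff_eq volume continuous_const).1 hzero) y₁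
  have h0' : ψ (‖y₁‖ ^ 2) * W y₁ = 0 := h0
  have hp : 0 < ψ (‖y₁‖ ^ 2) := by
    simp only [hψd]
    apply mul_pos
    · apply lt_max_of_lt_right
      nlinarith
    · apply lt_max_of_lt_right
      simp [hb]
  have hW0 : W y₁ = 0 := by
    rcases mul_eq_zero.1 h0' with h | h
    · exact absurd h hp.ne'
    · exact h
  have h5 := hWlow y₁
  rw [hW0] at h5
  by_contra hne
  have : 0 < ‖H y₁‖ := norm_pos_iff.2 hne
  have h6 := hJ y₁ hy₁
  have h7 : 0 < |q| := abs_pos.2 hq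
  have h8 : 0 < ‖y₁‖ := by linarith
  have : 0 < |q| * ‖y₁‖ * ‖H y₁‖ ^ 2 * (|q| * ‖y₁‖ - 2 * ‖curl H y₁‖) :=
    mul_pos (by positivity) (by linarith)
  linarith

lemma curl_zero_of_eventually (H : R3 → R3) (y : R3) (h : ∀ᶠ z in nhds y, H z = 0) :
    curl H y = 0 := by
  have e : ∀ i j : Fin 3, pd j (fun y => H y i) y = 0 := by
    intro i j
    have : (fun y => H y i) =ᶠ[nhds y] fun _ => (0 : ℝ) := by
      filter_upwards [h] with z hz
      simp [hz]
    unfold pd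
    rw [this.fderiv_eq]
    simp
  ext i
  fin_cases i <;> simp [curl, toR3_0, e]

lemma profile_zero (H : R3 → R3) (hH : ContDiff ℝ 2 H) (p q : ℝ) (hpq : ¬ (p = 0 ∧ q = 0))
    (heq : ∀ y, p • H y + q • (fderiv ℝ H y y)
      + curl (fun y => cross (curl H y) (H y)) y = 0)
    (hL2 : Integrable (fun y => ‖H y‖ ^ 2)) (K : ℝ) (hJ : ∀ y, ‖curl H y‖ ≤ K) :
    ∀ y, H y = 0 := by
  have hHc := hH.continuous
  have hJc := (contDiff_curl H hH).continuous
  rcases mul_eq_zero.1 (step1 H hH p q heq hL2 K hJ) with hk | hz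
  · have hq : q ≠ 0 := by
      intro h; apply hpq; subst h; exact ⟨by linarith, rfl⟩
    have hq' : 0 < |q| := abs_pos.2 hq
    set F : Set R3 := {y | |q| * ‖y‖ ≤ 2 * ‖curl H y‖} with hF
    have hFc : IsCompact F := by
      apply (isCompact_closedBall (0 : R3) (2 * K / |q|)).of_isClosed_subset
      · exact isClosed_le (by fun_prop) (by fun_prop)
      · intro y hy
        simp only [mem_closedBall_zero_iff]
        rw [le_div_iff₀ hq']
        have : |q| * ‖y‖ ≤ 2 * ‖curl H y‖ := hy
        linarith [hJ y]
    obtain ⟨y₀, hy₀, hmax⟩ := hFc.exists_isMaxOn ⟨0, by simp [hF]⟩ continuous_norm.continuousOn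
    have hout : ∀ y, ‖y₀‖ < ‖y‖ → H y = 0 := by
      apply step2 H hH p q hq hk heq _ (norm_nonneg _)
      intro y hy
      by_contra hcon
      push Not at hcon
      have : ‖y‖ ≤ ‖y₀‖ := hmax (show y ∈ F from hcon)
      linarith
    have hopen : IsOpen {y : R3 | ‖y₀‖ < ‖y‖} := isOpen_lt continuous_const continuous_norm
    have hJout : ∀ y, ‖y₀‖ < ‖y‖ → curl H y = 0 := by
      intro y hy
      apply curl_zero_of_eventually
      filter_upwards [hopen.mem_nhds hy] with z hz using hout z hz
    have hy0 : y₀ = 0 := by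
      by_contra hne
      have hpos : 0 < ‖y₀‖ := norm_pos_iff.2 hne
      have ht : Filter.Tendsto (fun s : ℝ => curl H (s • y₀)) (nhdsWithin 1 (Ioi 1))
          (nhds (curl H ((1 : ℝ) • y₀))) := by
        have : Continuous (fun s : ℝ => curl H (s • y₀)) := by fun_prop
        exact (this.tendsto 1).mono_left nhdsWithin_le_nhds
      have ht' : Filter.Tendsto (fun s : ℝ => curl H (s • y₀)) (nhdsWithin 1 (Ioi 1))
          (nhds 0) := by
        refine tendsto_const_nhds.congr' ?_
        filter_upwards [self_mem_nhdsWithin] with s hs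
        rw [hJout]
        have hs : 1 < s := hs
        rw [norm_smul, Real.norm_eq_abs, abs_of_pos (by linarith)]
        nlinarith
      have := tendsto_nhds_unique ht ht'
      rw [one_smul] at this
      have h9 : |q| * ‖y₀‖ ≤ 2 * ‖curl H y₀‖ := hy₀
      rw [this, norm_zero] at h9
      have : 0 < |q| * ‖y₀‖ := by positivity
      linarith
    subst hy0
    have hd : Dense ({0}ᶜ : Set R3) := dense_compl_singleton 0
    have : H = fun _ => 0 := by
      apply Continuous.ext_on hd hHc continuous_const
      intro y hy
      exact hout y (by simpa using hy)
    intro y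
    rw [this]
  · rw [integral_eq_zero_iff_of_nonneg (fun y => by positivity) hL2] at hz
    have hc : Continuous (fun y => ‖H y‖ ^ 2) := by fun_prop
    intro y
    have := congrFun ((hc.ae_eq_iff_eq volume continuous_const).1 hz) y
    have this : ‖H y‖ ^ 2 = 0 := this
    simpa using this

lemma grad_bound (G : R3 → R3) (hG : ContDiff ℝ 2 G) (M : ℝ)
    (hM : ∀ x, ‖iteratedFDeriv ℝ 2 G x‖ ≤ M) (hL2 : Integrable (fun y => ‖G y‖ ^ 2)) :
    ∃ K, ∀ x, ‖fderiv ℝ G x‖ ≤ K := by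
  have hM0 : 0 ≤ M := (norm_nonneg _).trans (hM 0)
  have hGd := hG.differentiable (by norm_num)
  have hG1 : ContDiff ℝ 1 (fderiv ℝ G) := hG.fderiv_right (m := 1) (by norm_num)
  have h2 : ∀ x, ‖fderiv ℝ (fderiv ℝ G) x‖ ≤ M := by
    intro x
    rw [← norm_iteratedFDeriv_one, norm_iteratedFDeriv_fderiv]
    exact hM x
  have hlip : ∀ x z, ‖fderiv ℝ G z - fderiv ℝ G x‖ ≤ M * ‖z - x‖ := fun x z =>
    convex_univ.norm_image_sub_le_of_norm_fderiv_le
      (fun y _ => hG1.differentiable (by norm_num) y) (fun y _ => h2 y) (mem_univ x) (mem_univ z)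
  have htay : ∀ x e : R3, ‖e‖ ≤ 1 → ‖G (x + e) - G x - fderiv ℝ G x e‖ ≤ M := by
    intro x e he
    have := (convex_closedBall x 1).norm_image_sub_le_of_norm_fderiv_le' (f := G)
      (φ := fderiv ℝ G x) (C := M) (𝕜 := ℝ) (fun y _ => hGd y) (x := x) (y := x + e)
      (fun z hz => by
        refine (hlip x z).trans ?_
        rw [mem_closedBall_iff_norm] at hz
        exact mul_le_of_le_one_right hM0 hz)
      (by simp) (by simpa using he)
    rw [add_sub_cancel_left] at this
    exact this.trans (mul_le_of_le_one_right hM0 he)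
  set v := volume.real (Metric.closedBall (0 : R3) 1) with hv
  have hvpos : 0 < v := by
    apply ENNReal.toReal_pos
    · exact (Metric.measure_closedBall_pos volume _ one_pos).ne'
    · exact measure_closedBall_lt_top.ne
  have hI0 : 0 ≤ ∫ y, ‖G y‖ ^ 2 := integral_nonneg fun y => by positivity
  refine ⟨2 * M + (1 + (∫ y, ‖G y‖ ^ 2) / v), fun x => ?_⟩
  apply ContinuousLinearMap.opNorm_le_of_unit_norm (by positivity)
  intro e he
  have hpt : ∀ z ∈ Metric.closedBall x 1, ‖fderiv ℝ G x e‖ - 2 * M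
      ≤ 1 + (‖G (z + e)‖ ^ 2 + ‖G z‖ ^ 2) / 2 := by
    intro z hz
    rw [mem_closedBall_iff_norm] at hz
    have a1 := htay z e he.le
    have a2 : ‖(fderiv ℝ G z - fderiv ℝ G x) e‖ ≤ M := by
      refine (ContinuousLinearMap.le_opNorm _ _).trans ?_
      rw [he, mul_one]
      exact (hlip x z).trans (mul_le_of_le_one_right hM0 hz)
    have a3 : fderiv ℝ G x e = G (z + e) - G z - (G (z + e) - G z - fderiv ℝ G z e)
        - (fderiv ℝ G z - fderiv ℝ G x) e := by
      simp
    have a4 : ‖fderiv ℝ G x e‖ ≤ ‖G (z + e)‖ + ‖G z‖ + M + M := by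
      rw [a3]
      refine (norm_sub_le _ _).trans (add_le_add ?_ a2)
      refine (norm_sub_le _ _).trans (add_le_add ?_ a1)
      exact norm_sub_le _ _
    nlinarith [sq_nonneg (‖G (z + e)‖ - 1), sq_nonneg (‖G z‖ - 1)]
  have hL2e : Integrable (fun z => ‖G (z + e)‖ ^ 2) := hL2.comp_add_right e
  have hS : Integrable (fun z => (‖G (z + e)‖ ^ 2 + ‖G z‖ ^ 2) / 2) := (hL2e.add hL2).div_const 2
  have hb : volume.real (Metric.closedBall x 1) = v := by
    rw [hv, Measure.real, Measure.real, Measure.addHaar_closedBall_center]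
  have hfin : volume (Metric.closedBall x 1) ≠ ⊤ := measure_closedBall_lt_top.ne
  have c1 : IntegrableOn (fun _ : R3 => (1 : ℝ)) (Metric.closedBall x 1) :=
    integrableOn_const hfin
  have c2 : IntegrableOn (fun _ : R3 => ‖fderiv ℝ G x e‖ - 2 * M) (Metric.closedBall x 1) :=
    integrableOn_const hfin
  have key := setIntegral_mono_on c2 (c1.add hS.integrableOn) measurableSet_closedBall hpt
  rw [setIntegral_const] at key
  simp only [Pi.add_apply] at key
  rw [integral_add c1 hS.integrableOn, setIntegral_const, hb] at key
  have k2 : ∫ z in Metric.closedBall x 1, (‖G (z + e)‖ ^ 2 + ‖G z‖ ^ 2) / 2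
      ≤ ∫ z, ‖G z‖ ^ 2 := by
    refine (setIntegral_le_integral hS ?_).trans ?_
    · filter_upwards with z
      positivity
    · rw [integral_div, integral_add hL2e hL2,
        integral_add_right_eq_self (fun z => ‖G z‖ ^ 2) e]
      linarith
  simp only [smul_eq_mul, mul_one] at key
  have k3 : ‖fderiv ℝ G x e‖ - 2 * M ≤ 1 + (∫ y, ‖G y‖ ^ 2) / v := by
    have : 1 + (∫ y, ‖G y‖ ^ 2) / v = (v + ∫ y, ‖G y‖ ^ 2) / v := by
      field_simp
    rw [this, le_div_iff₀ hvpos]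
    linarith
  linarith

lemma curl_bound (H : R3 → R3) (hH : Differentiable ℝ H) (K : ℝ) (y : R3)
    (hK : ‖fderiv ℝ H y‖ ≤ K) : ‖curl H y‖ ≤ 4 * K := by
  have hK0 : 0 ≤ K := (norm_nonneg _).trans hK
  have e : ∀ i j : Fin 3, |pd j (fun y => H y i) y| ≤ K := by
    intro i j
    rw [pd_comp H y (hH y), ← Real.norm_eq_abs]
    refine (PiLp.norm_apply_le _ i).trans ?_
    refine (ContinuousLinearMap.le_opNorm _ _).trans ?_
    simpa using hK
  have e2 : ∀ a b : ℝ, |a| ≤ K → |b| ≤ K → (a - b) ^ 2 ≤ 4 * K ^ 2 := by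
    intro a b ha hb
    have : |a - b| ≤ 2 * K := (abs_sub _ _).trans (by linarith)
    rw [← sq_abs]
    nlinarith [abs_nonneg (a - b)]
  apply le_of_sq_le_sq _ (by positivity)
  rw [EuclideanSpace.norm_sq_eq]
  simp only [Fin.sum_univ_three, curl, toR3_0, Matrix.cons_val, Real.norm_eq_abs, sq_abs]
  nlinarith [e2 _ _ (e 2 1) (e 1 2), e2 _ _ (e 0 2) (e 2 0), e2 _ _ (e 1 0) (e 0 1)]

lemma hasFDerivAt_scale (F : R3 → R3) (hF : Differentiable ℝ F) (m l : ℝ) (x : R3) :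
    HasFDerivAt (fun x => m • F (l • x)) ((m * l) • fderiv ℝ F (l • x)) x := by
  have h1 : HasFDerivAt (fun x : R3 => l • x) (l • ContinuousLinearMap.id ℝ R3) x :=
    (hasFDerivAt_id x).const_smul l
  have h2 := ((hF (l • x)).hasFDerivAt.comp x h1).const_smul m
  refine h2.congr_fderiv ?_
  ext v
  simp [mul_smul]

lemma curl_scale (F : R3 → R3) (hF : Differentiable ℝ F) (m l : ℝ) (x : R3) :
    curl (fun x => m • F (l • x)) x = (m * l) • curl F (l • x) := by
  have h := hasFDerivAt_scale F hF m l x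
  have e : ∀ i j : Fin 3, pd j (fun x => (m • F (l • x)) i) x
      = m * l * pd j (fun y => F y i) (l • x) := by
    intro i j
    rw [pd_comp (fun x => m • F (l • x)) x h.differentiableAt, h.fderiv, pd_comp F _ (hF _)]
    simp
  ext i
  simp only [curl, e]
  fin_cases i <;> simp [toR3_0] <;> ring

lemma cross_smul (a b : ℝ) (u v : R3) : cross (a • u) (b • v) = (a * b) • cross u v := by
  ext i
  fin_cases i <;> simp [toR3_0, cross] <;> ring

lemma nonlin_scale (H : R3 → R3) (hH : ContDiff ℝ 2 H) (m l : ℝ) (x : R3) :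
    curl (fun y => cross (curl (fun x => m • H (l • x)) y) (m • H (l • y))) x
      = (m ^ 2 * l ^ 2) • curl (fun y => cross (curl H y) (H y)) (l • x) := by
  have h1 : ContDiff ℝ 1 H := hH.of_le (by norm_num)
  have e : (fun y => cross (curl (fun x => m • H (l • x)) y) (m • H (l • y)))
      = fun y => (m * l * m) • (fun y => cross (curl H y) (H y)) (l • y) := by
    ext1 y
    rw [curl_scale H (h1.differentiable (by norm_num)), cross_smul]
  rw [e, curl_scale _ ((contDiff_cross 1 _ _ (contDiff_curl H hH) h1).differentiable (by norm_num))]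
  congr 1
  ring

/-- Theorem 1.4: no pseudo-self-similar blowup solution when the scaling
functions are not of the critical power form. -/
theorem no_pseudo_self_similar (T : ℝ) (hT : 0 < T) (lam mu : ℝ → ℝ)
    (hlamC : ContDiffOn ℝ 1 lam (Set.Iio T)) (hmuC : ContDiffOn ℝ 1 mu (Set.Iio T))
    (hlam0 : ∀ t < T, lam t ≠ 0) (hmu0 : ∀ t < T, mu t ≠ 0)
    (hnot : ¬ ∃ a₁ a₂ : ℝ, ∀ t < T,
      lam t = a₁ * (T - t) ^ (-(2 / 7) : ℝ) ∧ mu t = a₂ * (T - t) ^ (-(3 / 7) : ℝ))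
    (H : R3 → R3) (hH : ContDiff ℝ 2 H)
    (B : ℝ → R3 → R3) (hBdef : ∀ t x, B t x = mu t • H (lam t • x))
    (hB : ∀ t ∈ Set.Ico 0 T, ∀ x, IsEMHDAt B t x) :
    ¬ (essSup (fun t => eLpNorm (B t) 2 volume) (volume.restrict (Set.Ioo 0 T)) < ⊤
      ∧ Filter.Tendsto
          (fun t => ∫ τ in (0:ℝ)..t, ⨆ x : R3, ‖iteratedFDeriv ℝ 2 (B τ) x‖)
          (nhdsWithin T (Set.Iio T)) Filter.atTop) := by
  rintro ⟨ha, hb⟩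
  have hHd : Differentiable ℝ H := hH.differentiable (by norm_num)
  have hHc : Continuous H := hH.continuous
  have hBt : ∀ t, B t = fun x => mu t • H (lam t • x) := fun t => funext (hBdef t)
  have hnn : ∀ t (c : ℝ), (∀ y, ‖mu t • H (lam t • y)‖ ^ 2 = (mu t) ^ 2 * ‖H (lam t • y)‖ ^ 2) := by
    intro t c y
    rw [norm_smul, mul_pow, Real.norm_eq_abs, sq_abs]
  -- square integrability of the profile
  have hL2 : Integrable (fun y => ‖H y‖ ^ 2) := by
    have h1 := ae_lt_of_essSup_lt ha
    rw [ae_restrict_iff' measurableSet_Ioo] at h1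
    have h2 : ∃ t ∈ Ioo 0 T, eLpNorm (B t) 2 volume < ⊤ := by
      by_contra hcon
      push Not at hcon
      have h3 : ∀ᵐ t : ℝ, t ∉ Ioo 0 T := by
        filter_upwards [h1] with t ht hmem
        exact absurd (ht hmem) (not_lt.2 (hcon t hmem))
      have h4 : volume (Ioo 0 T) = 0 := by
        simpa using measure_eq_zero_iff_ae_notMem.2 h3
      rw [Real.volume_Ioo] at h4
      simp at h4
      linarith
    obtain ⟨t, ht, hlt⟩ := h2
    rw [hBt] at hlt
    have hc : Continuous (fun x => mu t • H (lam t • x)) := by fun_prop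
    have h5 : MemLp (fun x => mu t • H (lam t • x)) 2 volume := ⟨hc.aestronglyMeasurable, hlt⟩
    rw [memLp_two_iff_integrable_sq_norm hc.aestronglyMeasurable] at h5
    simp only [hnn t 0] at h5
    have hm : (mu t) ^ 2 ≠ 0 := pow_ne_zero _ (hmu0 t ht.2)
    rw [integrable_const_mul_iff (IsUnit.mk0 _ hm)] at h5
    exact (integrable_comp_smul_iff volume (fun y => ‖H y‖ ^ 2) (hlam0 t ht.2)).1 h5
  -- the limit in (b) is incompatible with a locally bounded integral
  have hnb : ∀ C : ℝ, ¬ ∀ t ∈ Ioo 0 T,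
      (∫ τ in (0:ℝ)..t, ⨆ x : R3, ‖iteratedFDeriv ℝ 2 (B τ) x‖) ≤ C := by
    intro C hC
    have h1 := hb.eventually (Filter.eventually_gt_atTop C)
    have h2 : ∀ᶠ t in nhdsWithin T (Iio T), t ∈ Ioo 0 T := by
      filter_upwards [Ioo_mem_nhdsLT hT] with t ht using ht
    obtain ⟨t, h3, h4⟩ := (h1.and h2).exists
    exact absurd (hC t h4) (not_le.2 h3)
  -- bounded second derivatives at some time
  have hM : ∃ τ ∈ Ioo 0 T, (⨆ x : R3, ‖iteratedFDeriv ℝ 2 (B τ) x‖) ≠ 0 := by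
    by_contra hcon
    push Not at hcon
    apply hnb 0
    intro t ht
    apply le_of_eq
    apply intervalIntegral.integral_zero_ae
    filter_upwards with τ hτ
    rw [uIoc_of_le ht.1.le] at hτ
    exact hcon τ ⟨hτ.1, hτ.2.trans_lt ht.2⟩
  obtain ⟨τ, hτ, hne⟩ := hM
  have hml : mu τ * lam τ ≠ 0 := mul_ne_zero (hmu0 τ hτ.2) (hlam0 τ hτ.2)
  obtain ⟨K, hK⟩ : ∃ K, ∀ y, ‖curl H y‖ ≤ K := by
    have hbdd : BddAbove (range fun x : R3 => ‖iteratedFDeriv ℝ 2 (B τ) x‖) := by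
      by_contra hcon
      exact hne (Real.iSup_of_not_bddAbove hcon)
    obtain ⟨M, hM⟩ := hbdd
    have hG : ContDiff ℝ 2 (fun x => mu τ • H (lam τ • x)) :=
      (hH.comp (contDiff_id.const_smul (lam τ))).const_smul (mu τ)
    obtain ⟨K, hK⟩ := grad_bound (fun x => mu τ • H (lam τ • x)) hG M
      (fun x => by rw [← hBt]; exact hM ⟨x, rfl⟩)
      (by
        simp only [hnn τ 0]
        exact ((integrable_comp_smul_iff volume (fun y => ‖H y‖ ^ 2) (hlam0 τ hτ.2)).2
          hL2).const_mul _)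
    refine ⟨4 * (K / |mu τ * lam τ|), fun y => ?_⟩
    apply curl_bound H hHd
    rw [le_div_iff₀ (abs_pos.2 hml)]
    have h1 := hK ((lam τ)⁻¹ • y)
    rw [(hasFDerivAt_scale H hHd _ _ _).fderiv, norm_smul, smul_inv_smul₀ (hlam0 τ hτ.2),
      Real.norm_eq_abs] at h1
    linarith
  -- the profile equation
  have hld : ∀ t < T, HasDerivAt lam (deriv lam t) t := fun t ht =>
    ((hlamC.differentiableOn (by norm_num)).differentiableAt (Iio_mem_nhds ht)).hasDerivAt
  have hmd : ∀ t < T, HasDerivAt mu (deriv mu t) t := fun t ht =>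
    ((hmuC.differentiableOn (by norm_num)).differentiableAt (Iio_mem_nhds ht)).hasDerivAt
  have hprof : ∀ t ∈ Ico 0 T, ∀ y, (deriv mu t) • H y
      + (mu t * deriv lam t * (lam t)⁻¹) • fderiv ℝ H y y
      + (mu t ^ 2 * lam t ^ 2) • curl (fun y => cross (curl H y) (H y)) y = 0 := by
    intro t ht y
    have h1 := (hB t ht ((lam t)⁻¹ • y)).1
    have h2 : HasDerivAt (fun τ => B τ ((lam t)⁻¹ • y))
        (mu t • (fderiv ℝ H y (deriv lam t • ((lam t)⁻¹ • y))) + deriv mu t • H y) t := by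
      simp only [hBdef]
      have h3 := (hld t ht.2).smul_const ((lam t)⁻¹ • y)
      have h4 : HasFDerivAt H (fderiv ℝ H y) (lam t • ((lam t)⁻¹ • y)) := by
        rw [smul_inv_smul₀ (hlam0 t ht.2)]
        exact (hHd y).hasFDerivAt
      have h5 := (hmd t ht.2).smul (h4.comp_hasDerivAt t h3)
      simp only [Function.comp, smul_inv_smul₀ (hlam0 t ht.2)] at h5
      exact h5
    rw [h2.deriv, hBt t] at h1
    rw [nonlin_scale H hH, smul_inv_smul₀ (hlam0 t ht.2)] at h1
    rw [← h1]
    congr 1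
    rw [map_smul, map_smul, smul_smul, smul_smul, add_comm, mul_assoc]
  by_cases hst : ∀ t ∈ Ico 0 T, deriv mu t = 0 ∧ deriv lam t = 0
  · -- stationary case
    have hconst : ∀ f : ℝ → ℝ, (∀ t < T, HasDerivAt f (deriv f t) t) →
        (∀ t ∈ Ico 0 T, deriv f t = 0) → ∀ t ∈ Ico 0 T, f t = f 0 := by
      intro f hf hf0 t ht
      apply constant_of_has_deriv_right_zero (a := 0) (b := t)
      · intro s hs
        exact (hf s (hs.2.trans_lt ht.2)).continuousAt.continuousWithinAt
      · intro s hs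
        have := hf s (hs.2.trans ht.2)
        rw [hf0 s ⟨hs.1, hs.2.trans ht.2⟩] at this
        exact this.hasDerivWithinAt
      · exact ⟨ht.1, le_rfl⟩
    have hmc := hconst mu hmd fun t ht => (hst t ht).1
    have hlc := hconst lam hld fun t ht => (hst t ht).2
    have hBc : ∀ t ∈ Ico 0 T, B t = B 0 := by
      intro t ht
      rw [hBt, hBt, hmc t ht, hlc t ht]
    set C := ⨆ x : R3, ‖iteratedFDeriv ℝ 2 (B 0) x‖ with hC
    apply hnb (T * |C|)
    intro t ht
    have : (∫ τ in (0:ℝ)..t, ⨆ x : R3, ‖iteratedFDeriv ℝ 2 (B τ) x‖) = ∫ τ in (0:ℝ)..t, C := by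
      apply intervalIntegral.integral_congr
      intro s hs
      rw [uIcc_of_le ht.1.le] at hs
      simp only [hBc s ⟨hs.1, hs.2.trans_lt ht.2⟩, hC]
    rw [this, intervalIntegral.integral_const, sub_zero, smul_eq_mul]
    have h1 := ht.1
    have h2 := ht.2
    calc t * C ≤ t * |C| := by gcongr; exact le_abs_self C
      _ ≤ T * |C| := by gcongr
  · push Not at hst
    obtain ⟨t, ht, hd⟩ := hst
    have hm0 := hmu0 t ht.2
    have hl0 := hlam0 t ht.2
    have hw : mu t ^ 2 * lam t ^ 2 ≠ 0 := mul_ne_zero (pow_ne_zero _ hm0) (pow_ne_zero _ hl0)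
    have hH0 := profile_zero H hH ((mu t ^ 2 * lam t ^ 2)⁻¹ * deriv mu t)
      ((mu t ^ 2 * lam t ^ 2)⁻¹ * (mu t * deriv lam t * (lam t)⁻¹))
      (by
        rintro ⟨h1, h2⟩
        have h1 : deriv mu t = 0 := (mul_eq_zero.1 h1).resolve_left (inv_ne_zero hw)
        have h2 := (mul_eq_zero.1 h2).resolve_left (inv_ne_zero hw)
        have h2 := (mul_eq_zero.1 h2).resolve_right (inv_ne_zero hl0)
        have h2 := (mul_eq_zero.1 h2).resolve_left hm0
        exact hd h1 h2)
      (by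
        intro y
        have h1 := congrArg (fun v => (mu t ^ 2 * lam t ^ 2)⁻¹ • v) (hprof t ht y)
        simp only [smul_add, smul_zero, smul_smul] at h1
        rw [inv_mul_cancel₀ hw, one_smul] at h1
        exact h1) hL2 K hK
    apply hne
    have : B τ = fun _ => 0 := by
      rw [hBt]
      ext1 x
      rw [hH0, smul_zero]
    rw [this]
    simp
end
end
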